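/- Assume the cocycle f is convolution invertible. (a) If A is separable over k (A is projective as an A⊗A^{op}-module), then H_n(E,M) ≅ H_n(H, M/[A,M]) for all n ≥ 0, where M/[A,M] is the left H-module with action h·m̄ = class of (1#h^{(2)}) m (1#h^{(1)})^{-1}. (b) If H is flat as a k-module and A is quasi-free in the sense that H_n(A,N) = 0 for every n ≥ 2 and every A-bimodule N, then there is a long exact sequence ⋯ → H_{n+1}(H,H_0(A,M)) → H_{n−1}(H,H_1(A,M)) → H_n(E,M) → H_n(H,H_0(A,M)) → H_{n−2}(H,H_1(A,M)) → H_{n−1}(E,M) → ⋯, where H_r(A,M) carries the left H-module structure of Proposition 3.1.2. -/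

import Mathlib

open TensorProduct

noncomputable section

namespace HopfCrossed

variable (k : Type) [CommRing k]

def TpowCat (V : ModuleCat k) : ℕ → ModuleCat k
  | 0 => ModuleCat.of k k
  | n + 1 => ModuleCat.of k (V ⊗[k] (TpowCat V n))

abbrev Tpow (V : Type) [AddCommGroup V] [Module k V] (n : ℕ) : Type :=
  TpowCat k (ModuleCat.of k V) n

def tp {V : Type} [AddCommGroup V] [Module k V] : ∀ {n : ℕ}, (Fin n → V) → Tpow k V n
  | 0, _ => (1 : k)
  | _ + 1, v => (v 0) ⊗ₜ[k] (tp fun i => v i.succ)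

section Coalg
variable {H : Type} [AddCommGroup H] [Module k H]

def itComul [Coalgebra k H] : ∀ n : ℕ, H →ₗ[k] Tpow k H (n + 1)
  | 0 => (TensorProduct.rid k H).symm.toLinearMap
  | n + 1 =>
      (TensorProduct.map LinearMap.id (itComul n)) ∘ₗ (Coalgebra.comul (R := k))

def SRep [Coalgebra k H] (n : ℕ) (h : H) (N : ℕ) (u : Fin N → Fin (n + 1) → H) : Prop :=
  itComul k n h = ∑ i, tp k (u i)

def iterAct {A : Type} [AddCommGroup A] [Module k A]
    (act : H →ₗ[k] A →ₗ[k] A) : ∀ {s : ℕ}, (Fin s → H) → A → A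
  | 0, _, a => a
  | _ + 1, h, a => act (h 0) (iterAct act (fun i => h i.succ) a)

end Coalg

/-- A weak action of a Hopf algebra `H` on a `k`-algebra `A` (Blattner–Cohen–Montgomery,
Doi–Takeuchi), written `act h a = a^h`. -/
structure WeakAction (k A H : Type) [CommRing k] [Ring A] [Algebra k A] [Ring H] [HopfAlgebra k H] : Type where
  act : H →ₗ[k] A →ₗ[k] A
  act_mul : ∀ (h : H) (a b : A) (N : ℕ) (u : Fin N → Fin 2 → H), SRep k 1 h N u →
    act h (a * b) = ∑ i, act (u i 0) a * act (u i 1) b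
  act_one : ∀ h : H, act h 1 = Coalgebra.counit (R := k) h • (1 : A)
  one_act : ∀ a : A, act 1 a = a

variable {A H : Type} [Ring A] [Algebra k A] [Ring H] [HopfAlgebra k H]
variable {k}

/-- Normality of the cocycle `f`. -/
def IsNormal (f : H →ₗ[k] H →ₗ[k] A) : Prop :=
  ∀ h : H, f h 1 = Coalgebra.counit (R := k) h • (1 : A) ∧
    f 1 h = Coalgebra.counit (R := k) h • (1 : A)

/-- The cocycle condition
`f(l⁽¹⁾,m⁽¹⁾)^{h⁽¹⁾} f(h⁽²⁾, l⁽²⁾m⁽²⁾) = f(h⁽¹⁾,l⁽¹⁾) f(h⁽²⁾l⁽²⁾, m)`. -/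
def IsCocycle (W : WeakAction k A H) (f : H →ₗ[k] H →ₗ[k] A) : Prop :=
  ∀ (h l m : H) (N₁ N₂ N₃ : ℕ) (u : Fin N₁ → Fin 2 → H) (v : Fin N₂ → Fin 2 → H)
    (w : Fin N₃ → Fin 2 → H),
    SRep k 1 h N₁ u → SRep k 1 l N₂ v → SRep k 1 m N₃ w →
    (∑ i, ∑ j, ∑ p, W.act (u i 0) (f (v j 0) (w p 0)) * f (u i 1) (v j 1 * w p 1)) =
      ∑ i, ∑ j, f (u i 0) (v j 0) * f (u i 1 * v j 1) m

/-- The twisted module condition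
`(a^{l⁽¹⁾})^{h⁽¹⁾} f(h⁽²⁾,l⁽²⁾) = f(h⁽¹⁾,l⁽¹⁾) a^{h⁽²⁾l⁽²⁾}`. -/
def IsTwistedModule (W : WeakAction k A H) (f : H →ₗ[k] H →ₗ[k] A) : Prop :=
  ∀ (h l : H) (a : A) (N₁ N₂ : ℕ) (u : Fin N₁ → Fin 2 → H) (v : Fin N₂ → Fin 2 → H),
    SRep k 1 h N₁ u → SRep k 1 l N₂ v →
    (∑ i, ∑ j, W.act (u i 0) (W.act (v j 0) a) * f (u i 1) (v j 1)) =
      ∑ i, ∑ j, f (u i 0) (v j 0) * W.act (u i 1 * v j 1) a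

variable (k A H) in
/-- A crossed product `E = A #_f H` of `A` by `H`:  a ring `E` identified with `A ⊗ H`
as a `k`-module, whose multiplication is given by the crossed product formula
`(a # h)(b # l) = a b^{h⁽¹⁾} f(h⁽²⁾,l⁽¹⁾) # h⁽³⁾ l⁽²⁾`. -/
structure CrossedProduct (E : Type) [Ring E] [Algebra k E] extends WeakAction k A H where
  f : H →ₗ[k] H →ₗ[k] A
  ι : (A ⊗[k] H) ≃ₗ[k] E
  ι_one : ι (1 ⊗ₜ[k] 1) = 1
  ι_mul : ∀ (a b : A) (h l : H) (N M : ℕ) (u : Fin N → Fin 3 → H) (v : Fin M → Fin 2 → H),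
    SRep k 2 h N u → SRep k 1 l M v →
    ι (a ⊗ₜ[k] h) * ι (b ⊗ₜ[k] l) =
      ∑ i, ∑ j, ι ((a * act (u i 0) b * f (u i 1) (v j 0)) ⊗ₜ[k] (u i 2 * v j 1))
  f_normal : IsNormal f
  f_cocycle : IsCocycle toWeakAction f
  f_twisted : IsTwistedModule toWeakAction f

namespace CrossedProduct

variable {E : Type} [Ring E] [Algebra k E] (S : CrossedProduct k A H E)

/-- The canonical map `A → E`, `a ↦ a # 1`. -/
def aE : A →ₗ[k] E := S.ι.toLinearMap ∘ₗ (TensorProduct.mk k A H).flip 1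

/-- The canonical map `H → E`, `h ↦ 1 # h`. -/
def hE : H →ₗ[k] E := S.ι.toLinearMap ∘ₗ (TensorProduct.mk k A H) 1

end CrossedProduct


section Hochschild

variable (k) in
/-- For a `k`-algebra `B`, the submodule `k·1 ⊆ B`. -/
abbrev unitSub (B : Type) [Ring B] [Algebra k B] : Submodule k B :=
  LinearMap.range (Algebra.linearMap k B)

variable (k) in
/-- `B̄ = B/k`. -/
abbrev Qbar (B : Type) [Ring B] [Algebra k B] : Type := B ⧸ unitSub k B

variable (k) in
/-- The canonical projection `B → B̄`. -/
abbrev qbar (B : Type) [Ring B] [Algebra k B] : B →ₗ[k] Qbar k B :=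
  (unitSub k B).mkQ

/-- A `B`-bimodule structure (with commuting `k`-linear left and right actions)
on a `k`-module `M`. -/
structure Bimod (k B M : Type) [CommRing k] [Ring B] [Algebra k B]
    [AddCommGroup M] [Module k M] : Type where
  l : B →ₗ[k] M →ₗ[k] M
  r : B →ₗ[k] M →ₗ[k] M
  l_one : l 1 = LinearMap.id
  r_one : r 1 = LinearMap.id
  l_mul : ∀ x y : B, l (x * y) = l x ∘ₗ l y
  r_mul : ∀ x y : B, r (x * y) = r y ∘ₗ r x
  lr_comm : ∀ x y : B, l x ∘ₗ r y = r y ∘ₗ l x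

/-- Replace the `r`-tuple `a` by the `(r-1)`-tuple obtained by multiplying the
`i`-th and `(i+1)`-st entries. -/
def mulAt {A : Type} [Mul A] {r : ℕ} (a : Fin (r + 1) → A) (i : Fin r) (j : Fin r) : A :=
  if (j : ℕ) < (i : ℕ) then a j.castSucc
  else if (j : ℕ) = (i : ℕ) then a j.castSucc * a j.succ else a j.succ

variable (k) in
/-- The degree-`n` part `M ⊗ B̄^{⊗n}` of the normalized Hochschild chain complex. -/
abbrev HCh (B M : Type) [Ring B] [Algebra k B] [AddCommGroup M] [Module k M]
    (n : ℕ) : Type :=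
  M ⊗[k] Tpow k (Qbar k B) n

variable (k) in
/-- `IsHochschildD l r bd` says that `bd` is the differential of the normalized
Hochschild chain complex of `B` with coefficients in the bimodule `M` (with left
action `l` and right action `r`):
`b(m ⊗ x₁ ⊗ ⋯ ⊗ xₙ) = m x₁ ⊗ x₂ ⊗ ⋯ + ∑ (-1)^i m ⊗ ⋯ ⊗ xᵢxᵢ₊₁ ⊗ ⋯ + (-1)^n xₙ m ⊗ x₁ ⊗ ⋯ ⊗ xₙ₋₁`. -/
def IsHochschildD {B M : Type} [Ring B] [Algebra k B] [AddCommGroup M] [Module k M]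
    (l r : B →ₗ[k] M →ₗ[k] M)
    (bd : ∀ n : ℕ, HCh k B M (n + 1) →ₗ[k] HCh k B M n) : Prop :=
  ∀ (n : ℕ) (m : M) (x : Fin (n + 1) → B),
    bd n (m ⊗ₜ[k] tp k (fun i => qbar k B (x i))) =
      r (x 0) m ⊗ₜ[k] tp k (fun i : Fin n => qbar k B (x i.succ))
      + (∑ i : Fin n, ((-1 : ℤ) ^ ((i : ℕ) + 1)) •
          (m ⊗ₜ[k] tp k (fun j => qbar k B (mulAt x i j))))
      + ((-1 : ℤ) ^ (n + 1)) •
          (l (x (Fin.last n)) m ⊗ₜ[k] tp k (fun i : Fin n => qbar k B (x i.castSucc)))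

variable (k) in
/-- The homology of a (not necessarily everywhere-defined) chain complex
`⋯ → C (n+1) → C n → ⋯ → C 0`; in degree `n+1` it is `ker (d n) / im (d (n+1))`, and in
degree `0` it is `C 0 / im (d 0)`. -/
def Hml {C : ℕ → Type} [∀ n, AddCommGroup (C n)] [∀ n, Module k (C n)]
    (d : ∀ n : ℕ, C (n + 1) →ₗ[k] C n) : ℕ → Type
  | 0 => C 0 ⧸ LinearMap.range (d 0)
  | n + 1 => LinearMap.ker (d n) ⧸
      (LinearMap.range (d (n + 1))).comap (LinearMap.ker (d n)).subtype

instance {C : ℕ → Type} [∀ n, AddCommGroup (C n)] [∀ n, Module k (C n)]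
    (d : ∀ n : ℕ, C (n + 1) →ₗ[k] C n) : ∀ n, AddCommGroup (Hml k d n)
  | 0 => inferInstanceAs (AddCommGroup (C 0 ⧸ LinearMap.range (d 0)))
  | n + 1 => inferInstanceAs (AddCommGroup (LinearMap.ker (d n) ⧸
      (LinearMap.range (d (n + 1))).comap (LinearMap.ker (d n)).subtype))

instance {C : ℕ → Type} [∀ n, AddCommGroup (C n)] [∀ n, Module k (C n)]
    (d : ∀ n : ℕ, C (n + 1) →ₗ[k] C n) : ∀ n, Module k (Hml k d n)
  | 0 => inferInstanceAs (Module k (C 0 ⧸ LinearMap.range (d 0)))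
  | n + 1 => inferInstanceAs (Module k (LinearMap.ker (d n) ⧸
      (LinearMap.range (d (n + 1))).comap (LinearMap.ker (d n)).subtype))

end Hochschild

section Conv

variable {A H : Type} [Ring A] [Algebra k A] [Ring H] [HopfAlgebra k H]

/-- `IsConvInverse f g` : `g` is the convolution inverse of `f` in the convolution
algebra `Hom_k(H ⊗ H, A)`, i.e. `f * g = g * f = ε ⊗ ε · 1_A`. -/
def IsConvInverse (f g : H →ₗ[k] H →ₗ[k] A) : Prop :=
  ∀ (h l : H) (N M' : ℕ) (u : Fin N → Fin 2 → H) (v : Fin M' → Fin 2 → H),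
    SRep k 1 h N u → SRep k 1 l M' v →
    (∑ i, ∑ j, f (u i 0) (v j 0) * g (u i 1) (v j 1)) =
        (Coalgebra.counit (R := k) h * Coalgebra.counit (R := k) l) • (1 : A) ∧
    (∑ i, ∑ j, g (u i 0) (v j 0) * f (u i 1) (v j 1)) =
        (Coalgebra.counit (R := k) h * Coalgebra.counit (R := k) l) • (1 : A)

variable {E : Type} [Ring E] [Algebra k E]

/-- The elementary term `f⁻¹(S(y), z) # S(x)` appearing in the formula for the
convolution inverse `(1 # h)⁻¹ = f⁻¹(S(h⁽²⁾), h⁽³⁾) # S(h⁽¹⁾)`. -/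
def ginv (S : CrossedProduct k A H E) (finv : H →ₗ[k] H →ₗ[k] A) (x y z : H) : E :=
  S.ι ((finv (HopfAlgebra.antipode (R := k) y) z) ⊗ₜ[k] HopfAlgebra.antipode (R := k) x)

end Conv

section Bar

variable {H : Type} [Ring H] [HopfAlgebra k H]

variable (k) in
/-- The degree-`s` part `H̄^{⊗s} ⊗ N` of the normalized bar complex computing
`H_*(H, N) = Tor_*^H(k, N)`, i.e. `(H̄^* ⊗ H, d_*) ⊗_H N`. -/
abbrev BarCh (N : Type) [AddCommGroup N] [Module k N] (s : ℕ) : Type :=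
  Tpow k (Qbar k H) s ⊗[k] N

variable (k) in
/-- `IsBarD act d` : `d` is the differential of the normalized bar complex computing the
homology `H_*(H, N)` of `H` with coefficients in the left `H`-module `N` (action `act`). -/
def IsBarD {N : Type} [AddCommGroup N] [Module k N] (act : H →ₗ[k] N →ₗ[k] N)
    (d : ∀ s : ℕ, BarCh k (H := H) N (s + 1) →ₗ[k] BarCh k (H := H) N s) : Prop :=
  ∀ (s : ℕ) (h : Fin (s + 1) → H) (n : N),
    d s (tp k (fun i => qbar k H (h i)) ⊗ₜ[k] n) =
      Coalgebra.counit (R := k) (h 0) •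
          (tp k (fun i : Fin s => qbar k H (h i.succ)) ⊗ₜ[k] n)
      + (∑ i : Fin s, ((-1 : ℤ) ^ ((i : ℕ) + 1)) •
          (tp k (fun j => qbar k H (mulAt h i j)) ⊗ₜ[k] n))
      + ((-1 : ℤ) ^ (s + 1)) •
          (tp k (fun i : Fin s => qbar k H (h i.castSucc)) ⊗ₜ[k] act (h (Fin.last s)) n)

end Bar

section Sep

variable {A : Type} [Ring A] [Algebra k A]

variable (k A) in
/-- `A` is a separable `k`-algebra: the multiplication map `A ⊗ A → A` admits an
`A`-bimodule splitting (equivalently, `A` is projective as an `A ⊗ Aᵒᵖ`-module). -/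
def IsSeparableAlg : Prop :=
  ∃ s : A →ₗ[k] A ⊗[k] A,
    (LinearMap.mul' k A) ∘ₗ s = LinearMap.id ∧
    ∀ (a b x : A), s (a * x * b) =
      TensorProduct.map (LinearMap.mulLeft k a) (LinearMap.mulRight k b) (s x)

end Sep


section Statement11

variable {k A H E M : Type} [CommRing k] [Ring A] [Algebra k A] [Ring H] [HopfAlgebra k H]
  [Ring E] [Algebra k E] [AddCommGroup M] [Module k M]

/-- The commutator submodule `[A, M] ⊆ M` (for the `A`-bimodule structure on the
`E`-bimodule `M` obtained via `a ↦ a # 1`). -/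
def commSub (S : CrossedProduct k A H E) (Bi : Bimod k E M) : Submodule k M :=
  Submodule.span k {z : M | ∃ (a : A) (m : M), z = Bi.l (S.aE a) m - Bi.r (S.aE a) m}

/-- `IsTheta S Bi finv θ` : `θ^h_r(m ⊗ 𝐚) = (1 # h⁽³⁾) m (1 # h⁽¹⁾)⁻¹ ⊗ 𝐚^{h⁽²⁾}`. -/
def IsTheta (S : CrossedProduct k A H E) (Bi : Bimod k E M)
    (finv : H →ₗ[k] H →ₗ[k] A)
    (θ : H → ∀ r : ℕ, HCh k A M r →ₗ[k] HCh k A M r) : Prop :=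
  ∀ (h : H) (r : ℕ) (m : M) (a : Fin r → A) (N : ℕ) (u : Fin N → Fin (r + 4) → H),
    SRep k (r + 3) h N u →
    θ h r (m ⊗ₜ[k] tp k (fun j => qbar k A (a j))) =
      ∑ i, (Bi.l (S.hE (u i (Fin.last (r + 3))))
          (Bi.r (ginv S finv (u i 0) (u i 1) (u i 2)) m)) ⊗ₜ[k]
        tp k (fun j : Fin r => qbar k A (S.act (u i ⟨(j : ℕ) + 3, by omega⟩) (a j)))

end Statement11

end HopfCrossed

set_option linter.unusedSimpArgs false
set_option linter.unusedSectionVars false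



namespace HopfCrossed

section TP
variable {k : Type} [CommRing k] {V : Type} [AddCommGroup V] [Module k V]

def tcons (n : ℕ) : V ⊗[k] Tpow k V n ≃ₗ[k] Tpow k V (n + 1) := LinearEquiv.refl k _

lemma tp_succ {n : ℕ} (v : Fin (n + 1) → V) :
    tp k v = tcons n (v 0 ⊗ₜ[k] tp k (fun i => v i.succ)) := rfl

lemma tpow_ext {n : ℕ} {X : Type} [AddCommGroup X] [Module k X] (f g : Tpow k V n →ₗ[k] X)
    (h : ∀ v : Fin n → V, f (tp k v) = g (tp k v)) : f = g := by
  induction n generalizing X with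
  | zero =>
    have : ∀ c : k, f (c : k) = g (c : k) := by
      intro c
      have h1 : f (1 : k) = g (1 : k) := h (fun i => i.elim0)
      have e : (c : k) = c • (1 : k) := by simp
      have e1 : f (c • (1 : k)) = c • f (1 : k) := f.map_smul c _
      have e2 : g (c • (1 : k)) = c • g (1 : k) := g.map_smul c _
      rw [e, e1, e2, h1]
    exact LinearMap.ext this
  | succ n ih =>
    have key : f ∘ₗ (tcons n).toLinearMap = g ∘ₗ (tcons n).toLinearMap := by
      refine TensorProduct.ext ?_
      refine LinearMap.ext fun v => ?_
      refine ih _ _ fun w => ?_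
      have := h (Fin.cons v w)
      rw [tp_succ] at this
      simpa using this
    refine LinearMap.ext fun x => ?_
    have := LinearMap.congr_fun key ((tcons n).symm x)
    simpa using this

def snocE : ∀ n : ℕ, Tpow k V n ⊗[k] V ≃ₗ[k] Tpow k V (n + 1)
  | 0 => (TensorProduct.comm k (Tpow k V 0) V).trans (tcons 0)
  | n + 1 => (TensorProduct.congr (tcons n).symm (LinearEquiv.refl k V)).trans
      ((TensorProduct.assoc k V (Tpow k V n) V).trans
        ((TensorProduct.congr (LinearEquiv.refl k V) (snocE n)).trans (tcons (n + 1))))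

lemma snocE_tp {n : ℕ} (v : Fin (n + 1) → V) :
    snocE n (tp k (fun i => v i.castSucc) ⊗ₜ[k] v (Fin.last n)) = tp k v := by
  induction n with
  | zero => rfl
  | succ n ih =>
    have := ih (fun i => v i.succ)
    rw [tp_succ v, ← this, tp_succ (fun i : Fin (n+1) => v i.castSucc)]
    simp [snocE]

end TP

section ZS
variable {k : Type} [CommRing k] {X Y : Type} [AddCommGroup X] [Module k X]
  [AddCommGroup Y] [Module k Y]
lemma zs_sub (e : ℤ) (a b : X ⊗[k] Y) : e • (a - b) = e • a - e • b := smul_sub e a b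
lemma zs_add (e : ℤ) (a b : X ⊗[k] Y) : e • (a + b) = e • a + e • b := smul_add e a b
lemma zs_neg (e : ℤ) (a : X ⊗[k] Y) : (-e) • a = - (e • a) := neg_smul e a
lemma zs_one (a : X ⊗[k] Y) : (1 : ℤ) • a = a := one_smul ℤ a
lemma zs_zero (e : ℤ) : e • (0 : X ⊗[k] Y) = 0 := smul_zero e
lemma zs_mul (e f : ℤ) (a : X ⊗[k] Y) : e • (f • a) = (e * f) • a := smul_smul e f a
end ZS

section HH
variable {k : Type} [CommRing k] {B : Type} [Ring B] [Algebra k B]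
  {N : Type} [AddCommGroup N] [Module k N]

lemma qbar_surj : Function.Surjective (qbar k B) := Submodule.mkQ_surjective _

lemma qbar_one : qbar k B 1 = 0 := by
  rw [Submodule.mkQ_apply, Submodule.Quotient.mk_eq_zero]
  exact ⟨1, by simp⟩

lemma hch_ext {n : ℕ} {X : Type} [AddCommGroup X] [Module k X] (f g : HCh k B N n →ₗ[k] X)
    (h : ∀ (m : N) (x : Fin n → B), f (m ⊗ₜ[k] tp k (fun i => qbar k B (x i)))
      = g (m ⊗ₜ[k] tp k (fun i => qbar k B (x i)))) : f = g := by
  refine TensorProduct.ext (LinearMap.ext fun m => tpow_ext _ _ fun v => ?_)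
  choose x hx using fun i => qbar_surj (k := k) (B := B) (v i)
  have := h m x
  simp only [hx] at this
  simpa using this

/-- permutation `N ⊗ (T ⊗ V) ≃ (V ⊗ N) ⊗ T`. -/
def perm3 (N T V : Type) [AddCommGroup N] [Module k N] [AddCommGroup T] [Module k T]
    [AddCommGroup V] [Module k V] : N ⊗[k] (T ⊗[k] V) ≃ₗ[k] (V ⊗[k] N) ⊗[k] T :=
  (TensorProduct.assoc k N T V).symm.trans
    ((TensorProduct.comm k (N ⊗[k] T) V).trans (TensorProduct.assoc k V N T).symm)

def peel (n : ℕ) : HCh k B N (n + 1) ≃ₗ[k] HCh k B (Qbar k B ⊗[k] N) n :=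
  (TensorProduct.congr (LinearEquiv.refl k N) (snocE n).symm).trans (perm3 N _ _)

lemma peel_tp {n : ℕ} (m : N) (v : Fin (n + 1) → Qbar k B) :
    peel n (m ⊗ₜ[k] tp k v) =
      ((v (Fin.last n)) ⊗ₜ[k] m) ⊗ₜ[k] tp k (fun i => v i.castSucc) := by
  rw [← snocE_tp v]
  simp [peel, perm3]

lemma peel_symm_tp {n : ℕ} (m : N) (v : Fin (n + 1) → Qbar k B) :
    (peel n).symm (((v (Fin.last n)) ⊗ₜ[k] m) ⊗ₜ[k] tp k (fun i => v i.castSucc)) =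
      m ⊗ₜ[k] tp k v := by
  rw [LinearEquiv.symm_apply_eq, peel_tp]

lemma qlift_ker {X : Type} [AddCommGroup X] [Module k X] (f : B →ₗ[k] X) (h : f 1 = 0) :
    unitSub k B ≤ LinearMap.ker f := by
  rintro _ ⟨c, rfl⟩
  simp [Algebra.algebraMap_eq_smul_one, h]

def qlift {X : Type} [AddCommGroup X] [Module k X] (f : B →ₗ[k] X) (h : f 1 = 0) :
    Qbar k B →ₗ[k] X := (unitSub k B).liftQ f (qlift_ker f h)

lemma qlift_q {X : Type} [AddCommGroup X] [Module k X] (f : B →ₗ[k] X) (h : f 1 = 0) (x : B) :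
    qlift f h (qbar k B x) = f x := rfl

lemma qten_ext {X : Type} [AddCommGroup X] [Module k X] (f g : Qbar k B ⊗[k] N →ₗ[k] X)
    (h : ∀ x n, f (qbar k B x ⊗ₜ n) = g (qbar k B x ⊗ₜ n)) : f = g := by
  refine TensorProduct.ext' fun v n => ?_
  obtain ⟨x, rfl⟩ := qbar_surj v
  exact h x n

variable (Bi : Bimod k B N)

def omL1 (y : B) : B →ₗ[k] (N →ₗ[k] Qbar k B ⊗[k] N) :=
  LinearMap.mk₂ k (fun x n => qbar k B (y * x) ⊗ₜ[k] n - qbar k B y ⊗ₜ[k] Bi.l x n)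
    (by intros; simp only [mul_add, map_add, tmul_add, add_tmul, LinearMap.add_apply]; abel)
    (by intros; simp only [mul_smul_comm, map_smul, tmul_smul, ← smul_tmul', smul_sub, LinearMap.smul_apply])
    (by intros; simp only [map_add, tmul_add]; abel)
    (by intros; simp only [map_smul, tmul_smul, smul_sub])

lemma omL1_one (y : B) : omL1 Bi y 1 = 0 := by
  refine LinearMap.ext fun n => ?_
  simp [omL1, Bi.l_one]

def omL3 (y : B) : (Qbar k B ⊗[k] N) →ₗ[k] (Qbar k B ⊗[k] N) :=
  TensorProduct.lift (qlift (k := k) (B := B) (X := N →ₗ[k] Qbar k B ⊗[k] N) (omL1 Bi y) (omL1_one Bi y))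

lemma omL3_q (y x : B) (n : N) : omL3 Bi y (qbar k B x ⊗ₜ n) =
    qbar k B (y * x) ⊗ₜ n - qbar k B y ⊗ₜ Bi.l x n := rfl

def omL : B →ₗ[k] (Qbar k B ⊗[k] N) →ₗ[k] (Qbar k B ⊗[k] N) where
  toFun := omL3 Bi
  map_add' y z := by
    refine qten_ext _ _ fun x n => ?_
    simp only [LinearMap.add_apply, omL3_q, add_mul, map_add, add_tmul]
    abel
  map_smul' c y := by
    refine qten_ext _ _ fun x n => ?_
    simp only [LinearMap.smul_apply, omL3_q, smul_mul_assoc, map_smul, ← smul_tmul', smul_sub,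
      RingHom.id_apply]

lemma omL_q (y x : B) (n : N) : omL Bi y (qbar k B x ⊗ₜ n) =
    qbar k B (y * x) ⊗ₜ n - qbar k B y ⊗ₜ Bi.l x n := rfl

def Om : Bimod k B (Qbar k B ⊗[k] N) where
  l := omL Bi
  r := LinearMap.lTensorHom (Qbar k B) ∘ₗ Bi.r
  l_one := by
    refine qten_ext _ _ fun x n => ?_
    rw [omL_q, qbar_one]; simp
  r_one := by
    refine qten_ext _ _ fun x n => ?_
    simp [Bi.r_one]
  l_mul y z := by
    refine qten_ext _ _ fun x n => ?_
    simp only [omL_q, LinearMap.comp_apply, map_sub, Bi.l_mul, mul_assoc]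
    abel
  r_mul y z := by
    refine qten_ext _ _ fun x n => ?_
    simp [Bi.r_mul]
  lr_comm y z := by
    refine qten_ext _ _ fun x n => ?_
    have h : Bi.l x (Bi.r z n) = Bi.r z (Bi.l x n) := LinearMap.congr_fun (Bi.lr_comm x z) n
    simp only [omL_q, LinearMap.comp_apply, map_sub, LinearMap.coe_lTensorHom, LinearMap.lTensor_tmul, h]

lemma Om_l (y x : B) (n : N) : (Om Bi).l y (qbar k B x ⊗ₜ n) =
    qbar k B (y * x) ⊗ₜ n - qbar k B y ⊗ₜ Bi.l x n := rfl
lemma Om_r (y : B) (x : Qbar k B) (n : N) : (Om Bi).r y (x ⊗ₜ n) = x ⊗ₜ Bi.r y n := rfl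

def d0 : Qbar k B ⊗[k] N →ₗ[k] N :=
  TensorProduct.lift (qlift (Bi.r - Bi.l) (by simp [Bi.l_one, Bi.r_one]))

lemma d0_q (x : B) (n : N) : d0 Bi (qbar k B x ⊗ₜ n) = Bi.r x n - Bi.l x n := rfl

lemma d0_d0 (z) : d0 Bi (d0 (Om Bi) z) = 0 := by
  suffices h : d0 Bi ∘ₗ d0 (Om Bi) = 0 from LinearMap.congr_fun h z
  refine qten_ext _ _ fun x z => ?_
  suffices h : d0 Bi ∘ₗ d0 (Om Bi) ∘ₗ TensorProduct.mk k _ _ (qbar k B x) = 0 from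
    LinearMap.congr_fun h z
  refine qten_ext _ _ fun y n => ?_
  have h : Bi.l y (Bi.r x n) = Bi.r x (Bi.l y n) := LinearMap.congr_fun (Bi.lr_comm y x) n
  simp only [LinearMap.comp_apply, TensorProduct.mk_apply, d0_q, Om_l, Om_r, map_sub, Bi.r_mul, Bi.l_mul, h,
    LinearMap.zero_apply]
  abel

end HH

def hbd {k : Type} [CommRing k] {B : Type} [Ring B] [Algebra k B] : ∀ (n : ℕ) {N : Type}
    [AddCommGroup N] [Module k N] (_ : Bimod k B N), HCh k B N (n + 1) →ₗ[k] HCh k B N n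
  | 0, _, _, _, Bi => (d0 Bi).rTensor _ ∘ₗ (peel 0).toLinearMap
  | n + 1, _, _, _, Bi => (peel n).symm.toLinearMap ∘ₗ hbd n (Om Bi) ∘ₗ (peel (n + 1)).toLinearMap

section HH2
variable {k : Type} [CommRing k] {B : Type} [Ring B] [Algebra k B]
  {N : Type} [AddCommGroup N] [Module k N]

lemma hbd_hbd (n : ℕ) (Bi : Bimod k B N) (x : HCh k B N (n + 2)) :
    hbd n Bi (hbd (n + 1) Bi x) = 0 := by
  induction n generalizing N with
  | zero =>
    simp only [hbd, LinearMap.comp_apply, LinearEquiv.coe_coe, LinearEquiv.apply_symm_apply]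
    rw [← LinearMap.comp_apply, ← LinearMap.rTensor_comp]
    have : d0 Bi ∘ₗ d0 (Om Bi) = 0 := LinearMap.ext (d0_d0 Bi)
    rw [this]; simp
  | succ n ih =>
    rw [hbd, hbd]
    simp only [LinearMap.comp_apply, LinearEquiv.coe_coe, LinearEquiv.apply_symm_apply, ih]
    simp

lemma mulAt_castSucc_last {n : ℕ} (x : Fin (n + 2) → B) (i : Fin n) :
    mulAt x i.castSucc (Fin.last n) = x (Fin.last (n+1)) := by
  have := i.2
  simp only [mulAt, Fin.val_last, Fin.val_castSucc]
  rw [if_neg (by omega), if_neg (by omega)]; rfl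
lemma mulAt_castSucc_castSucc {n : ℕ} (x : Fin (n + 2) → B) (i : Fin n) (j : Fin n) :
    mulAt x i.castSucc j.castSucc = mulAt (fun i => x i.castSucc) i j := by
  simp only [mulAt, Fin.val_castSucc]; rfl
lemma mulAt_last_last {n : ℕ} (x : Fin (n + 2) → B)  :
    mulAt x (Fin.last n) (Fin.last n) = x (Fin.last n).castSucc * x (Fin.last (n+1)) := by
  simp only [mulAt]; simp
lemma mulAt_last_castSucc {n : ℕ} (x : Fin (n + 2) → B) (j : Fin n) :
    mulAt x (Fin.last n) j.castSucc = x j.castSucc.castSucc := by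
  have := j.2
  simp only [mulAt, Fin.val_castSucc, Fin.val_last]
  rw [if_pos (by omega)]

lemma hbd_isHD (Bi : Bimod k B N) : IsHochschildD k Bi.l Bi.r (fun n => hbd n Bi) := by
  intro n
  induction n generalizing N with
  | zero =>
    intro m x
    simp only [hbd, LinearMap.comp_apply, LinearEquiv.coe_coe, peel_tp]
    have : (Fin.last 0) = 0 := rfl
    rw [LinearMap.rTensor_tmul, d0_q, sub_tmul, this]
    rw [Finset.univ_eq_empty, Finset.sum_empty, add_zero]
    have e : ((-1 : ℤ) ^ (0 + 1)) = -1 := by norm_num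
    rw [e, zs_neg, zs_one, ← sub_eq_add_neg]
    congr 1
  | succ n ih =>
    intro m x
    have h1 := ih (Om Bi) (qbar k B (x (Fin.last (n+1))) ⊗ₜ[k] m) (fun i => x i.castSucc)
    simp only at h1
    simp only [hbd, LinearMap.comp_apply, LinearEquiv.coe_coe, peel_tp]
    rw [LinearEquiv.symm_apply_eq, h1, map_add, map_add, Fin.sum_univ_castSucc, map_add, map_sum]
    simp only [map_zsmul, peel_tp, Om_l, Om_r, mulAt_castSucc_last, mulAt_castSucc_castSucc,
      mulAt_last_last, mulAt_last_castSucc, Fin.val_castSucc, Fin.val_last, sub_tmul, smul_sub,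
      Fin.succ_castSucc, Fin.succ_last, Fin.castSucc_zero]
    rw [pow_succ _ (n+1), zs_sub, mul_neg, mul_one, zs_neg]
    generalize ((-1 : ℤ)^(n+1)) = e
    abel

lemma hd_unique {l r : B →ₗ[k] N →ₗ[k] N} {b b' : ∀ n : ℕ, HCh k B N (n + 1) →ₗ[k] HCh k B N n}
    (h : IsHochschildD k l r b) (h' : IsHochschildD k l r b') : b = b' := by
  funext n
  exact hch_ext _ _ fun m x => by rw [h, h']

lemma hbd_unique (Bi : Bimod k B N) {b : ∀ n : ℕ, HCh k B N (n + 1) →ₗ[k] HCh k B N n}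
    (h : IsHochschildD k Bi.l Bi.r b) : b = fun n => hbd n Bi :=
  hd_unique h (hbd_isHD Bi)

variable {N' : Type} [AddCommGroup N'] [Module k N']

/-- Bimodule homomorphisms. -/
structure IsBH (Bi : Bimod k B N) (Bi' : Bimod k B N') (φ : N →ₗ[k] N') : Prop where
  l : ∀ x n, φ (Bi.l x n) = Bi'.l x (φ n)
  r : ∀ x n, φ (Bi.r x n) = Bi'.r x (φ n)

def cmap (φ : N →ₗ[k] N') (n : ℕ) : HCh k B N n →ₗ[k] HCh k B N' n := φ.rTensor _

lemma cmap_tmul (φ : N →ₗ[k] N') (n : ℕ) (m : N) (t : Tpow k (Qbar k B) n) :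
  cmap (B := B) φ n (m ⊗ₜ t) = φ m ⊗ₜ t := rfl

lemma cmap_hbd {Bi : Bimod k B N} {Bi' : Bimod k B N'} {φ : N →ₗ[k] N'} (h : IsBH Bi Bi' φ)
    (n : ℕ) (x : HCh k B N (n + 1)) :
    cmap φ n (hbd n Bi x) = hbd n Bi' (cmap φ (n + 1) x) := by
  suffices e : cmap φ n ∘ₗ hbd n Bi = hbd n Bi' ∘ₗ cmap φ (n + 1) from LinearMap.congr_fun e x
  refine hch_ext _ _ fun m x => ?_
  have h1 := hbd_isHD Bi n m x
  have h2 := hbd_isHD Bi' n (φ m) x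
  simp only at h1 h2
  simp only [LinearMap.comp_apply, cmap_tmul, h1, h2, map_add, map_sum, map_zsmul, h.l, h.r]

/-- The contracting homotopy attached to a section `σ`. -/
def htpy (σ : N →ₗ[k] B ⊗[k] N) (n : ℕ) : HCh k B N n →ₗ[k] HCh k B N (n + 1) :=
  (peel n).symm.toLinearMap ∘ₗ (((qbar k B).rTensor N) ∘ₗ σ).rTensor _

lemma htpy_eq (Bi : Bimod k B N) (σ : N →ₗ[k] B ⊗[k] N)
    (hm : ∀ n, TensorProduct.lift Bi.l (σ n) = n)
    (hl : ∀ x n, σ (Bi.l x n) = (LinearMap.mulLeft k x).rTensor N (σ n))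
    (hr : ∀ x n, σ (Bi.r x n) = (Bi.r x).lTensor B (σ n)) (n : ℕ) (x : HCh k B N (n + 1)) :
    hbd (n + 1) Bi (htpy σ (n + 1) x) - htpy σ n (hbd n Bi x) = ((-1 : ℤ) ^ (n + 2)) • x := by
  suffices e : hbd (n + 1) Bi ∘ₗ htpy σ (n + 1) - htpy σ n ∘ₗ hbd n Bi =
    ((-1 : ℤ) ^ (n + 2)) • LinearMap.id from LinearMap.congr_fun e x
  refine hch_ext _ _ fun m x => ?_
  have h1 := hbd_isHD Bi n m x
  simp only at h1
  simp only [LinearMap.sub_apply, LinearMap.comp_apply, h1, map_add, map_sum, map_zsmul, htpy,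
    LinearMap.rTensor_tmul, hl, hr, LinearMap.smul_apply, LinearMap.id_apply, hbd, LinearEquiv.coe_coe,
    LinearEquiv.apply_symm_apply]
  rw [sub_eq_iff_eq_add, ← LinearEquiv.eq_symm_apply (peel n).symm]
  simp only [LinearEquiv.symm_symm, map_add, map_sum, map_zsmul, LinearEquiv.apply_symm_apply, peel_tp]
  have hm' := hm m
  conv_rhs => enter [1]; rw [← hm']
  generalize σ m = s
  induction s with
  | zero => simp only [map_zero, zero_tmul, tmul_zero, zs_zero, Finset.sum_const_zero, add_zero]
  | add s t hs ht =>
    simp only [map_add, add_tmul, tmul_add, zs_add, Finset.sum_add_distrib] at hs ht ⊢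
    rw [hs, ht]; abel
  | tmul b m =>
    have h2 := hbd_isHD (Om Bi) n (qbar k B b ⊗ₜ[k] m) x
    simp only at h2
    simp only [LinearMap.rTensor_tmul, LinearMap.lTensor_tmul, h2, Om_l, Om_r, TensorProduct.lift.tmul,
      LinearMap.mulLeft_apply, sub_tmul, tmul_sub, zs_sub]
    rw [pow_succ _ (n+1), mul_neg, mul_one, zs_neg]
    abel

lemma exact_of_section (Bi : Bimod k B N) (σ : N →ₗ[k] B ⊗[k] N)
    (hm : ∀ n, TensorProduct.lift Bi.l (σ n) = n)
    (hl : ∀ x n, σ (Bi.l x n) = (LinearMap.mulLeft k x).rTensor N (σ n))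
    (hr : ∀ x n, σ (Bi.r x n) = (Bi.r x).lTensor B (σ n)) (n : ℕ) (x : HCh k B N (n + 1))
    (hx : hbd n Bi x = 0) : ∃ y, hbd (n + 1) Bi y = x := by
  have h := htpy_eq Bi σ hm hl hr n x
  rw [hx, map_zero, sub_zero] at h
  refine ⟨((-1 : ℤ) ^ (n + 2)) • htpy σ (n + 1) x, ?_⟩
  rw [map_zsmul, h, zs_mul, ← mul_pow]
  rw [neg_mul_neg, one_mul, one_pow, zs_one]

end HH2

end HopfCrossed



namespace HopfCrossed

section Rel
variable {k : Type} [CommRing k] {X Y : Type} [AddCommGroup X] [Module k X]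
  [AddCommGroup Y] [Module k Y]

lemma exists_linmap (R : X → Y → Prop) (hadd : ∀ x y x' y', R x y → R x' y' → R (x + x') (y + y'))
    (hsmul : ∀ (c : k) x y, R x y → R (c • x) (c • y)) (htot : ∀ x, ∃ y, R x y)
    (hfun : ∀ y, R 0 y → y = 0) : ∃ f : X →ₗ[k] Y, ∀ x y, R x y ↔ f x = y := by
  have uniq : ∀ x y y', R x y → R x y' → y = y' := by
    intro x y y' h h'
    have h2 := hadd _ _ _ _ h (hsmul (-1) _ _ h')
    have e : x + (-1 : k) • x = 0 := by simp
    rw [e] at h2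
    have := hfun _ h2
    simpa [← sub_eq_add_neg, sub_eq_zero] using this
  choose f hf using htot
  refine ⟨{ toFun := f, map_add' := fun x y => uniq _ _ _ (hf _) (hadd _ _ _ _ (hf x) (hf y)),
            map_smul' := fun c x => uniq _ _ _ (hf _) (hsmul c _ _ (hf x)) }, fun x y => ?_⟩
  constructor
  · intro h; exact uniq _ _ _ (hf x) h
  · rintro rfl; exact hf x

end Rel

section HHsec
variable {k : Type} [CommRing k] {B : Type} [Ring B] [Algebra k B]
  {N : Type} [AddCommGroup N] [Module k N]

/-- Hochschild homology. -/
abbrev HH (Bi : Bimod k B N) (n : ℕ) : Type := Hml k (fun n => hbd n Bi) n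

def Zc (Bi : Bimod k B N) : ∀ n, Submodule k (HCh k B N n)
  | 0 => ⊤
  | n + 1 => LinearMap.ker (hbd n Bi)

def cl (Bi : Bimod k B N) : ∀ n (x : HCh k B N n), x ∈ Zc Bi n → HH Bi n
  | 0, x, _ => (Submodule.Quotient.mk x : HCh k B N 0 ⧸ LinearMap.range (hbd 0 Bi))
  | n + 1, x, hx => (Submodule.Quotient.mk ⟨x, hx⟩ : LinearMap.ker (hbd n Bi) ⧸
      (LinearMap.range (hbd (n + 1) Bi)).comap (LinearMap.ker (hbd n Bi)).subtype)

lemma Zc_zero (Bi : Bimod k B N) (x : HCh k B N 0) : x ∈ Zc Bi 0 := Submodule.mem_top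
lemma Zc_succ (Bi : Bimod k B N) {n : ℕ} (x : HCh k B N (n + 1)) :
    x ∈ Zc Bi (n + 1) ↔ hbd n Bi x = 0 := Iff.rfl

lemma cl_surj (Bi : Bimod k B N) (n : ℕ) (h : HH Bi n) : ∃ x hx, cl Bi n x hx = h := by
  cases n with
  | zero =>
    obtain ⟨x, hx⟩ := Submodule.Quotient.mk_surjective (LinearMap.range (hbd 0 Bi)) h
    exact ⟨x, Zc_zero Bi x, hx⟩
  | succ n =>
    obtain ⟨⟨x, h1⟩, hx⟩ := Submodule.Quotient.mk_surjective
      ((LinearMap.range (hbd (n + 1) Bi)).comap (LinearMap.ker (hbd n Bi)).subtype) h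
    exact ⟨x, h1, hx⟩

lemma cl_eq_zero (Bi : Bimod k B N) (n : ℕ) (x) (hx : x ∈ Zc Bi n) :
    cl Bi n x hx = 0 ↔ ∃ y, hbd n Bi y = x := by
  cases n with
  | zero => exact Submodule.Quotient.mk_eq_zero (LinearMap.range (hbd 0 Bi))
  | succ n =>
    exact Submodule.Quotient.mk_eq_zero
      ((LinearMap.range (hbd (n + 1) Bi)).comap (LinearMap.ker (hbd n Bi)).subtype)

lemma cl_add (Bi : Bimod k B N) (n : ℕ) (x y) (hx : x ∈ Zc Bi n) (hy : y ∈ Zc Bi n) :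
    cl Bi n x hx + cl Bi n y hy = cl Bi n (x + y) (add_mem hx hy) := by
  cases n <;> rfl

lemma cl_smul (Bi : Bimod k B N) (n : ℕ) (c : k) (x) (hx : x ∈ Zc Bi n) :
    c • cl Bi n x hx = cl Bi n (c • x) (Submodule.smul_mem _ c hx) := by
  cases n <;> rfl

lemma cl_sub (Bi : Bimod k B N) (n : ℕ) (x y) (hx : x ∈ Zc Bi n) (hy : y ∈ Zc Bi n) :
    cl Bi n x hx - cl Bi n y hy = cl Bi n (x - y) (sub_mem hx hy) := by
  cases n <;> rfl

lemma cl_eq (Bi : Bimod k B N) (n : ℕ) (x y) (hx : x ∈ Zc Bi n) (hy : y ∈ Zc Bi n) :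
    cl Bi n x hx = cl Bi n y hy ↔ ∃ w, hbd n Bi w = x - y := by
  rw [← sub_eq_zero, cl_sub, cl_eq_zero]

lemma hbd_Zc (Bi : Bimod k B N) (n : ℕ) (y : HCh k B N (n + 1)) : hbd n Bi y ∈ Zc Bi n := by
  cases n with
  | zero => exact Zc_zero _ _
  | succ n => exact hbd_hbd n Bi y

variable {N' : Type} [AddCommGroup N'] [Module k N']
variable {N'' : Type} [AddCommGroup N''] [Module k N'']

lemma cmap_Zc {Bi : Bimod k B N} {Bi' : Bimod k B N'} {φ : N →ₗ[k] N'} (h : IsBH Bi Bi' φ) (n : ℕ)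
    {x} (hx : x ∈ Zc Bi n) : cmap φ n x ∈ Zc Bi' n := by
  cases n with
  | zero => exact Zc_zero _ _
  | succ n => rw [Zc_succ] at hx ⊢; rw [← cmap_hbd h, hx, map_zero]

lemma HHmap_ex {Bi : Bimod k B N} {Bi' : Bimod k B N'} {φ : N →ₗ[k] N'} (h : IsBH Bi Bi' φ) (n : ℕ) :
    ∃ f : HH Bi n →ₗ[k] HH Bi' n, ∀ x y, (∃ u hu, cl Bi n u hu = x ∧ cl Bi' n (cmap φ n u) (cmap_Zc h n hu) = y) ↔ f x = y := by
  refine exists_linmap _ ?_ ?_ ?_ ?_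
  · rintro _ _ _ _ ⟨u, hu, rfl, rfl⟩ ⟨v, hv, rfl, rfl⟩
    refine ⟨u + v, add_mem hu hv, (cl_add ..).symm, ?_⟩
    rw [cl_add]; congr 1; rw [map_add]
  · rintro c _ _ ⟨u, hu, rfl, rfl⟩
    refine ⟨c • u, Submodule.smul_mem _ c hu, (cl_smul ..).symm, ?_⟩
    rw [cl_smul]; congr 1; rw [map_smul]
  · intro x
    obtain ⟨u, hu, rfl⟩ := cl_surj Bi n x
    exact ⟨_, u, hu, rfl, rfl⟩
  · rintro _ ⟨u, hu, h0, rfl⟩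
    rw [cl_eq_zero] at h0 ⊢
    obtain ⟨y, rfl⟩ := h0
    exact ⟨cmap φ (n + 1) y, (cmap_hbd h n y).symm⟩

def HHmap {Bi : Bimod k B N} {Bi' : Bimod k B N'} {φ : N →ₗ[k] N'} (h : IsBH Bi Bi' φ) (n : ℕ) :
    HH Bi n →ₗ[k] HH Bi' n := (HHmap_ex h n).choose

lemma HHmap_cl {Bi : Bimod k B N} {Bi' : Bimod k B N'} {φ : N →ₗ[k] N'} (h : IsBH Bi Bi' φ) (n : ℕ)
    (u hu) : HHmap h n (cl Bi n u hu) = cl Bi' n (cmap φ n u) (cmap_Zc h n hu) :=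
  ((HHmap_ex h n).choose_spec _ _).1 ⟨u, hu, rfl, rfl⟩

/-- short exact sequences of bimodules, with enough purity. -/
structure SES (BK : Bimod k B N') (BP : Bimod k B N) (BN : Bimod k B N'')
    (i : N' →ₗ[k] N) (p : N →ₗ[k] N'') : Prop where
  hi : IsBH BK BP i
  hp : IsBH BP BN p
  inj : ∀ n, Function.Injective (cmap (B := B) i n)
  exact : ∀ x, p x = 0 → ∃ y, i y = x
  comp : ∀ y, p (i y) = 0
  surj : Function.Surjective p

namespace SES
variable {BK : Bimod k B N'} {BP : Bimod k B N} {BN : Bimod k B N''}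
    {i : N' →ₗ[k] N} {p : N →ₗ[k] N''} (s : SES BK BP BN i p)
include s

lemma surjC (n : ℕ) (x : HCh k B N'' n) : ∃ y, cmap p n y = x :=
  LinearMap.rTensor_surjective _ s.surj x

lemma compC (n : ℕ) (y : HCh k B N' n) : cmap p n (cmap i n y) = 0 := by
  have : p ∘ₗ i = 0 := LinearMap.ext s.comp
  have h2 : cmap (B := B) p n ∘ₗ cmap i n = 0 := by
    unfold cmap; rw [← LinearMap.rTensor_comp, this, LinearMap.rTensor_zero]
  exact LinearMap.congr_fun h2 y

lemma exactC (n : ℕ) (x : HCh k B N n) (hx : cmap p n x = 0) : ∃ y, cmap i n y = x := by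
  have h : Function.Exact i p := by
    intro x; constructor
    · exact s.exact x
    · rintro ⟨y, rfl⟩; exact s.comp y
  exact ((rTensor_exact (Tpow k (Qbar k B) n) h s.surj) x).1 hx

lemma lift_cyc (n : ℕ) (y : HCh k B N (n+1)) (x : HCh k B N' n) (hx : cmap i n x = hbd n BP y) :
    x ∈ Zc BK n := by
  cases n with
  | zero => exact Zc_zero _ _
  | succ n =>
    rw [Zc_succ]; apply s.inj n
    rw [cmap_hbd s.hi, hx, hbd_hbd, map_zero]

lemma conn_ex (n : ℕ) : ∃ f : HH BN (n + 1) →ₗ[k] HH BK n, ∀ a b,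
    (∃ (y : HCh k B N (n + 1)) (x : HCh k B N' n) (hx : cmap i n x = hbd n BP y)
      (hz : cmap p (n + 1) y ∈ Zc BN (n + 1)),
      cl BN (n + 1) (cmap p (n + 1) y) hz = a ∧ cl BK n x (s.lift_cyc n y x hx) = b) ↔ f a = b := by
  refine exists_linmap _ ?_ ?_ ?_ ?_
  · rintro _ _ _ _ ⟨y, x, hx, hz, rfl, rfl⟩ ⟨y', x', hx', hz', rfl, rfl⟩
    refine ⟨y + y', x + x', by rw [map_add, map_add, hx, hx'], by rw [map_add]; exact add_mem hz hz', ?_, ?_⟩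
    · rw [cl_add]; congr 1; rw [map_add]
    · rw [cl_add]
  · rintro c _ _ ⟨y, x, hx, hz, rfl, rfl⟩
    refine ⟨c • y, c • x, by rw [map_smul, map_smul, hx], by rw [map_smul]; exact Submodule.smul_mem _ c hz, ?_, ?_⟩
    · rw [cl_smul]; congr 1; rw [map_smul]
    · rw [cl_smul]
  · intro a
    obtain ⟨z, hz, rfl⟩ := cl_surj BN (n + 1) a
    obtain ⟨y, rfl⟩ := s.surjC _ z
    have h1 : cmap p n (hbd n BP y) = 0 := by rw [cmap_hbd s.hp]; exact hz
    obtain ⟨x, hx⟩ := s.exactC n _ h1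
    exact ⟨_, y, x, hx, hz, rfl, rfl⟩
  · rintro _ ⟨y, x, hx, hz, h0, rfl⟩
    rw [cl_eq_zero] at h0 ⊢
    obtain ⟨w, hw⟩ := h0
    obtain ⟨v, rfl⟩ := s.surjC _ w
    have h1 : cmap p (n + 1) (y - hbd (n + 1) BP v) = 0 := by
      rw [map_sub, cmap_hbd s.hp, hw, sub_self]
    obtain ⟨t, ht⟩ := s.exactC _ _ h1
    refine ⟨t, s.inj n ?_⟩
    rw [cmap_hbd s.hi, ht, map_sub, hbd_hbd, sub_zero, hx]

def conn (n : ℕ) : HH BN (n + 1) →ₗ[k] HH BK n := (s.conn_ex n).choose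

lemma conn_cl (n : ℕ) (y : HCh k B N (n + 1)) (x : HCh k B N' n) (hx : cmap i n x = hbd n BP y)
      (hz : cmap p (n + 1) y ∈ Zc BN (n + 1)) :
    s.conn n (cl BN (n + 1) (cmap p (n + 1) y) hz) = cl BK n x (s.lift_cyc n y x hx) :=
  ((s.conn_ex n).choose_spec _ _).1 ⟨y, x, hx, hz, rfl, rfl⟩

lemma conn_iff (n : ℕ) (a b) : s.conn n a = b ↔
    (∃ (y : HCh k B N (n + 1)) (x : HCh k B N' n) (hx : cmap i n x = hbd n BP y)
      (hz : cmap p (n + 1) y ∈ Zc BN (n + 1)),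
      cl BN (n + 1) (cmap p (n + 1) y) hz = a ∧ cl BK n x (s.lift_cyc n y x hx) = b) :=
  ((s.conn_ex n).choose_spec _ _).symm

lemma range_conn (n : ℕ) (b : HH BK n) : HHmap s.hi n b = 0 ↔ ∃ a, s.conn n a = b := by
  constructor
  · intro h
    obtain ⟨x, hx, rfl⟩ := cl_surj BK n b
    rw [HHmap_cl, cl_eq_zero] at h
    obtain ⟨y, hy⟩ := h
    have hz : cmap p (n + 1) y ∈ Zc BN (n + 1) := by
      rw [Zc_succ, ← cmap_hbd s.hp, hy, s.compC]
    exact ⟨_, s.conn_cl n y x hy.symm hz⟩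
  · rintro ⟨a, h⟩
    rw [s.conn_iff] at h
    obtain ⟨y, x, hx, hz, rfl, rfl⟩ := h
    rw [HHmap_cl, cl_eq_zero]
    exact ⟨y, hx.symm⟩

lemma ker_conn (n : ℕ) (a : HH BN (n + 1)) : s.conn n a = 0 ↔ ∃ c, HHmap s.hp (n + 1) c = a := by
  constructor
  · intro h
    obtain ⟨y, x, hx, hz, rfl, h0⟩ := (s.conn_iff _ _ _).1 h
    rw [cl_eq_zero] at h0
    obtain ⟨t, rfl⟩ := h0
    have hc : y - cmap i (n + 1) t ∈ Zc BP (n + 1) := by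
      rw [Zc_succ, map_sub, ← cmap_hbd s.hi, hx, sub_self]
    refine ⟨cl BP (n + 1) (y - cmap i (n + 1) t) hc, ?_⟩
    rw [HHmap_cl]; congr 1
    rw [map_sub, s.compC, sub_zero]
  · rintro ⟨c, rfl⟩
    obtain ⟨y, hy, rfl⟩ := cl_surj _ _ c
    rw [HHmap_cl, s.conn_iff]
    refine ⟨y, 0, by rw [map_zero]; exact hy.symm, cmap_Zc s.hp _ hy, rfl, ?_⟩
    rw [cl_eq_zero]; exact ⟨0, map_zero _⟩

lemma exact_mid (n : ℕ) (c : HH BP n) : HHmap s.hp n c = 0 ↔ ∃ b, HHmap s.hi n b = c := by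
  constructor
  · intro h
    obtain ⟨y, hy, rfl⟩ := cl_surj _ _ c
    rw [HHmap_cl, cl_eq_zero] at h
    obtain ⟨w, hw⟩ := h
    obtain ⟨v, rfl⟩ := s.surjC _ w
    have h1 : cmap p n (y - hbd n BP v) = 0 := by
      rw [map_sub, cmap_hbd s.hp, hw, sub_self]
    obtain ⟨t, ht⟩ := s.exactC _ _ h1
    have hc : t ∈ Zc BK n := by
      cases n with
      | zero => exact Zc_zero _ _
      | succ n =>
        rw [Zc_succ]; apply s.inj n
        rw [cmap_hbd s.hi, ht, map_sub, hbd_hbd, map_zero, sub_zero]; exact hy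
    refine ⟨cl BK n t hc, ?_⟩
    rw [HHmap_cl, cl_eq]
    exact ⟨-v, by rw [ht, map_neg]; abel⟩
  · rintro ⟨b, rfl⟩
    obtain ⟨x, hx, rfl⟩ := cl_surj _ _ b
    rw [HHmap_cl, HHmap_cl, cl_eq_zero]
    exact ⟨0, by rw [map_zero, s.compC]⟩

lemma surj0 : Function.Surjective (HHmap s.hp 0) := by
  intro a
  obtain ⟨z, hz, rfl⟩ := cl_surj _ _ a
  obtain ⟨y, rfl⟩ := s.surjC _ z
  exact ⟨cl BP 0 y (Zc_zero _ _), HHmap_cl ..⟩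

/-- dimension shifting -/
lemma conn_inj (h : ∀ n (x : HH BP (n + 1)), x = 0) (n : ℕ) : Function.Injective (s.conn n) := by
  rw [injective_iff_map_eq_zero]
  intro a ha
  obtain ⟨c, rfl⟩ := (s.ker_conn n a).1 ha
  rw [h n c, map_zero]

end SES

lemma HH_zero_of_section (Bi : Bimod k B N) (σ : N →ₗ[k] B ⊗[k] N)
    (hm : ∀ n, TensorProduct.lift Bi.l (σ n) = n)
    (hl : ∀ x n, σ (Bi.l x n) = (LinearMap.mulLeft k x).rTensor N (σ n))
    (hr : ∀ x n, σ (Bi.r x n) = (Bi.r x).lTensor B (σ n)) (n : ℕ) (x : HH Bi (n + 1)) : x = 0 := by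
  obtain ⟨z, hz, rfl⟩ := cl_surj _ _ x
  rw [cl_eq_zero]
  exact exact_of_section Bi σ hm hl hr n z hz

end HHsec

end HopfCrossed



namespace HopfCrossed

section ChainIso
variable {k : Type} [CommRing k]
  {C : ℕ → Type} [∀ n, AddCommGroup (C n)] [∀ n, Module k (C n)]
  {C' : ℕ → Type} [∀ n, AddCommGroup (C' n)] [∀ n, Module k (C' n)]

def hmlIso (d : ∀ n, C (n + 1) →ₗ[k] C n) (d' : ∀ n, C' (n + 1) →ₗ[k] C' n)
    (e : ∀ n, C n ≃ₗ[k] C' n) (h : ∀ n x, e n (d n x) = d' n (e (n + 1) x)) :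
    ∀ n, Hml k d n ≃ₗ[k] Hml k d' n
  | 0 => Submodule.Quotient.equiv (LinearMap.range (d 0)) (LinearMap.range (d' 0)) (e 0) (by
      ext y; constructor
      · rintro ⟨_, ⟨x, rfl⟩, rfl⟩; exact ⟨e 1 x, (h 0 x).symm⟩
      · rintro ⟨x, rfl⟩
        refine ⟨d 0 ((e 1).symm x), ⟨_, rfl⟩, ?_⟩
        have := h 0 ((e 1).symm x)
        rw [LinearEquiv.apply_symm_apply] at this
        exact this)
  | n + 1 => Submodule.Quotient.equiv _ _
      ((e (n + 1)).ofSubmodules (LinearMap.ker (d n)) (LinearMap.ker (d' n)) (by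
        ext y; constructor
        · rintro ⟨x, hx, rfl⟩
          have hx : d n x = 0 := hx
          change d' n (e (n + 1) x) = 0
          rw [← h, hx, map_zero]
        · intro hy
          have hy : d' n y = 0 := hy
          refine ⟨(e (n + 1)).symm y, ?_, LinearEquiv.apply_symm_apply _ _⟩
          change d n _ = 0
          apply (e n).injective
          rw [h, LinearEquiv.apply_symm_apply, hy, map_zero])) (by
        ext ⟨y, hy⟩; constructor
        · rintro ⟨⟨x', hx'⟩, ⟨w, hw⟩, hx⟩
          refine ⟨e (n + 2) w, ?_⟩
          have h1 : e (n + 1) x' = y := congrArg Subtype.val hx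
          have hw : d (n + 1) w = x' := hw
          change d' (n + 1) _ = y
          rw [← h1, ← hw, h]
        · rintro ⟨w, hw⟩
          have hw : d' (n + 1) w = y := hw
          have hy : d' n y = 0 := hy
          have h1 : e (n + 1) (d (n + 1) ((e (n + 2)).symm w)) = y := by
            rw [h, LinearEquiv.apply_symm_apply, hw]
          refine ⟨⟨d (n + 1) ((e (n + 2)).symm w), ?_⟩, ⟨_, rfl⟩, Subtype.ext h1⟩
          change d n _ = 0
          apply (e n).injective
          rw [h, h1, hy, map_zero])

end ChainIso

section Eps
variable {k : Type} [CommRing k] {H : Type} [Ring H] [HopfAlgebra k H]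
  {X : Type} [AddCommGroup X] [Module k X]

/-- a left `H`-module -/
structure IsAct (act : H →ₗ[k] X →ₗ[k] X) : Prop where
  one : ∀ x, act 1 x = x
  mul : ∀ g h x, act (g * h) x = act g (act h x)

def epsR : H →ₗ[k] X →ₗ[k] X :=
  (LinearMap.lsmul k X) ∘ₗ (Coalgebra.counit (R := k) (A := H))

lemma epsR_apply (h : H) (x : X) : epsR (k := k) h x = Coalgebra.counit (R := k) h • x := rfl

def epsB {act : H →ₗ[k] X →ₗ[k] X} (ha : IsAct act) : Bimod k H X where
  l := act
  r := epsR
  l_one := LinearMap.ext ha.one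
  r_one := LinearMap.ext fun x => by rw [epsR_apply]; simp
  l_mul g h := LinearMap.ext (ha.mul g h)
  r_mul g h := LinearMap.ext fun x => by
    simp only [LinearMap.comp_apply, epsR_apply]; rw [Bialgebra.counit_mul, smul_smul, mul_comm]
  lr_comm g h := LinearMap.ext fun x => by
    simp only [LinearMap.comp_apply, epsR_apply, map_smul]

lemma epsB_l {act : H →ₗ[k] X →ₗ[k] X} (ha : IsAct act) (h x) : (epsB ha).l h x = act h x := rfl
lemma epsB_r {act : H →ₗ[k] X →ₗ[k] X} (ha : IsAct act) (h x) :
    (epsB ha).r h x = Coalgebra.counit (R := k) h • x := rfl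

def barIso {act : H →ₗ[k] X →ₗ[k] X} (ha : IsAct act)
    {d : ∀ s : ℕ, BarCh k (H := H) X (s + 1) →ₗ[k] BarCh k (H := H) X s} (hd : IsBarD k act d)
    (n : ℕ) : Hml k d n ≃ₗ[k] HH (epsB ha) n :=
  hmlIso d (fun n => hbd n (epsB ha)) (fun n => TensorProduct.comm k _ _) (by
    let b : ∀ n, HCh k H X (n + 1) →ₗ[k] HCh k H X n := fun n =>
      (TensorProduct.comm k _ _).toLinearMap ∘ₗ d n ∘ₗ (TensorProduct.comm k _ _).symm.toLinearMap
    have hb : IsHochschildD k (epsB ha).l (epsB ha).r b := by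
      intro n m x
      simp only [b, LinearMap.comp_apply, LinearEquiv.coe_coe, TensorProduct.comm_symm_tmul, hd n x m,
        map_add, map_sum, map_zsmul, map_smul, TensorProduct.comm_tmul, epsB_l, epsB_r, ← smul_tmul']
    have := hbd_unique _ hb
    intro n x
    have h2 := congrFun this n
    rw [← h2]
    simp [b]) n

end Eps

end HopfCrossed



namespace HopfCrossed

section Sweedler
variable {k : Type} [CommRing k] {H : Type} [AddCommGroup H] [Module k H] [Coalgebra k H]

lemma ex_rep (h : H) : ∃ (N : ℕ) (u v : Fin N → H), Coalgebra.comul (R := k) h = ∑ i, u i ⊗ₜ[k] v i := by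
  obtain ⟨s, hs⟩ := TensorProduct.exists_finset (Coalgebra.comul (R := k) h)
  refine ⟨s.card, fun i => (s.equivFin.symm i).1.1, fun i => (s.equivFin.symm i).1.2, ?_⟩
  rw [hs, ← Finset.sum_coe_sort, ← Equiv.sum_comp s.equivFin.symm]

variable (k) in
def rN (h : H) : ℕ := (ex_rep (k := k) h).choose
variable (k) in
def rU (h : H) : Fin (rN k h) → H := (ex_rep (k := k) h).choose_spec.choose
variable (k) in
def rV (h : H) : Fin (rN k h) → H := (ex_rep (k := k) h).choose_spec.choose_spec.choose

lemma r_spec (h : H) : Coalgebra.comul (R := k) h = ∑ i, rU k h i ⊗ₜ[k] rV k h i :=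
  (ex_rep (k := k) h).choose_spec.choose_spec.choose_spec

variable (k) in
/-- Sweedler sums `∑ T(h₁, h₂)`. -/
def SW {X : Type} [AddCommGroup X] (T : H → H → X) (h : H) : X := ∑ i, T (rU k h i) (rV k h i)

variable {X Y : Type} [AddCommGroup X] [Module k X] [AddCommGroup Y] [Module k Y]

variable (k) in
structure Bil (T : H → H → X) : Prop where
  add_l : ∀ x x' y, T (x + x') y = T x y + T x' y
  smul_l : ∀ (c : k) x y, T (c • x) y = c • T x y
  add_r : ∀ x y y', T x (y + y') = T x y + T x y'
  smul_r : ∀ (c : k) x y, T x (c • y) = c • T x y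

def Bil.lin {T : H → H → X} (b : Bil k T) : H →ₗ[k] H →ₗ[k] X :=
  LinearMap.mk₂ k T b.add_l b.smul_l b.add_r b.smul_r

lemma SW_add (T T' : H → H → X) (h : H) :
    SW k (fun x y => T x y + T' x y) h = SW k T h + SW k T' h := Finset.sum_add_distrib
lemma SW_sub (T T' : H → H → X) (h : H) :
    SW k (fun x y => T x y - T' x y) h = SW k T h - SW k T' h := Finset.sum_sub_distrib ..
lemma SW_smul (c : k) (T : H → H → X) (h : H) :
    SW k (fun x y => c • T x y) h = c • SW k T h := Finset.smul_sum.symm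
lemma SW_zero (h : H) : SW k (fun _ _ => (0 : X)) h = 0 := Finset.sum_const_zero

lemma map_SW {F : Type} [FunLike F X Y] [AddMonoidHomClass F X Y] (φ : F) (T : H → H → X) (h : H) :
    φ (SW k T h) = SW k (fun x y => φ (T x y)) h := map_sum φ _ _

lemma SW_comm {H' : Type} [AddCommGroup H'] [Module k H'] [Coalgebra k H']
    (T : H → H → H' → H' → X) (g : H) (h : H') :
    SW k (fun x y => SW k (fun a b => T x y a b) h) g =
    SW k (fun a b => SW k (fun x y => T x y a b) g) h := Finset.sum_comm

lemma SW_lin (B : H →ₗ[k] H →ₗ[k] X) (h : H) :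
    SW k (fun x y => B x y) h = TensorProduct.lift B (Coalgebra.comul (R := k) h) := by
  rw [r_spec h, map_sum]; rfl

lemma Bil.sw {T : H → H → X} (b : Bil k T) (h : H) :
    SW k T h = TensorProduct.lift b.lin (Coalgebra.comul (R := k) h) := SW_lin b.lin h

def swL (B : H →ₗ[k] H →ₗ[k] X) : H →ₗ[k] X := TensorProduct.lift B ∘ₗ Coalgebra.comul (R := k)
lemma swL_apply (B : H →ₗ[k] H →ₗ[k] X) (h : H) : swL B h = SW k (fun x y => B x y) h :=
  (SW_lin B h).symm

/-- `∑ T(h₁,h₂)` as a linear map. -/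
def Bil.L {T : H → H → X} (b : Bil k T) : H →ₗ[k] X := swL b.lin
lemma Bil.L_apply {T : H → H → X} (b : Bil k T) (h : H) : b.L h = SW k T h := swL_apply b.lin h

lemma Bil.sw_add {T : H → H → X} (b : Bil k T) (g h : H) : SW k T (g + h) = SW k T g + SW k T h := by
  simp only [← b.L_apply, map_add]
lemma Bil.sw_smul {T : H → H → X} (b : Bil k T) (c : k) (h : H) : SW k T (c • h) = c • SW k T h := by
  simp only [← b.L_apply, map_smul]

variable (k) in
structure Tri (T : H → H → H → X) : Prop where
  l : ∀ z, Bil k (fun x y => T x y z)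
  r : ∀ x, Bil k (fun y z => T x y z)

def Tri.lin {T : H → H → H → X} (b : Tri k T) : H →ₗ[k] (H ⊗[k] H) →ₗ[k] X where
  toFun x := TensorProduct.lift (b.r x).lin
  map_add' x y := TensorProduct.ext' fun a c => (b.l c).add_l x y a
  map_smul' r x := TensorProduct.ext' fun a c => (b.l c).smul_l r x a

lemma SW_coassoc {T : H → H → H → X} (b : Tri k T) (h : H) :
    SW k (fun x y => SW k (fun p q => T p q y) x) h = SW k (fun x y => SW k (fun p q => T x p q) y) h := by
  have e := Coalgebra.coassoc_apply (R := k) h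
  have e2 := congrArg (TensorProduct.lift b.lin) e
  conv at e2 => rw [r_spec h]
  simp only [map_sum, LinearMap.rTensor_tmul, LinearMap.lTensor_tmul] at e2
  have e3 : ∀ x y : H, TensorProduct.lift b.lin (TensorProduct.assoc k H H H
      ((Coalgebra.comul (R := k) x) ⊗ₜ[k] y)) = SW k (fun p q => T p q y) x := by
    intro x y
    rw [r_spec x, sum_tmul, map_sum, map_sum]; rfl
  have e4 : ∀ x y : H, TensorProduct.lift b.lin (x ⊗ₜ[k] (Coalgebra.comul (R := k) y)) =
      SW k (fun p q => T x p q) y := by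
    intro x y
    rw [r_spec y, tmul_sum, map_sum]; rfl
  simp only [e3, e4] at e2
  exact e2

lemma SW_counit_l (f : H →ₗ[k] X) (h : H) :
    SW k (fun x y => Coalgebra.counit (R := k) x • f y) h = f h := by
  have e := Coalgebra.rTensor_counit_comul (R := k) h
  rw [r_spec h] at e
  have e2 := congrArg (f ∘ₗ (TensorProduct.lid k H).toLinearMap) e
  simpa [map_sum, SW] using e2

lemma SW_counit_r (f : H →ₗ[k] X) (h : H) :
    SW k (fun x y => Coalgebra.counit (R := k) y • f x) h = f h := by
  have e := Coalgebra.lTensor_counit_comul (R := k) h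
  rw [r_spec h] at e
  have e2 := congrArg (f ∘ₗ (TensorProduct.rid k H).toLinearMap) e
  simpa [map_sum, SW] using e2

/-- iterated Sweedler sums -/
def SWn {X : Type} [AddCommGroup X] : ∀ n : ℕ, ((Fin (n + 1) → H) → X) → H → X
  | 0, T, h => T (fun _ => h)
  | n + 1, T, h => SW k (fun x y => SWn n (fun v => T (Fin.cons x v)) y) h

lemma ex_repn (n : ℕ) (h : H) : ∃ (N : ℕ) (u : Fin N → Fin (n + 1) → H), SRep k n h N u ∧
    ∀ (X : Type) [AddCommGroup X] (T : (Fin (n + 1) → H) → X),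
      ∑ i, T (u i) = SWn (k := k) n T h := by
  induction n generalizing h with
  | zero =>
    refine ⟨1, fun _ _ => h, ?_, ?_⟩
    · unfold SRep; simp [itComul]; rfl
    · intro X _ T; simp [SWn]
  | succ n ih =>
    choose N u hu hT using ih
    let e := (finSigmaFinEquiv (m := rN k h) (n := fun i => N (rV k h i)))
    have key : ∀ (X : Type) [AddCommGroup X] (T : (Fin (n + 2) → H) → X),
      ∑ i, T (Fin.cons (rU k h (e.symm i).1) (u (rV k h (e.symm i).1) (e.symm i).2))
       = SWn (k := k) (n + 1) T h := by
      intro X _ T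
      rw [Equiv.sum_comp e.symm (fun s => T (Fin.cons (rU k h s.1) (u (rV k h s.1) s.2))), Fintype.sum_sigma]
      simp only [SWn, SW]
      refine Finset.sum_congr rfl fun i _ => ?_
      exact hT (rV k h i) X (fun v => T (Fin.cons (rU k h i) v))
    refine ⟨∑ i, N (rV k h i), fun i => Fin.cons (rU k h (e.symm i).1) (u (rV k h (e.symm i).1) (e.symm i).2), ?_, key⟩
    unfold SRep
    have h1 := key (Tpow k H (n + 2)) (fun v => tp k v)
    rw [h1]
    have h0 : itComul k (n + 1) h = tcons (n + 1) (TensorProduct.map LinearMap.id (itComul k n)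
      (Coalgebra.comul (R := k) h)) := rfl
    rw [h0, r_spec h, map_sum, map_sum]
    simp only [SWn, SW]
    refine Finset.sum_congr rfl fun i _ => ?_
    have h2 := hT (rV k h i) (Tpow k H (n + 2)) (fun v => tp k (Fin.cons (rU k h i) v))
    rw [← h2]
    have h3 := hu (rV k h i)
    unfold SRep at h3
    rw [TensorProduct.map_tmul, h3, tmul_sum, map_sum]
    rfl

end Sweedler

section Hopf
variable {k : Type} [CommRing k] {H : Type} [Ring H] [HopfAlgebra k H]
variable {X Y : Type} [AddCommGroup X] [Module k X] [AddCommGroup Y] [Module k Y]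
open HopfAlgebra

lemma SW_one {T : H → H → X} (b : Bil k T) : SW k T 1 = T 1 1 := by
  rw [b.sw, Bialgebra.comul_one]; rfl

lemma SW_mul {T : H → H → X} (b : Bil k T) (g h : H) :
    SW k T (g * h) = SW k (fun x y => SW k (fun x' y' => T (x * x') (y * y')) h) g := by
  rw [b.sw, Bialgebra.comul_mul, r_spec g, r_spec h, Finset.sum_mul_sum, map_sum]
  refine Finset.sum_congr rfl fun i _ => ?_
  rw [map_sum]
  refine Finset.sum_congr rfl fun j _ => ?_
  rw [Algebra.TensorProduct.tmul_mul_tmul]; rfl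

lemma SW_anti_l (f : H →ₗ[k] X) (h : H) :
    SW k (fun x y => f (antipode k x * y)) h = Coalgebra.counit (R := k) h • f 1 := by
  have e := mul_antipode_rTensor_comul_apply (R := k) h
  rw [r_spec h] at e
  have e2 := congrArg f e
  simpa [map_sum, Algebra.algebraMap_eq_smul_one, SW] using e2

lemma SW_anti_r (f : H →ₗ[k] X) (h : H) :
    SW k (fun x y => f (x * antipode k y)) h = Coalgebra.counit (R := k) h • f 1 := by
  have e := mul_antipode_lTensor_comul_apply (R := k) h
  rw [r_spec h] at e
  have e2 := congrArg f e
  simpa [map_sum, Algebra.algebraMap_eq_smul_one, SW] using e2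

lemma bil_antitw : Bil k (fun x y : H => antipode k y ⊗ₜ[k] antipode k x) := by
  constructor <;> intros <;> simp [tmul_add, add_tmul, tmul_smul, ← smul_tmul']

lemma comul_SW (h : H) : Coalgebra.comul (R := k) h = SW k (fun x y => x ⊗ₜ[k] y) h := r_spec h

lemma comul_conv (h : H) : SW k (fun x y => Coalgebra.comul (R := k) x * bil_antitw (k := k).L y) h =
    Coalgebra.counit (R := k) h • 1 := by
  have e1 : ∀ x y : H, Coalgebra.comul (R := k) x * bil_antitw (k := k).L y =
     SW k (fun a b => SW k (fun c d => (a * antipode k d) ⊗ₜ[k] (b * antipode k c)) y) x := by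
    intro x y
    rw [Bil.L_apply, comul_SW x]
    unfold SW
    rw [Finset.sum_mul_sum]
    simp
  simp only [e1]
  have t1 : Tri k (fun (a b : H) (y : H) => SW k (fun c d => (a * antipode k d) ⊗ₜ[k] (b * antipode k c)) y) := by
    constructor
    · intro z
      constructor <;> intros <;> simp [add_mul, tmul_add, add_tmul, tmul_smul, ← smul_tmul', SW_add, SW_smul]
    · intro z
      have : ∀ b : H, Bil k (fun c d : H => (z * antipode k d) ⊗ₜ[k] (b * antipode k c)) := by
        intro b
        constructor <;> intros <;> simp [mul_add, tmul_add, add_tmul, tmul_smul, ← smul_tmul']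
      constructor
      · intros; simp [add_mul, tmul_add, SW_add, SW_smul]
      · intros; simp [add_mul, tmul_add, SW_add, SW_smul]
      · intros; exact (this _).sw_add _ _
      · intros; exact (this _).sw_smul _ _
  rw [SW_coassoc t1]
  have e2 : ∀ a y : H, SW k (fun p q => SW k (fun c d => (a * antipode k d) ⊗ₜ[k] (p * antipode k c)) q) y
      = (a * antipode k y) ⊗ₜ[k] 1 := by
    intro a y
    have t2 : Tri k (fun (p c d : H) => (a * antipode k d) ⊗ₜ[k] (p * antipode k c)) := by
      constructor <;> intro z <;> constructor <;> intros <;>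
        simp [add_mul, mul_add, tmul_add, add_tmul, tmul_smul, ← smul_tmul']
    rw [← SW_coassoc t2]
    have e3 : ∀ x y : H, SW k (fun p q => (a * antipode k y) ⊗ₜ[k] (p * antipode k q)) x =
       Coalgebra.counit (R := k) x • ((a * antipode k y) ⊗ₜ[k] 1) := by
      intro x y
      exact SW_anti_r (TensorProduct.mk k H H (a * antipode k y)) x
    simp only [e3]
    exact SW_counit_l ((TensorProduct.mk k H H).flip 1 ∘ₗ LinearMap.mulLeft k a ∘ₗ antipode k) y
  simp only [e2]
  exact SW_anti_r ((TensorProduct.mk k H H).flip 1) h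

lemma comul_conv' (h : H) : SW k (fun x y => Coalgebra.comul (R := k) (antipode k x) *
    Coalgebra.comul (R := k) y) h = Coalgebra.counit (R := k) h • 1 := by
  simp only [← Bialgebra.comul_mul]
  rw [SW_anti_l (Coalgebra.comul (R := k) (A := H)), Bialgebra.comul_one]

lemma comul_antipode (h : H) : Coalgebra.comul (R := k) (antipode k h) = bil_antitw (k := k).L h := by
  have t : Tri k (fun x y z : H => Coalgebra.comul (R := k) (antipode k x) *
    Coalgebra.comul (R := k) y * bil_antitw (k := k).L z) := by
    constructor <;> intro z <;> constructor <;> intros <;>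
        simp [add_mul, mul_add]
  have e := SW_coassoc t h
  have e1 : ∀ x y : H, SW k (fun p q => Coalgebra.comul (R := k) (antipode k p) *
    Coalgebra.comul (R := k) q * bil_antitw (k := k).L y) x =
      Coalgebra.counit (R := k) x • bil_antitw (k := k).L y := by
    intro x y
    have := map_SW (k := k) (AddMonoidHom.mulRight (bil_antitw (k := k).L y)) (fun x y => Coalgebra.comul (R := k) (antipode k x) *
      Coalgebra.comul (R := k) y) x
    rw [comul_conv'] at this
    simpa using this.symm
  have e2 : ∀ x y : H, SW k (fun p q => Coalgebra.comul (R := k) (antipode k x) *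
    Coalgebra.comul (R := k) p * bil_antitw (k := k).L q) y =
      Coalgebra.counit (R := k) y • Coalgebra.comul (R := k) (antipode k x) := by
    intro x y
    have := map_SW (k := k) (AddMonoidHom.mulLeft (Coalgebra.comul (R := k) (antipode k x)))
      (fun x y => Coalgebra.comul (R := k) x * bil_antitw (k := k).L y) y
    rw [comul_conv] at this
    simpa [mul_assoc] using this.symm
  simp only [e1, e2] at e
  rw [SW_counit_l] at e
  rw [e]
  exact (SW_counit_r (Coalgebra.comul (R := k) ∘ₗ antipode k) h).symm

lemma SW_antipode {T : H → H → X} (b : Bil k T) (h : H) :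
    SW k T (antipode k h) = SW k (fun x y => T (antipode k y) (antipode k x)) h := by
  rw [b.sw, comul_antipode, Bil.L_apply, map_SW]; rfl

end Hopf

end HopfCrossed

namespace HopfCrossed

section CP
variable {k A H E : Type} [CommRing k] [Ring A] [Algebra k A] [Ring H] [HopfAlgebra k H]
  [Ring E] [Algebra k E]
variable {X Y : Type} [AddCommGroup X] [Module k X] [AddCommGroup Y] [Module k Y]
open HopfAlgebra Coalgebra

lemma mul_SW {R : Type} [Ring R] (r : R) (T : H → H → R) (h : H) :
    r * SW k T h = SW k (fun x y => r * T x y) h := Finset.mul_sum ..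
lemma SW_mulr {R : Type} [Ring R] (r : R) (T : H → H → R) (h : H) :
    SW k T h * r = SW k (fun x y => T x y * r) h := Finset.sum_mul ..
lemma tmul_SW (x : X) (T : H → H → Y) (h : H) :
    x ⊗ₜ[k] SW k T h = SW k (fun a b => x ⊗ₜ[k] T a b) h := TensorProduct.tmul_sum ..
lemma SW_tmul (y : Y) (T : H → H → X) (h : H) :
    SW k T h ⊗ₜ[k] y = SW k (fun a b => T a b ⊗ₜ[k] y) h := TensorProduct.sum_tmul ..

variable (S : CrossedProduct k A H E)

lemma iota_mul (a b : A) (h l : H) : S.ι (a ⊗ₜ h) * S.ι (b ⊗ₜ l) =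
    SW k (fun x y => SW k (fun p q => SW k (fun r s =>
      S.ι ((a * S.act x b * S.f p r) ⊗ₜ (q * s))) l) y) h := by
  obtain ⟨N, u, hu, hu'⟩ := ex_repn (k := k) 2 h
  obtain ⟨N', v, hv, hv'⟩ := ex_repn (k := k) 1 l
  rw [S.ι_mul a b h l N N' u v hu hv]
  simp only [fun i => hv' _ (fun w => S.ι ((a * S.act (u i 0) b * S.f (u i 1) (w 0)) ⊗ₜ[k] (u i 2 * w 1)))]
  rw [hu' _ (fun w => SWn (k := k) 1 (fun z => S.ι ((a * S.act (w 0) b * S.f (w 1) (z 0)) ⊗ₜ[k] (w 2 * z 1))) l)]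
  rfl

lemma aE_mul_iota (a b : A) (l : H) : S.aE a * S.ι (b ⊗ₜ l) = S.ι ((a * b) ⊗ₜ l) := by
  have := iota_mul S a b 1 l
  have e : S.aE a = S.ι (a ⊗ₜ 1) := rfl
  rw [e, this]
  have b2 : ∀ x, Bil k (fun p q : H => SW k (fun r s =>
      S.ι ((a * S.act x b * S.f p r) ⊗ₜ[k] (q * s))) l) := by
    intro x
    constructor <;> intros <;> simp [mul_add, add_mul, tmul_add, add_tmul, tmul_smul, ← smul_tmul', SW_add, SW_smul]
  have b1 : Bil k (fun x y : H => SW k (fun p q : H => SW k (fun r s =>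
      S.ι ((a * S.act x b * S.f p r) ⊗ₜ[k] (q * s))) l) y) := by
    constructor
    · intros; simp [mul_add, add_mul, tmul_add, add_tmul, tmul_smul, ← smul_tmul', SW_add, SW_smul]
    · intros; simp [mul_add, add_mul, tmul_add, add_tmul, tmul_smul, ← smul_tmul', SW_add, SW_smul]
    · intros; exact (b2 _).sw_add _ _
    · intros; exact (b2 _).sw_smul _ _
  rw [SW_one b1, SW_one (b2 _)]
  simp only [S.one_act, (S.f_normal _).2, one_mul, mul_smul_comm, mul_one, ← smul_tmul', map_smul]
  exact SW_counit_l (S.ι.toLinearMap ∘ₗ TensorProduct.mk k A H (a * b)) l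

lemma aE_one : S.aE 1 = 1 := S.ι_one
lemma hE_one : S.hE 1 = 1 := S.ι_one
lemma aE_mul (a b : A) : S.aE (a * b) = S.aE a * S.aE b := (aE_mul_iota S a b 1).symm
lemma iota_eq (a : A) (h : H) : S.ι (a ⊗ₜ h) = S.aE a * S.hE h := by
  have := aE_mul_iota S a 1 h
  rw [mul_one] at this
  exact this.symm

lemma hE_aE (h : H) (b : A) : S.hE h * S.aE b = SW k (fun x y => S.aE (S.act x b) * S.hE y) h := by
  have := iota_mul S 1 b h 1
  have e : S.hE h * S.aE b = S.ι (1 ⊗ₜ h) * S.ι (b ⊗ₜ 1) := rfl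
  rw [e, this]
  have b2 : ∀ (x p q : H), Bil k (fun r s : H => S.ι ((1 * S.act x b * S.f p r) ⊗ₜ[k] (q * s))) := by
    intro x p q
    constructor <;> intros <;> simp [mul_add, add_mul, tmul_add, add_tmul, tmul_smul, ← smul_tmul', SW_add, SW_smul]
  simp only [fun x p q => SW_one (b2 x p q)]
  simp only [(S.f_normal _).1, one_mul, mul_smul_comm, mul_one, ← smul_tmul', map_smul]
  simp only [iota_eq]
  congr 1; funext x y
  exact SW_counit_l (LinearMap.mulLeft k (S.aE (S.act x b)) ∘ₗ S.hE) y

def fL : H ⊗[k] H →ₗ[k] A := TensorProduct.lift S.f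
/-- `γ(g)γ(h)` and `γ(gh)`. -/
def G2 : H ⊗[k] H →ₗ[k] E := LinearMap.mul' k E ∘ₗ TensorProduct.map S.hE S.hE
def Gm : H ⊗[k] H →ₗ[k] E := S.hE ∘ₗ LinearMap.mul' k H

lemma SWC {T : H ⊗[k] H → H ⊗[k] H → X} (b : Bil k T) (g h : H) :
    SW k T (g ⊗ₜ h) = SW k (fun x y => SW k (fun p q => T (x ⊗ₜ p) (y ⊗ₜ q)) h) g := by
  rw [b.sw, TensorProduct.comul_tmul, r_spec g, r_spec h]
  simp only [sum_tmul, tmul_sum, map_sum]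
  rw [Finset.sum_comm]
  rfl

lemma hE_hE (g h : H) : S.hE g * S.hE h = SW k (fun x y => SW k (fun p q =>
    S.aE (S.f x p) * S.hE (y * q)) h) g := by
  have := iota_mul S 1 1 g h
  have e : S.hE g * S.hE h = S.ι (1 ⊗ₜ g) * S.ι (1 ⊗ₜ h) := rfl
  rw [e, this]
  have b2 : Bil k (fun p q : H => SW k (fun r s =>
      S.aE (S.f p r) * S.hE (q * s)) h) := by
    constructor <;> intros <;> simp [mul_add, add_mul, tmul_add, add_tmul, tmul_smul, ← smul_tmul', SW_add, SW_smul]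
  simp only [S.act_one, one_mul, smul_mul_assoc, ← smul_tmul', map_smul, SW_smul, iota_eq]
  simp only [← b2.L_apply]
  exact SW_counit_l b2.L g

lemma G2_eq (c : H ⊗[k] H) : G2 S c = SW k (fun x y => S.aE (fL S x) * Gm S y) c := by
  have b2 : Bil k (fun x y : H ⊗[k] H => S.aE (fL S x) * Gm S y) := by
    constructor <;> intros <;> simp [mul_add, add_mul, tmul_add, add_tmul, tmul_smul, ← smul_tmul', SW_add, SW_smul]
  rw [← b2.L_apply]
  revert c
  refine LinearMap.congr_fun (f := G2 S) (TensorProduct.ext' fun g h => ?_)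
  rw [b2.L_apply, SWC b2]
  exact hE_hE S g h

variable (finv : H →ₗ[k] H →ₗ[k] A) (hf : IsConvInverse S.f finv)

include hf in
lemma conv_inv (g h : H) : 
    SW k (fun x y => SW k (fun p q => S.f x p * finv y q) h) g = (counit (R := k) g * counit (R := k) h) • (1 : A) ∧
    SW k (fun x y => SW k (fun p q => finv x p * S.f y q) h) g = (counit (R := k) g * counit (R := k) h) • (1 : A) := by
  obtain ⟨N, u, hu, hu'⟩ := ex_repn (k := k) 1 g
  obtain ⟨N', v, hv, hv'⟩ := ex_repn (k := k) 1 h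
  obtain ⟨h1, h2⟩ := hf g h N N' u v hu hv
  constructor
  · rw [← h1]
    simp only [fun i => hv' _ (fun w => S.f (u i 0) (w 0) * finv (u i 1) (w 1))]
    rw [hu' _ (fun w => SWn (k := k) 1 (fun z => S.f (w 0) (z 0) * finv (w 1) (z 1)) h)]
    rfl
  · rw [← h2]
    simp only [fun i => hv' _ (fun w => finv (u i 0) (w 0) * S.f (u i 1) (w 1))]
    rw [hu' _ (fun w => SWn (k := k) 1 (fun z => finv (w 0) (z 0) * S.f (w 1) (z 1)) h)]
    rfl

include hf in
lemma Gm_eq (c : H ⊗[k] H) : SW k (fun x y => S.aE (TensorProduct.lift finv x) * G2 S y) c = Gm S c := by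
  simp only [G2_eq, mul_SW]
  have t : Tri k (fun x y z : H ⊗[k] H => S.aE (TensorProduct.lift finv x) * (S.aE (fL S y) * Gm S z)) := by
    constructor <;> intro z <;> constructor <;> intros <;>
        simp [add_mul, mul_add, tmul_add, add_tmul, tmul_smul, ← smul_tmul']
  rw [← SW_coassoc t]
  have b : Bil k (fun p q : H ⊗[k] H => S.aE (TensorProduct.lift finv p) * (S.aE (fL S q))) := by
    constructor <;> intros <;> simp [mul_add, add_mul, tmul_add, add_tmul, tmul_smul, ← smul_tmul', SW_add, SW_smul]
  have e : ∀ x : H ⊗[k] H, SW k (fun p q => S.aE (TensorProduct.lift finv p) * (S.aE (fL S q))) x =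
      counit (R := k) x • (1 : E) := by
    intro x
    rw [← b.L_apply]
    revert x
    refine LinearMap.congr_fun (f := b.L) (g := LinearMap.toSpanSingleton k E 1 ∘ₗ counit) (TensorProduct.ext' fun g h => ?_)
    rw [b.L_apply, SWC b]
    simp only [lift.tmul, fL, ← aE_mul]
    simp only [← map_SW S.aE]
    rw [(conv_inv S finv hf g h).2]
    simp [aE_one, mul_comm]
  simp only [← mul_assoc, ← SW_mulr, e, smul_mul_assoc, one_mul]
  exact SW_counit_l (Gm S) c

/-- `Q(g,h) = ∑ f⁻¹(g₁,h) γ(g₂)`. -/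
def Qm (g h : H) : E := SW k (fun x y => S.aE (finv x h) * S.hE y) g

lemma Qm_bil : Bil k (Qm S finv) := by
  have b : ∀ h, Bil k (fun x y : H => S.aE (finv x h) * S.hE y) := by
    intro h
    constructor <;> intros <;> simp [mul_add, add_mul, tmul_add, add_tmul, tmul_smul, ← smul_tmul', SW_add, SW_smul]
  constructor
  · intros; exact (b _).sw_add _ _
  · intros; exact (b _).sw_smul _ _
  · intros; simp [Qm, mul_add, add_mul, SW_add, SW_smul]
  · intros; simp [Qm, mul_add, add_mul, SW_add, SW_smul]

include hf in
lemma Qm_hE (g h : H) : SW k (fun x y => Qm S finv g x * S.hE y) h = S.hE (g * h) := by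
  have := Gm_eq S finv hf (g ⊗ₜ h)
  have b : Bil k (fun x y => S.aE (TensorProduct.lift finv x) * G2 S y) := by
    constructor <;> intros <;> simp [mul_add, add_mul, tmul_add, add_tmul, tmul_smul, ← smul_tmul', SW_add, SW_smul]
  rw [SWC b, SW_comm] at this
  have e : Gm S (g ⊗ₜ h) = S.hE (g * h) := rfl
  rw [e] at this
  rw [← this]
  simp only [Qm, SW_mulr, lift.tmul, G2, LinearMap.comp_apply, map_tmul, LinearMap.mul'_apply, mul_assoc]

lemma bil_gp : Bil k (fun x y : H => Qm S finv (antipode k x) y) := by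
  have b := Qm_bil S finv
  constructor
  · intros; simp [b.add_l]
  · intros; simp [b.smul_l]
  · intros; simp [b.add_r]
  · intros; simp [b.smul_r]

/-- the convolution inverse of `γ`. -/
def gp : H →ₗ[k] E := (bil_gp S finv).L

lemma gp_apply (h : H) : gp S finv h = SW k (fun x y => Qm S finv (antipode k x) y) h := Bil.L_apply _ _

lemma gp_eq (h : H) : gp S finv h = SW k (fun x y => SW k (fun p q => ginv S finv x p q) y) h := by
  rw [gp_apply]
  have t : Tri k (fun x p q => ginv S finv x p q) := by
    constructor <;> intro z <;> constructor <;> intros <;>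
        simp [ginv, add_mul, mul_add, tmul_add, add_tmul, tmul_smul, ← smul_tmul']
  rw [← SW_coassoc t]
  congr 1; funext x y
  have b : Bil k (fun p q : H => S.aE (finv p y) * S.hE q) := by
    constructor <;> intros <;> simp [mul_add, add_mul, tmul_add, add_tmul, tmul_smul, ← smul_tmul', SW_add, SW_smul]
  rw [Qm, SW_antipode b]
  simp only [ginv, iota_eq]

include hf in
lemma gp_hE (h : H) : SW k (fun x y => gp S finv x * S.hE y) h = counit (R := k) h • (1 : E) := by
  simp only [gp_apply, SW_mulr]
  have bQ := Qm_bil S finv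
  have t : Tri k (fun x y z => Qm S finv (antipode k x) y * S.hE z) := by
    constructor <;> intro z <;> constructor <;> intros <;>
        simp [add_mul, mul_add, bQ.add_l, bQ.add_r, bQ.smul_l, bQ.smul_r]
  rw [SW_coassoc t]
  simp only [Qm_hE S finv hf]
  rw [SW_anti_l S.hE h, hE_one]

end CP
end HopfCrossed

namespace HopfCrossed

section CP2
variable {k A H E : Type} [CommRing k] [Ring A] [Algebra k A] [Ring H] [HopfAlgebra k H]
  [Ring E] [Algebra k E]
variable {X Y : Type} [AddCommGroup X] [Module k X] [AddCommGroup Y] [Module k Y]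
open HopfAlgebra Coalgebra
variable (S : CrossedProduct k A H E)
variable (finv : H →ₗ[k] H →ₗ[k] A) (hf : IsConvInverse S.f finv)

def Rm (g h : H) : E := SW k (fun x y => Qm S finv (g * antipode k x) y) h

lemma Rm_bil : Bil k (Rm S finv) := by
  have bQ := Qm_bil S finv
  have b : ∀ g, Bil k (fun x y : H => Qm S finv (g * antipode k x) y) := by
    intro h
    constructor <;> intros <;> simp [mul_add, add_mul, bQ.add_l, bQ.add_r, bQ.smul_l, bQ.smul_r]
  constructor
  · intros; simp [Rm, mul_add, add_mul, SW_add, SW_smul, bQ.add_l, bQ.add_r, bQ.smul_l, bQ.smul_r]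
  · intros; simp [Rm, mul_add, add_mul, SW_add, SW_smul, bQ.add_l, bQ.add_r, bQ.smul_l, bQ.smul_r]
  · intros; exact (b _).sw_add _ _
  · intros; exact (b _).sw_smul _ _

lemma Rm_Qm (q z : H) : SW k (fun s y => Rm S finv (q * s) y) z = Qm S finv q z := by
  have bQ := Qm_bil S finv
  unfold Rm
  have t : Tri k (fun s t u => Qm S finv (q * s * antipode k t) u) := by
    constructor <;> intro z <;> constructor <;> intros <;>
        simp [add_mul, mul_add, bQ.add_l, bQ.add_r, bQ.smul_l, bQ.smul_r]
  rw [← SW_coassoc t]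
  have e : ∀ x y, SW k (fun p p' => Qm S finv (q * p * antipode k p') y) x =
      counit (R := k) x • Qm S finv q y := by
    intro x y
    have := SW_anti_r (bQ.lin.flip y ∘ₗ LinearMap.mulLeft k q) x
    simp only [mul_assoc]
    simpa [Bil.lin] using this
  simp only [e]
  exact SW_counit_l (bQ.lin q) z

def W0 : H →ₗ[k] E →ₗ[k] E := LinearMap.mk₂ k
  (fun h e => LinearMap.mul' k E (TensorProduct.map S.aE ((Rm_bil S finv).lin.flip h) (S.ι.symm e)))
  (by intro x y e; simp [TensorProduct.map_add_right])
  (by intro x y e; simp [TensorProduct.map_smul_right])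
  (by intros; simp)
  (by intros; simp)

lemma W0_iota (h : H) (a : A) (g : H) : W0 S finv h (S.ι (a ⊗ₜ g)) = S.aE a * Rm S finv g h := by
  simp [W0, Bil.lin]

include hf in
lemma W0_key (a : A) (g h : H) : SW k (fun x y => W0 S finv y (S.ι (a ⊗ₜ g) * S.hE x)) h =
    counit (R := k) h • S.ι (a ⊗ₜ g) := by
  have e1 : ∀ x y, W0 S finv y (S.ι (a ⊗ₜ g) * S.hE x) = SW k (fun p q => SW k (fun r s =>
      S.aE (a * S.f p r) * Rm S finv (q * s) y) x) g := by
    intro x y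
    rw [iota_eq, mul_assoc, hE_hE]
    simp only [mul_SW, map_SW, ← mul_assoc, ← aE_mul]
    simp only [← iota_eq, W0_iota]
  simp only [e1]
  have bR := Rm_bil S finv
  rw [SW_comm]
  have t : ∀ p q : H, Tri k (fun r s y => S.aE (a * S.f p r) * Rm S finv (q * s) y) := by
    intro p q
    constructor <;> intro z <;> constructor <;> intros <;>
        simp [add_mul, mul_add, bR.add_l, bR.add_r, bR.smul_l, bR.smul_r]
  simp only [fun p q => SW_coassoc (t p q)]
  simp only [← mul_SW, Rm_Qm]
  simp only [Qm, mul_SW]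
  rw [SW_comm]
  have t2 : ∀ r z : H, Tri k (fun p s t => S.aE (a * S.f p r) * (S.aE (finv s z) * S.hE t)) := by
    intro p q
    constructor <;> intro z <;> constructor <;> intros <;>
        simp [add_mul, mul_add]
  simp only [← fun p q => SW_coassoc (t2 p q)]
  rw [SW_comm]
  have c : ∀ x t : H, SW k (fun r z => SW k (fun p s => S.aE (a * S.f p r) * (S.aE (finv s z) * S.hE t)) x) h =
      SW k (fun p s => SW k (fun r z => S.aE (a * S.f p r) * (S.aE (finv s z) * S.hE t)) h) x :=
    fun x t => SW_comm _ h x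
  have c2 : ∀ x t : H, SW k (fun p s => SW k (fun r z => S.aE (a * S.f p r) * (S.aE (finv s z) * S.hE t)) h) x =
      S.aE a * (S.aE (SW k (fun p s => SW k (fun r z => S.f p r * finv s z) h) x) * S.hE t) := by
    intro x t
    simp only [map_SW, SW_mulr, mul_SW, aE_mul, mul_assoc]
  simp only [c, c2, (conv_inv S finv hf _ _).1]
  simp only [map_smul, aE_one, smul_mul_assoc, one_mul, mul_smul, mul_smul_comm]
  rw [iota_eq]
  have := SW_counit_l (counit (R := k) h • (LinearMap.mulLeft k (S.aE a) ∘ₗ S.hE)) g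
  simpa using this

include hf in
lemma W0_key' (e : E) (h : H) : SW k (fun x y => W0 S finv y (e * S.hE x)) h =
    counit (R := k) h • e := by
  obtain ⟨t, rfl⟩ := S.ι.surjective e
  induction t with
  | zero => simp [SW_zero]
  | tmul a g => exact W0_key S finv hf a g h
  | add x y hx hy => simp [add_mul, SW_add, hx, hy]

lemma bil_hg : Bil k (fun x y => S.hE x * gp S finv y) := by
  constructor <;> intros <;> simp [mul_add, add_mul]
lemma bil_gh : Bil k (fun x y => gp S finv x * S.hE y) := by
  constructor <;> intros <;> simp [mul_add, add_mul]

include hf in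
lemma hE_gp (h : H) : SW k (fun x y => S.hE x * gp S finv y) h = counit (R := k) h • (1 : E) := by
  have e0 := W0_key' S finv hf 1 h
  rw [← e0]
  have e1 : ∀ x, S.hE x = SW k (fun p s => (bil_hg S finv).L p * S.hE s) x := by
    intro x
    simp only [Bil.L_apply, SW_mulr]
    have t : Tri k (fun x y z => S.hE x * gp S finv y * S.hE z) := by
      constructor <;> intro z <;> constructor <;> intros <;>
        simp [add_mul, mul_add]
    rw [SW_coassoc t]
    simp only [mul_assoc, ← mul_SW, gp_hE S finv hf, mul_smul_comm, mul_one]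
    exact (SW_counit_r S.hE x).symm
  simp only [one_mul]
  refine Eq.trans ?_ (congrArg (fun T => SW k T h) (funext fun x => funext fun y =>
    congrArg (W0 S finv y) (e1 x).symm))
  simp only [map_SW]
  have t : Tri k (fun p s y => W0 S finv y ((bil_hg S finv).L p * S.hE s)) := by
    constructor <;> intro z <;> constructor <;> intros <;>
      simp [add_mul, mul_add]
  rw [SW_coassoc t]
  simp only [W0_key' S finv hf]
  rw [SW_counit_r, Bil.L_apply]

include hf in
/-- `∑ γ'(h₁) a^{h₂} = a γ'(h)`. -/
lemma gp_aE (h : H) (a : A) : SW k (fun x y => gp S finv x * S.aE (S.act y a)) h = S.aE a * gp S finv h := by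
  have e1 : S.aE a * gp S finv h = SW k (fun x y => SW k (fun p q => gp S finv p * S.hE q) x * S.aE a * gp S finv y) h := by
    simp only [gp_hE S finv hf, smul_mul_assoc, one_mul]
    exact (SW_counit_l (LinearMap.mulLeft k (S.aE a) ∘ₗ gp S finv) h).symm
  rw [e1]
  simp only [SW_mulr]
  have t : Tri k (fun p q y => gp S finv p * S.hE q * S.aE a * gp S finv y) := by
    constructor <;> intro z <;> constructor <;> intros <;> simp [add_mul, mul_add]
  rw [SW_coassoc t]
  congr 1; funext x y
  simp only [mul_assoc, ← mul_SW]
  congr 1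
  simp only [← mul_assoc, hE_aE, SW_mulr]
  have t2 : Tri k (fun x y q => S.aE (S.act x a) * S.hE y * gp S finv q) := by
    constructor <;> intro z <;> constructor <;> intros <;> simp [add_mul, mul_add]
  rw [SW_coassoc t2]
  simp only [mul_assoc, ← mul_SW, hE_gp S finv hf, mul_smul_comm, mul_one]
  exact (SW_counit_r (S.aE ∘ₗ S.act.flip a) y).symm

/-- the coaction `aγ(h) ↦ h₂ ⊗ aγ(h₁)`. -/
def coE : E →ₗ[k] H ⊗[k] E :=
  TensorProduct.lift (LinearMap.mk₂ k (fun a h => SW k (fun x y => y ⊗ₜ[k] (S.aE a * S.hE x)) h)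
    (by intros; simp [add_mul, tmul_add, SW_add])
    (by intros; simp [SW_smul])
    (by
      intro a h h'
      have b : Bil k (fun x y : H => y ⊗ₜ[k] (S.aE a * S.hE x)) := by
        constructor <;> intros <;> simp [mul_add, add_mul, tmul_add, add_tmul, tmul_smul, ← smul_tmul', SW_add, SW_smul]
      exact b.sw_add _ _)
    (by
      intro c a h
      have b : Bil k (fun x y : H => y ⊗ₜ[k] (S.aE a * S.hE x)) := by
        constructor <;> intros <;> simp [mul_add, add_mul, tmul_add, add_tmul, tmul_smul, ← smul_tmul', SW_add, SW_smul]
      exact b.sw_smul _ _)) ∘ₗ S.ι.symm.toLinearMap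

lemma coE_ah (a : A) (h : H) : coE S (S.aE a * S.hE h) = SW k (fun x y => y ⊗ₜ[k] (S.aE a * S.hE x)) h := by
  rw [← iota_eq]; simp [coE]

lemma coE_h (h : H) : coE S (S.hE h) = SW k (fun x y => y ⊗ₜ[k] (S.hE x)) h := by
  have := coE_ah S 1 h
  simpa [aE_one] using this

lemma coE_a (a : A) : coE S (S.aE a) = 1 ⊗ₜ S.aE a := by
  have := coE_ah S a 1
  have b : Bil k (fun x y : H => y ⊗ₜ[k] (S.aE a * S.hE x)) := by
    constructor <;> intros <;> simp [mul_add, add_mul, tmul_add, add_tmul, tmul_smul, ← smul_tmul', SW_add, SW_smul]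
  rw [SW_one b] at this
  simpa [hE_one] using this

lemma coE_one : coE S 1 = 1 := by
  have := coE_a S 1
  rwa [aE_one] at this

lemma E_ind {P : E → Prop} (h0 : P 0) (hadd : ∀ x y, P x → P y → P (x + y))
    (h : ∀ a g, P (S.aE a * S.hE g)) (e : E) : P e := by
  obtain ⟨t, rfl⟩ := S.ι.surjective e
  induction t with
  | zero => simpa
  | tmul a g => rw [iota_eq]; exact h a g
  | add x y hx hy => rw [map_add]; exact hadd _ _ hx hy

lemma coE_amul (a : A) (e : E) : coE S (S.aE a * e) = (1 ⊗ₜ S.aE a) * coE S e := by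
  refine E_ind S (P := fun e => coE S (S.aE a * e) = (1 ⊗ₜ S.aE a) * coE S e) ?_ ?_ ?_ e
  · simp
  · intro x y hx hy; simp [mul_add, hx, hy]
  · intro b g
    rw [← mul_assoc, ← aE_mul, coE_ah, coE_ah, mul_SW]
    simp [aE_mul, mul_assoc]

lemma coE_hh (g h : H) : coE S (S.hE g * S.hE h) = coE S (S.hE g) * coE S (S.hE h) := by
  rw [coE_h, coE_h]
  simp only [mul_SW, SW_mulr, Algebra.TensorProduct.tmul_mul_tmul]
  rw [hE_hE]
  simp only [map_SW, coE_ah]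
  conv_rhs => simp only [hE_hE, tmul_SW]
  have b : ∀ p r, Bil k (fun x y : H => y ⊗ₜ[k] (S.aE (S.f p r) * S.hE x)) := by
    intros
    constructor <;> intros <;> simp [mul_add, add_mul, tmul_add, add_tmul, tmul_smul, ← smul_tmul', SW_add, SW_smul]
  simp only [fun p r => SW_mul (b p r)]
  -- both sides: reorder
  have t1 : ∀ p q : H, Tri k (fun p' x' y' => SW k (fun x y =>
      (y * y') ⊗ₜ[k] (S.aE (S.f p p') * S.hE (x * x'))) q) := by
    intro p q
    constructor <;> intro z <;> constructor <;> intros <;>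
      simp [mul_add, add_mul, tmul_add, add_tmul, tmul_smul, ← smul_tmul', SW_add, SW_smul]
  have l1 : ∀ p q : H, SW k (fun p' q' => SW k (fun x y => SW k (fun x' y' => (y * y') ⊗ₜ[k]
      (S.aE (S.f p p') * S.hE (x * x'))) q') q) h = SW k (fun x' y' => SW k (fun p' q' => SW k (fun x y =>
      (y * y') ⊗ₜ[k] (S.aE (S.f p p') * S.hE (x * q'))) q) x') h := by
    intro p q
    rw [SW_coassoc (t1 p q)]
    congr 1; funext p' z
    rw [SW_comm]
  simp only [l1]
  rw [SW_comm]
  congr 1; funext z w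
  rw [SW_comm]
  have t2 : ∀ p' q' : H, Tri k (fun p x y => 
      (y * w) ⊗ₜ[k] (S.aE (S.f p p') * S.hE (x * q'))) := by
    intro p q
    constructor <;> intro z <;> constructor <;> intros <;>
      simp [mul_add, add_mul, tmul_add, add_tmul, tmul_smul, ← smul_tmul', SW_add, SW_smul]
  simp only [← fun p r => SW_coassoc (t2 p r)]
  rw [SW_comm]
  congr 1; funext x y
  rw [SW_comm]

lemma coE_ha (g : H) (a : A) : coE S (S.hE g * S.aE a) = coE S (S.hE g) * coE S (S.aE a) := by
  rw [coE_h, coE_a, hE_aE]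
  simp only [SW_mulr, map_SW, coE_ah, Algebra.TensorProduct.tmul_mul_tmul, hE_aE, tmul_SW, mul_one]
  have t2 : Tri k (fun p x y : H => y ⊗ₜ[k] (S.aE (S.act p a) * S.hE x)) := by
    constructor <;> intro z <;> constructor <;> intros <;>
      simp [mul_add, add_mul, tmul_add, add_tmul, tmul_smul, ← smul_tmul', SW_add, SW_smul]
  rw [SW_coassoc t2]

lemma coE_hmul (g : H) (e : E) : coE S (S.hE g * e) = coE S (S.hE g) * coE S e := by
  refine E_ind S (P := fun e => coE S (S.hE g * e) = coE S (S.hE g) * coE S e) ?_ ?_ ?_ e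
  · simp
  · intro x y hx hy; simp [mul_add, hx, hy]
  · intro b h
    rw [← mul_assoc, hE_aE, SW_mulr, coE_amul, ← mul_assoc, ← coE_a, ← coE_ha, hE_aE]
    simp only [map_SW, mul_assoc, SW_mulr]
    congr 1; funext x y
    rw [coE_amul, coE_hh, coE_amul, mul_assoc]

lemma coE_mul (x y : E) : coE S (x * y) = coE S x * coE S y := by
  refine E_ind S (P := fun x => coE S (x * y) = coE S x * coE S y) ?_ ?_ ?_ x
  · simp
  · intro x y hx hy; simp [add_mul, hx, hy]
  · intro b h
    rw [mul_assoc, coE_amul, coE_hmul, coE_amul, mul_assoc]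

lemma coE_counit (e : E) : TensorProduct.lid k E ((counit (R := k) (A := H)).rTensor E (coE S e)) = e := by
  refine E_ind S (P := fun e => TensorProduct.lid k E ((counit (R := k) (A := H)).rTensor E (coE S e)) = e) ?_ ?_ ?_ e
  · simp
  · intro x y hx hy; simp [hx, hy]
  · intro a h
    rw [coE_ah]
    simp only [map_SW, LinearMap.rTensor_tmul, lid_tmul]
    exact SW_counit_r (LinearMap.mulLeft k (S.aE a) ∘ₗ S.hE) h

end CP2
end HopfCrossed

namespace HopfCrossed

section FF
variable {k A H E : Type} [CommRing k] [Ring A] [Algebra k A] [Ring H] [HopfAlgebra k H]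
  [Ring E] [Algebra k E]
variable {N N' : Type} [AddCommGroup N] [Module k N] [AddCommGroup N'] [Module k N']
open HopfAlgebra Coalgebra
variable (S : CrossedProduct k A H E)
variable (finv : H →ₗ[k] H →ₗ[k] A) (hf : IsConvInverse S.f finv)
variable (Bi : Bimod k E N)

abbrev FN : Type := N ⧸ commSub S Bi
abbrev fmk : N →ₗ[k] FN S Bi := (commSub S Bi).mkQ

lemma fmk_surj : Function.Surjective (fmk S Bi) := Submodule.mkQ_surjective _
lemma fmk_comm (a : A) (n : N) : fmk S Bi (Bi.l (S.aE a) n) = fmk S Bi (Bi.r (S.aE a) n) := by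
  rw [← sub_eq_zero, ← map_sub]
  exact (Submodule.Quotient.mk_eq_zero _).2 (Submodule.subset_span ⟨a, n, rfl⟩)

lemma bl_mul (x y : E) (n : N) : Bi.l (x * y) n = Bi.l x (Bi.l y n) := by rw [Bi.l_mul]; rfl
lemma br_mul (x y : E) (n : N) : Bi.r (x * y) n = Bi.r y (Bi.r x n) := by rw [Bi.r_mul]; rfl
lemma b_comm (x y : E) (n : N) : Bi.l x (Bi.r y n) = Bi.r y (Bi.l x n) := LinearMap.congr_fun (Bi.lr_comm x y) n
lemma bl_one (n : N) : Bi.l 1 n = n := by rw [Bi.l_one]; rfl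
lemma br_one (n : N) : Bi.r 1 n = n := by rw [Bi.r_one]; rfl

lemma SW_app {X Y : Type} [AddCommGroup X] [Module k X] [AddCommGroup Y] [Module k Y] (T : H → H → (X →ₗ[k] Y)) (h : H) (x : X) :
    SW k T h x = SW k (fun a b => T a b x) h := LinearMap.sum_apply ..

lemma ga_bil : Bil k (fun x y : H => (Bi.l (S.hE y) ∘ₗ Bi.r (gp S finv x) : N →ₗ[k] N)) := by
  constructor <;> intros <;> simp [LinearMap.add_comp, LinearMap.comp_add, LinearMap.smul_comp, LinearMap.comp_smul]

def ga : H →ₗ[k] N →ₗ[k] N := (ga_bil S finv Bi).L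
lemma ga_apply (h : H) (n : N) : ga S finv Bi h n = SW k (fun x y => Bi.l (S.hE y) (Bi.r (gp S finv x) n)) h := by
  rw [ga, Bil.L_apply, SW_app]; rfl

include hf in
lemma ga_comm (h : H) (a : A) (n : N) : fmk S Bi (ga S finv Bi h (Bi.l (S.aE a) n)) =
    fmk S Bi (ga S finv Bi h (Bi.r (S.aE a) n)) := by
  simp only [ga_apply, map_SW]
  have e1 : ∀ x y : H, fmk S Bi (Bi.l (S.hE y) (Bi.r (gp S finv x) (Bi.l (S.aE a) n))) =
      SW k (fun p q => fmk S Bi (Bi.l (S.hE q) (Bi.r (gp S finv x * S.aE (S.act p a)) n))) y := by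
    intro x y
    rw [← b_comm, ← bl_mul, hE_aE]
    rw [map_SW Bi.l, SW_app, map_SW]
    congr 1; funext p q
    rw [bl_mul, fmk_comm, br_mul, b_comm, b_comm, b_comm]
  simp only [e1]
  have t : Tri k (fun x p q => fmk S Bi (Bi.l (S.hE q) (Bi.r (gp S finv x * S.aE (S.act p a)) n))) := by
    constructor <;> intro z <;> constructor <;> intros <;> simp [mul_add, add_mul]
  rw [← SW_coassoc t]
  congr 1; funext x y
  have e2 := map_SW (k := k) (fmk S Bi ∘ₗ Bi.l (S.hE y) ∘ₗ Bi.r.flip n) (fun p q => gp S finv p * S.aE (S.act q a)) x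
  rw [gp_aE S finv hf] at e2
  simp only [LinearMap.comp_apply, LinearMap.flip_apply] at e2
  rw [← e2, br_mul]

include hf in
lemma ga_desc (h : H) : commSub S Bi ≤ LinearMap.ker (fmk S Bi ∘ₗ ga S finv Bi h) := by
  refine Submodule.span_le.2 ?_
  rintro _ ⟨a, n, rfl⟩
  simp only [SetLike.mem_coe, LinearMap.mem_ker, LinearMap.comp_apply, map_sub]
  rw [ga_comm S finv hf, sub_self]

/-- the action of `H` on `N/[A,N]`. -/
def fa : H →ₗ[k] FN S Bi →ₗ[k] FN S Bi where
  toFun h := (commSub S Bi).liftQ (fmk S Bi ∘ₗ ga S finv Bi h) (ga_desc S finv hf Bi h)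
  map_add' g h := by
    refine Submodule.linearMap_qext _ (LinearMap.ext fun n => ?_)
    simp
  map_smul' c h := by
    refine Submodule.linearMap_qext _ (LinearMap.ext fun n => ?_)
    simp

lemma fa_mk (h : H) (n : N) : fa S finv hf Bi h (fmk S Bi n) = fmk S Bi (ga S finv Bi h n) := rfl

def Gt (n : N) : H ⊗[k] E →ₗ[k] H ⊗[k] N := (Bi.r.flip n).lTensor H
lemma Gt_tmul (n : N) (h : H) (e : E) : Gt Bi n (h ⊗ₜ[k] e) = h ⊗ₜ[k] Bi.r e n := rfl

def GG : E ⊗[k] N →ₗ[k] H ⊗[k] N :=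
  (TensorProduct.lift Bi.r).lTensor H ∘ₗ (TensorProduct.assoc k H E N).toLinearMap ∘ₗ (coE S).rTensor N

lemma GG_tmul (e : E) (n : N) : GG S Bi (e ⊗ₜ n) = Gt Bi n (coE S e) := by
  simp only [GG, LinearMap.comp_apply, LinearMap.rTensor_tmul]
  generalize coE S e = t
  induction t with
  | zero => simp
  | tmul h e => simp [Gt]
  | add x y hx hy => simp only [add_tmul, map_add, hx, hy]

include hf in
lemma GG_surj : Function.Surjective (GG S Bi) := by
  intro t
  induction t with
  | zero => exact ⟨0, map_zero _⟩
  | add x y hx hy =>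
    obtain ⟨u, rfl⟩ := hx
    obtain ⟨v, rfl⟩ := hy
    exact ⟨u + v, map_add ..⟩
  | tmul h n =>
    refine ⟨SW k (fun x y => S.hE y ⊗ₜ[k] Bi.r (gp S finv x) n) h, ?_⟩
    simp only [map_SW, GG_tmul, coE_h, Gt_tmul, ← br_mul]
    have t : Tri k (fun x p q => q ⊗ₜ[k] Bi.r (gp S finv x * S.hE p) n) := by
      constructor <;> intro z <;> constructor <;> intros <;> simp [mul_add, add_mul, tmul_add, add_tmul, tmul_smul, ← smul_tmul']
    rw [← SW_coassoc t]
    have e : ∀ x y : H, SW k (fun p q => y ⊗ₜ[k] Bi.r (gp S finv p * S.hE q) n) x =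
        counit (R := k) x • (y ⊗ₜ[k] n) := by
      intro x y
      have e2 := map_SW (k := k) (TensorProduct.mk k H N y ∘ₗ Bi.r.flip n) (fun p q => gp S finv p * S.hE q) x
      rw [gp_hE S finv hf] at e2
      simp only [LinearMap.comp_apply, LinearMap.flip_apply, map_smul, br_one, mk_apply] at e2
      exact e2.symm
    simp only [e]
    exact SW_counit_l ((TensorProduct.mk k H N).flip n) h

def Fi : H ⊗[k] N →ₗ[k] FN S Bi := TensorProduct.lift ((fa S finv hf Bi).compl₂ (fmk S Bi))
lemma Fi_tmul (h : H) (n : N) : Fi S finv hf Bi (h ⊗ₜ n) = fa S finv hf Bi h (fmk S Bi n) := rfl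

/-- (*) -/
lemma Fi_GG (e : E) (n : N) : Fi S finv hf Bi (Gt Bi n (coE S e)) = fmk S Bi (Bi.l e n) := by
  refine E_ind S (P := fun e => Fi S finv hf Bi (Gt Bi n (coE S e)) = fmk S Bi (Bi.l e n)) ?_ ?_ ?_ e
  · simp
  · intro x y hx hy; simp only [map_add, hx, hy, LinearMap.add_apply]
  · intro a h
    simp only [coE_ah, map_SW, Gt_tmul, Fi_tmul, fa_mk, ga_apply, ← br_mul]
    have t : Tri k (fun x p q => fmk S Bi (Bi.l (S.hE q) (Bi.r (S.aE a * S.hE x * gp S finv p) n))) := by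
      constructor <;> intro z <;> constructor <;> intros <;> simp [mul_add, add_mul, tmul_add, add_tmul, tmul_smul, ← smul_tmul']
    rw [← SW_coassoc t]
    have e : ∀ x y : H, SW k (fun p q => fmk S Bi (Bi.l (S.hE y) (Bi.r (S.aE a * S.hE p * gp S finv q) n))) x =
        counit (R := k) x • (fmk S Bi (Bi.l (S.hE y) (Bi.r (S.aE a) n))) := by
      intro x y
      have e2 := map_SW (k := k) (fmk S Bi ∘ₗ Bi.l (S.hE y) ∘ₗ Bi.r.flip n ∘ₗ LinearMap.mulLeft k (S.aE a)) (fun p q => S.hE p * gp S finv q) x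
      rw [hE_gp S finv hf] at e2
      simp only [LinearMap.comp_apply, LinearMap.flip_apply, map_smul, LinearMap.mulLeft_apply, mul_one] at e2
      rw [e2]
      simp only [mul_assoc]
    simp only [e]
    rw [bl_mul, fmk_comm, ← b_comm]
    exact SW_counit_l (fmk S Bi ∘ₗ Bi.l.flip (Bi.r (S.aE a) n) ∘ₗ S.hE) h

def KL : H ⊗[k] E →ₗ[k] (H ⊗[k] N →ₗ[k] FN S Bi) := TensorProduct.lift (LinearMap.mk₂ k
  (fun h f => Fi S finv hf Bi ∘ₗ TensorProduct.map (LinearMap.mulRight k h) (Bi.r f))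
  (by intros; ext; simp [mul_add, add_tmul])
  (by intros; ext; simp [mul_add, ← smul_tmul'])
  (by intros; ext; simp [mul_add, tmul_add])
  (by intros; ext; simp [mul_add, tmul_smul]))

lemma KL_tmul (h : H) (f : E) (u) : KL S finv hf Bi (h ⊗ₜ f) u =
  Fi S finv hf Bi (TensorProduct.map (LinearMap.mulRight k h) (Bi.r f) u) := rfl

lemma KL_Gt (t t' : H ⊗[k] E) (n : N) : KL S finv hf Bi t' (Gt Bi n t) = Fi S finv hf Bi (Gt Bi n (t * t')) := by
  induction t with
  | zero => simp
  | add x y hx hy => simp only [map_add, add_mul, hx, hy]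
  | tmul h f =>
    induction t' with
    | zero => simp
    | add x y hx hy => simp only [map_add, mul_add, hx, hy, LinearMap.add_apply]
    | tmul h' f' =>
      rw [Gt_tmul, KL_tmul, map_tmul, Algebra.TensorProduct.tmul_mul_tmul, Gt_tmul, br_mul]; rfl

lemma KL_tm (t : H ⊗[k] E) (g : H) (n : N) : KL S finv hf Bi t (g ⊗ₜ n) =
    Fi S finv hf Bi ((LinearMap.mulLeft k g).rTensor N (Gt Bi n t)) := by
  induction t with
  | zero => simp
  | add x y hx hy => simp only [map_add, hx, hy, LinearMap.add_apply]
  | tmul h' f' => rw [KL_tmul, Gt_tmul]; rfl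

lemma Gt_l (e : E) (n : N) (t : H ⊗[k] E) : (Bi.l e).lTensor H (Gt Bi n t) = Gt Bi (Bi.l e n) t := by
  induction t with
  | zero => simp
  | add x y hx hy => simp only [map_add, hx, hy]
  | tmul h f => simp only [Gt_tmul, LinearMap.lTensor_tmul, b_comm]

lemma KL_co (e' : E) : KL S finv hf Bi (coE S e') = Fi S finv hf Bi ∘ₗ (Bi.l e').lTensor H := by
  rw [← LinearMap.cancel_right (GG_surj S finv hf Bi)]
  refine TensorProduct.ext' fun e n => ?_
  simp only [LinearMap.comp_apply, GG_tmul, KL_Gt, Gt_l, Fi_GG, ← coE_mul, bl_mul]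

lemma fa_act : IsAct (fa S finv hf Bi) := by
  constructor
  · intro x
    obtain ⟨n, rfl⟩ := fmk_surj S Bi x
    have := Fi_GG S finv hf Bi 1 n
    rw [coE_one, Algebra.TensorProduct.one_def, Gt_tmul, Fi_tmul, br_one, bl_one] at this
    exact this
  · intro g h x
    obtain ⟨n, rfl⟩ := fmk_surj S Bi x
    have key : ∀ u, Fi S finv hf Bi ((LinearMap.mulLeft k g).rTensor N u) = fa S finv hf Bi g (Fi S finv hf Bi u) := by
      suffices e : Fi S finv hf Bi ∘ₗ (LinearMap.mulLeft k g).rTensor N = fa S finv hf Bi g ∘ₗ Fi S finv hf Bi from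
        LinearMap.congr_fun e
      rw [← LinearMap.cancel_right (GG_surj S finv hf Bi)]
      refine TensorProduct.ext' fun e n => ?_
      simp only [LinearMap.comp_apply, GG_tmul, ← KL_tm, Fi_GG, KL_co]
      rfl
    exact key (h ⊗ₜ n)

/-- `N/[A,N]` as an `H`-bimodule. -/
def FB : Bimod k H (FN S Bi) := epsB (fa_act S finv hf Bi)

lemma FB_l (h x) : (FB S finv hf Bi).l h x = fa S finv hf Bi h x := rfl
lemma FB_r (h x) : (FB S finv hf Bi).r h x = counit (R := k) h • x := rfl

variable {Bi} {Bi' : Bimod k E N'}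

lemma fmap_le {φ : N →ₗ[k] N'} (h : IsBH Bi Bi' φ) : commSub S Bi ≤ (commSub S Bi').comap φ := by
  refine Submodule.span_le.2 ?_
  rintro _ ⟨a, n, rfl⟩
  refine Submodule.subset_span ⟨a, φ n, ?_⟩
  rw [map_sub, h.l, h.r]

def fmap {φ : N →ₗ[k] N'} (h : IsBH Bi Bi' φ) : FN S Bi →ₗ[k] FN S Bi' :=
  (commSub S Bi).mapQ (commSub S Bi') φ (fmap_le S h)

lemma fmap_mk {φ : N →ₗ[k] N'} (h : IsBH Bi Bi' φ) (n : N) : fmap S h (fmk S Bi n) = fmk S Bi' (φ n) := rfl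

lemma fmap_ga {φ : N →ₗ[k] N'} (h : IsBH Bi Bi' φ) (g : H) (n : N) : φ (ga S finv Bi g n) = ga S finv Bi' g (φ n) := by
  simp only [ga_apply, map_SW, h.l, h.r]

lemma fmap_bh {φ : N →ₗ[k] N'} (h : IsBH Bi Bi' φ) : IsBH (FB S finv hf Bi) (FB S finv hf Bi') (fmap S h) := by
  constructor
  · intro g x
    obtain ⟨n, rfl⟩ := fmk_surj S Bi x
    rw [FB_l, FB_l, fa_mk, fmap_mk, fmap_mk, fa_mk, fmap_ga S finv h]
  · intro g x
    rw [FB_r, FB_r, map_smul]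

end FF

section H0
variable {k : Type} [CommRing k] {B : Type} [Ring B] [Algebra k B]
  {N : Type} [AddCommGroup N] [Module k N] {N' : Type} [AddCommGroup N'] [Module k N']

def h0 (Bi : Bimod k B N) : N →ₗ[k] HH Bi 0 where
  toFun n := cl Bi 0 (n ⊗ₜ (1 : k)) (Zc_zero _ _)
  map_add' x y := by
    rw [cl_add]; congr 1; exact add_tmul ..
  map_smul' c x := by
    rw [RingHom.id_apply, cl_smul]; congr 1

lemma h0_def (Bi : Bimod k B N) (n : N) : h0 Bi n = cl Bi 0 (n ⊗ₜ (1 : k)) (Zc_zero _ _) := rfl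

lemma ch0_ex (x : HCh k B N 0) : ∃ n : N, x = n ⊗ₜ[k] (1 : k) := by
  refine ⟨TensorProduct.rid k N x, ?_⟩
  exact ((TensorProduct.rid k N).symm_apply_apply x).symm

lemma h0_surj (Bi : Bimod k B N) : Function.Surjective (h0 Bi) := by
  intro a
  obtain ⟨x, hx, rfl⟩ := cl_surj _ _ a
  obtain ⟨n, rfl⟩ := ch0_ex x
  exact ⟨n, rfl⟩

lemma h0_zero (Bi : Bimod k B N) (n : N) : h0 Bi n = 0 ↔ ∃ t, d0 Bi t = n := by
  rw [h0_def, cl_eq_zero]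
  constructor
  · rintro ⟨y, hy⟩
    obtain ⟨t, ht⟩ := ch0_ex (B := B) (peel (k := k) (B := B) 0 y)
    refine ⟨t, ?_⟩
    have : hbd 0 Bi y = (d0 Bi).rTensor _ (peel 0 y) := rfl
    rw [this, ht] at hy
    have := congrArg (TensorProduct.rid k N) hy
    have r1 : ∀ m : N, TensorProduct.rid k N (m ⊗ₜ[k] (1 : k)) = m := fun m => by simp
    exact (r1 (d0 Bi t)).symm.trans (this.trans (r1 n))
  · rintro ⟨t, rfl⟩
    refine ⟨(peel 0).symm (t ⊗ₜ (1 : k)), ?_⟩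
    have : ∀ y, hbd 0 Bi y = (d0 Bi).rTensor _ (peel 0 y) := fun _ => rfl
    rw [this, LinearEquiv.apply_symm_apply]
    rfl

lemma HHmap_h0 {Bi : Bimod k B N} {Bi' : Bimod k B N'} {φ : N →ₗ[k] N'} (h : IsBH Bi Bi' φ) (n : N) :
    HHmap h 0 (h0 Bi n) = h0 Bi' (φ n) :=
  HHmap_cl h 0 _ (Zc_zero _ _)

end H0
end HopfCrossed

namespace HopfCrossed

lemma iso_of_ker {k : Type} [CommRing k] {N X Y : Type} [AddCommGroup N] [Module k N] [AddCommGroup X] [Module k X]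
    [AddCommGroup Y] [Module k Y] (g : N →ₗ[k] X) (f : N →ₗ[k] Y) (hg : Function.Surjective g)
    (hf : Function.Surjective f) (h : ∀ n, g n = 0 ↔ f n = 0) :
    ∃ e : X ≃ₗ[k] Y, ∀ n, e (g n) = f n := by
  have hk : LinearMap.ker g = LinearMap.ker f := by ext n; simp [h]
  refine ⟨(g.quotKerEquivOfSurjective hg).symm.trans ((Submodule.quotEquivOfEq _ _ hk).trans (f.quotKerEquivOfSurjective hf)), fun n => ?_⟩
  have : (g.quotKerEquivOfSurjective hg).symm (g n) = Submodule.Quotient.mk n := by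
    rw [LinearEquiv.symm_apply_eq]; rfl
  rw [LinearEquiv.trans_apply, this]
  rfl

section PBsec
variable {k : Type} [CommRing k] {B : Type} [Ring B] [Algebra k B]
  {N : Type} [AddCommGroup N] [Module k N] {N' : Type} [AddCommGroup N'] [Module k N']

lemma gl_one (Bi : Bimod k B N) (n : N) : Bi.l 1 n = n := by rw [Bi.l_one]; rfl
lemma gl_mul (Bi : Bimod k B N) (x y : B) (n : N) : Bi.l (x * y) n = Bi.l x (Bi.l y n) := by rw [Bi.l_mul]; rfl
lemma gr_mul (Bi : Bimod k B N) (x y : B) (n : N) : Bi.r (x * y) n = Bi.r y (Bi.r x n) := by rw [Bi.r_mul]; rfl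
lemma g_comm (Bi : Bimod k B N) (x y : B) (n : N) : Bi.l x (Bi.r y n) = Bi.r y (Bi.l x n) := LinearMap.congr_fun (Bi.lr_comm x y) n

/-- the bimodule `B ⊗ N`. -/
def PB (Bi : Bimod k B N) : Bimod k B (B ⊗[k] N) where
  l := LinearMap.rTensorHom N ∘ₗ LinearMap.mul k B
  r := LinearMap.lTensorHom B ∘ₗ Bi.r
  l_one := by ext; simp
  r_one := by ext; simp [Bi.r_one]
  l_mul x y := by ext; simp [mul_assoc]
  r_mul x y := by ext; simp [Bi.r_mul]
  lr_comm x y := by ext; simp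

lemma PB_l (Bi : Bimod k B N) (x b : B) (n : N) : (PB Bi).l x (b ⊗ₜ n) = (x * b) ⊗ₜ n := rfl
lemma PB_r (Bi : Bimod k B N) (x b : B) (n : N) : (PB Bi).r x (b ⊗ₜ n) = b ⊗ₜ Bi.r x n := rfl

def pM (Bi : Bimod k B N) : B ⊗[k] N →ₗ[k] N := TensorProduct.lift Bi.l
lemma pM_t (Bi : Bimod k B N) (b : B) (n : N) : pM Bi (b ⊗ₜ n) = Bi.l b n := rfl

def iM1 (Bi : Bimod k B N) : B →ₗ[k] (N →ₗ[k] B ⊗[k] N) :=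
  LinearMap.mk₂ k (fun b n => b ⊗ₜ[k] n - 1 ⊗ₜ[k] Bi.l b n)
    (by intros; simp [add_tmul, tmul_add]; abel)
    (by intros; simp [← smul_tmul', tmul_smul, smul_sub])
    (by intros; simp [add_tmul, tmul_add]; abel)
    (by intros; simp [tmul_smul, smul_sub])

def iM (Bi : Bimod k B N) : Qbar k B ⊗[k] N →ₗ[k] B ⊗[k] N :=
  TensorProduct.lift (qlift (k := k) (B := B) (X := N →ₗ[k] B ⊗[k] N) (iM1 Bi)
    (by ext n; simp [iM1, Bi.l_one]))
lemma iM_q (Bi : Bimod k B N) (b : B) (n : N) : iM Bi (qbar k B b ⊗ₜ n) = b ⊗ₜ n - 1 ⊗ₜ Bi.l b n := rfl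

def retM : B ⊗[k] N →ₗ[k] Qbar k B ⊗[k] N := (qbar k B).rTensor N
lemma retM_t (b : B) (n : N) : retM (k := k) (b ⊗ₜ n) = qbar k B b ⊗ₜ n := rfl

lemma ret_iM (Bi : Bimod k B N) (x : Qbar k B ⊗[k] N) : retM (iM Bi x) = x := by
  suffices h : retM ∘ₗ iM Bi = LinearMap.id from LinearMap.congr_fun h x
  refine qten_ext _ _ fun b n => ?_
  rw [LinearMap.comp_apply, iM_q, map_sub, retM_t, retM_t, qbar_one, zero_tmul, sub_zero]; rfl

lemma iM_ret (Bi : Bimod k B N) (w : B ⊗[k] N) : iM Bi (retM w) = w - 1 ⊗ₜ pM Bi w := by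
  suffices h : iM Bi ∘ₗ retM = LinearMap.id - (TensorProduct.mk k B N 1) ∘ₗ pM Bi from LinearMap.congr_fun h w
  refine TensorProduct.ext' fun b n => ?_
  rfl

lemma pM_bh (Bi : Bimod k B N) : IsBH (PB Bi) Bi (pM Bi) := by
  constructor
  · intro x w
    induction w with
    | zero => simp
    | add u v hu hv => simp only [map_add, hu, hv]
    | tmul b n => rw [PB_l, pM_t, pM_t, gl_mul]
  · intro x w
    induction w with
    | zero => simp
    | add u v hu hv => simp only [map_add, hu, hv]
    | tmul b n => rw [PB_r, pM_t, pM_t, g_comm]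

lemma iM_bh (Bi : Bimod k B N) : IsBH (Om Bi) (PB Bi) (iM Bi) := by
  constructor
  · intro x
    suffices h : iM Bi ∘ₗ (Om Bi).l x = (PB Bi).l x ∘ₗ iM Bi from LinearMap.congr_fun h
    refine qten_ext _ _ fun b n => ?_
    simp only [LinearMap.comp_apply]
    rw [Om_l, map_sub, iM_q, iM_q, iM_q, map_sub, PB_l, PB_l, gl_mul, mul_one]
    abel
  · intro x
    suffices h : iM Bi ∘ₗ (Om Bi).r x = (PB Bi).r x ∘ₗ iM Bi from LinearMap.congr_fun h
    refine qten_ext _ _ fun b n => ?_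
    simp only [LinearMap.comp_apply]
    rw [Om_r, iM_q, iM_q, map_sub, PB_r, PB_r, g_comm]

lemma pM_iM (Bi : Bimod k B N) (x) : pM Bi (iM Bi x) = 0 := by
  suffices h : pM Bi ∘ₗ iM Bi = 0 from LinearMap.congr_fun h x
  refine qten_ext _ _ fun b n => ?_
  simp only [LinearMap.comp_apply]
  rw [iM_q, map_sub, pM_t, pM_t, gl_one, sub_self]; rfl

lemma pM_ex (Bi : Bimod k B N) (w) (h : pM Bi w = 0) : ∃ y, iM Bi y = w :=
  ⟨retM w, by rw [iM_ret, h, tmul_zero, sub_zero]⟩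

lemma pM_surj (Bi : Bimod k B N) : Function.Surjective (pM Bi) := fun n => ⟨1 ⊗ₜ n, by rw [pM_t, gl_one]⟩

lemma inj_of_ret {C : Type} [Ring C] [Algebra k C] {X Y : Type} [AddCommGroup X] [Module k X] [AddCommGroup Y] [Module k Y]
    (i : X →ₗ[k] Y) (r : Y →ₗ[k] X) (h : ∀ x, r (i x) = x) (n : ℕ) :
    Function.Injective (cmap (B := C) i n) := by
  refine Function.LeftInverse.injective (g := r.rTensor _) fun x => ?_
  rw [cmap, ← LinearMap.comp_apply, ← LinearMap.rTensor_comp]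
  have : r ∘ₗ i = LinearMap.id := LinearMap.ext h
  rw [this, LinearMap.rTensor_id]; rfl

lemma sesOm (Bi : Bimod k B N) : SES (Om Bi) (PB Bi) Bi (iM Bi) (pM Bi) where
  hi := iM_bh Bi
  hp := pM_bh Bi
  inj n := inj_of_ret _ retM (ret_iM Bi) n
  exact := pM_ex Bi
  comp := pM_iM Bi
  surj := pM_surj Bi

lemma PB_van (Bi : Bimod k B N) (n : ℕ) (x : HH (PB Bi) (n+1)) : x = 0 := by
  refine HH_zero_of_section (PB Bi) ((TensorProduct.mk k B N 1).lTensor B) ?_ ?_ ?_ n x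
  · intro w
    induction w with
    | zero => simp
    | add u v hu hv => simp only [map_add, hu, hv]
    | tmul b n => simp [PB_l]
  · intro x w
    induction w with
    | zero => simp
    | add u v hu hv => simp only [map_add, hu, hv]
    | tmul b n => simp [PB_l]
  · intro x w
    induction w with
    | zero => simp
    | add u v hu hv => simp only [map_add, hu, hv]
    | tmul b n => simp [PB_r]

end PBsec
end HopfCrossed

namespace HopfCrossed

section FF
variable {k A H E : Type} [CommRing k] [Ring A] [Algebra k A] [Ring H] [HopfAlgebra k H]
  [Ring E] [Algebra k E]
variable {N N' : Type} [AddCommGroup N] [Module k N] [AddCommGroup N'] [Module k N']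
open HopfAlgebra Coalgebra
variable (S : CrossedProduct k A H E)
variable (finv : H →ₗ[k] H →ₗ[k] A) (hf : IsConvInverse S.f finv)
variable (Bi : Bimod k E N)

def qf : H ⊗[k] N →ₗ[k] Qbar k H ⊗[k] FN S Bi := TensorProduct.map (qbar k H) (fmk S Bi)
lemma qf_t (h : H) (n : N) : qf S Bi (h ⊗ₜ n) = qbar k H h ⊗ₜ fmk S Bi n := rfl
lemma qf_surj : Function.Surjective (qf (H := H) S Bi) :=
  TensorProduct.map_surjective (Submodule.mkQ_surjective _) (fmk_surj S Bi)

lemma d0_Gt (n : N) (t : H ⊗[k] E) : d0 (FB S finv hf Bi) (qf S Bi (Gt Bi n t)) =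
    fmk S Bi (Bi.r (TensorProduct.lid k E ((counit (R := k) (A := H)).rTensor E t)) n) - Fi S finv hf Bi (Gt Bi n t) := by
  induction t with
  | zero => simp
  | add x y hx hy => simp only [map_add, hx, hy, LinearMap.add_apply]; abel
  | tmul h e =>
    rw [Gt_tmul, qf_t, d0_q, FB_l, FB_r, Fi_tmul, LinearMap.rTensor_tmul, TensorProduct.lid_tmul, map_smul,
      LinearMap.smul_apply, map_smul]

lemma d0_GG (w : E ⊗[k] N) : d0 (FB S finv hf Bi) (qf S Bi (GG S Bi w)) = fmk S Bi (d0 Bi (retM w)) := by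
  induction w with
  | zero => simp
  | add x y hx hy => simp only [map_add, hx, hy]
  | tmul e n => rw [GG_tmul, d0_Gt, coE_counit, Fi_GG, retM_t, d0_q, map_sub]

lemma comm_d0 {z : N} (hz : z ∈ commSub S Bi) : ∃ t, d0 Bi t = z := by
  have : commSub S Bi ≤ LinearMap.range (d0 Bi) := by
    refine Submodule.span_le.2 ?_
    rintro _ ⟨a, n, rfl⟩
    refine ⟨- (qbar k E (S.aE a) ⊗ₜ n), ?_⟩
    rw [map_neg, d0_q]; abel
  exact this hz

lemma Phi0_ex : ∃ e : HH Bi 0 ≃ₗ[k] HH (FB S finv hf Bi) 0, ∀ n, e (h0 Bi n) = h0 _ (fmk S Bi n) := by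
  refine iso_of_ker (h0 Bi) (h0 (FB S finv hf Bi) ∘ₗ fmk S Bi) (h0_surj Bi)
    (by rw [LinearMap.coe_comp]; exact (h0_surj _).comp (fmk_surj S Bi)) fun n => ?_
  rw [LinearMap.comp_apply, h0_zero, h0_zero]
  constructor
  · rintro ⟨t, rfl⟩
    obtain ⟨w, rfl⟩ : ∃ w, retM w = t := LinearMap.rTensor_surjective N (Submodule.mkQ_surjective _) t
    exact ⟨_, d0_GG S finv hf Bi w⟩
  · rintro ⟨t, ht⟩
    obtain ⟨u, rfl⟩ := qf_surj S Bi t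
    obtain ⟨w, rfl⟩ := GG_surj S finv hf Bi u
    rw [d0_GG] at ht
    obtain ⟨s, hs⟩ := comm_d0 S Bi ((Submodule.Quotient.eq _).1 ht.symm)
    exact ⟨s + retM w, by rw [map_add, hs]; abel⟩

def Phi0 : HH Bi 0 ≃ₗ[k] HH (FB S finv hf Bi) 0 := (Phi0_ex S finv hf Bi).choose
lemma Phi0_h0 (n : N) : Phi0 S finv hf Bi (h0 Bi n) = h0 _ (fmk S Bi n) := (Phi0_ex S finv hf Bi).choose_spec n

variable {Bi} {Bi' : Bimod k E N'} in
lemma Phi0_nat {φ : N →ₗ[k] N'} (h : IsBH Bi Bi' φ) (x : HH Bi 0) :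
    Phi0 S finv hf Bi' (HHmap h 0 x) = HHmap (fmap_bh S finv hf h) 0 (Phi0 S finv hf Bi x) := by
  obtain ⟨n, rfl⟩ := h0_surj Bi x
  rw [HHmap_h0, Phi0_h0, Phi0_h0, HHmap_h0, fmap_mk]

section rex
variable {Bi} {N'' : Type} [AddCommGroup N''] [Module k N''] {Bi' : Bimod k E N'} {Bi'' : Bimod k E N''}
lemma fmap_ex {i : N →ₗ[k] N'} {p : N' →ₗ[k] N''} (hi : IsBH Bi Bi' i) (hp : IsBH Bi' Bi'' p)
    (hs : Function.Surjective p) (ex : ∀ x, p x = 0 → ∃ y, i y = x) (x) (hx : fmap S hp x = 0) : ∃ y, fmap S hi y = x := by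
  obtain ⟨n, rfl⟩ := fmk_surj S Bi' x
  rw [fmap_mk] at hx
  have h1 : p n ∈ commSub S Bi'' := (Submodule.Quotient.mk_eq_zero _).1 hx
  have h2 : commSub S Bi'' ≤ (commSub S Bi').map p := by
    refine Submodule.span_le.2 ?_
    rintro _ ⟨a, m, rfl⟩
    obtain ⟨m, rfl⟩ := hs m
    exact ⟨_, Submodule.subset_span ⟨a, m, rfl⟩, by rw [map_sub, hp.l, hp.r]⟩
  obtain ⟨z, hz, hzn⟩ := h2 h1
  obtain ⟨y, hy⟩ := ex (n - z) (by rw [map_sub, hzn, sub_self])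
  refine ⟨fmk S Bi y, ?_⟩
  rw [fmap_mk, hy, map_sub, sub_eq_self]
  exact (Submodule.Quotient.mk_eq_zero _).2 hz
lemma fmap_surj {p : N' →ₗ[k] N''} (hp : IsBH Bi' Bi'' p)
    (hs : Function.Surjective p) : Function.Surjective (fmap S hp) := by
  intro x
  obtain ⟨n, rfl⟩ := fmk_surj S Bi'' x
  obtain ⟨m, rfl⟩ := hs n
  exact ⟨fmk S Bi' m, rfl⟩
end rex

lemma Gt_mul (n : N) (h : H) (f : E) (t : H ⊗[k] E) :
    (LinearMap.mulLeft k h).rTensor N (Gt Bi (Bi.r f n) t) = Gt Bi n ((h ⊗ₜ f) * t) := by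
  induction t with
  | zero => simp
  | add x y hx hy => simp only [map_add, mul_add, hx, hy]
  | tmul g e =>
    rw [Gt_tmul, Algebra.TensorProduct.tmul_mul_tmul, Gt_tmul, br_mul]; rfl

def sg0 : E ⊗[k] N →ₗ[k] H ⊗[k] FN S (PB Bi) := (fmk S (PB Bi) ∘ₗ TensorProduct.mk k E N 1).lTensor H ∘ₗ GG S Bi

lemma sg0_t (e : E) (n : N) : sg0 S Bi (e ⊗ₜ n) =
   (fmk S (PB Bi) ∘ₗ TensorProduct.mk k E N 1).lTensor H (Gt Bi n (coE S e)) := by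
  rw [sg0, LinearMap.comp_apply, GG_tmul]

lemma sg0_comm (a : A) (w : E ⊗[k] N) : sg0 S Bi ((PB Bi).l (S.aE a) w) = sg0 S Bi ((PB Bi).r (S.aE a) w) := by
  induction w with
  | zero => simp
  | add x y hx hy => simp only [map_add, hx, hy]
  | tmul e n =>
    rw [PB_l, PB_r, sg0_t, sg0_t, coE_amul, ← Gt_mul]
    congr 1
    generalize coE S e = t
    induction t with
    | zero => simp
    | add x y hx hy => simp only [map_add, hx, hy]
    | tmul g f => simp [Gt_tmul]

def sg : FN S (PB Bi) →ₗ[k] H ⊗[k] FN S (PB Bi) := (commSub S (PB Bi)).liftQ (sg0 S Bi) (by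
  refine Submodule.span_le.2 ?_
  rintro _ ⟨a, w, rfl⟩
  simp only [SetLike.mem_coe, LinearMap.mem_ker, map_sub, sg0_comm, sub_self])
lemma sg_mk (w) : sg S Bi (fmk S (PB Bi) w) = sg0 S Bi w := rfl

lemma PBGt (t : H ⊗[k] E) (e : E) (n : N) : Gt (PB Bi) (e ⊗ₜ n) t = (TensorProduct.mk k E N e).lTensor H (Gt Bi n t) := by
  induction t with
  | zero => simp
  | add x y hx hy => simp only [map_add, hx, hy]
  | tmul g f => rfl

lemma sg_hm (x) : TensorProduct.lift (FB S finv hf (PB Bi)).l (sg S Bi x) = x := by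
  obtain ⟨w, rfl⟩ := fmk_surj S _ x
  rw [sg_mk]
  induction w with
  | zero => simp
  | add x y hx hy => simp only [map_add, hx, hy]
  | tmul e n =>
    have := Fi_GG S finv hf (PB Bi) e (1 ⊗ₜ n)
    rw [PBGt, PB_l, mul_one] at this
    rw [sg0_t, ← this]
    generalize Gt Bi n (coE S e) = t
    induction t with
    | zero => simp
    | add x y hx hy => simp only [map_add, hx, hy]
    | tmul g f => rfl

def sgm : H ⊗[k] (E ⊗[k] N) →ₗ[k] H ⊗[k] FN S (PB Bi) :=
  TensorProduct.lift (((LinearMap.rTensorHom (FN S (PB Bi))) ∘ₗ LinearMap.mul k H).compl₂ (sg0 S Bi))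
lemma sgm_t (h : H) (w) : sgm S Bi (h ⊗ₜ w) = (LinearMap.mulLeft k h).rTensor _ (sg0 S Bi w) := rfl

lemma sgm_Gt (t : H ⊗[k] E) (e : E) (n : N) : sgm S Bi (Gt (PB Bi) (e ⊗ₜ n) t) =
    (fmk S (PB Bi) ∘ₗ TensorProduct.mk k E N 1).lTensor H (Gt Bi n (t * coE S e)) := by
  induction t with
  | zero => simp
  | add x y hx hy => simp only [map_add, hx, hy, add_mul]
  | tmul h f =>
    rw [Gt_tmul, PB_r, sgm_t, sg0_t, ← Gt_mul]
    generalize Gt (H := H) Bi (Bi.r f n) (coE S e) = u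
    induction u with
    | zero => simp
    | add x y hx hy => simp only [map_add, hx, hy]
    | tmul g f => rfl

lemma sg_Fi (u) : sg S Bi (Fi S finv hf (PB Bi) u) = sgm S Bi u := by
  obtain ⟨v, rfl⟩ := GG_surj S finv hf (PB Bi) u
  induction v with
  | zero => simp
  | add x y hx hy => simp only [map_add, hx, hy]
  | tmul e' w =>
    induction w with
    | zero => simp
    | add x y hx hy => simp only [map_add, hx, hy, tmul_add]
    | tmul e n => rw [GG_tmul, Fi_GG, sgm_Gt, sg_mk, PB_l, sg0_t, coE_mul]

lemma sg_hl (h : H) (x) : sg S Bi ((FB S finv hf (PB Bi)).l h x) = (LinearMap.mulLeft k h).rTensor _ (sg S Bi x) := by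
  obtain ⟨w, rfl⟩ := fmk_surj S _ x
  have := sg_Fi S finv hf Bi (h ⊗ₜ w)
  rw [Fi_tmul] at this
  rw [FB_l, this, sgm_t, sg_mk]

lemma sg_hr (h : H) (x) : sg S Bi ((FB S finv hf (PB Bi)).r h x) = ((FB S finv hf (PB Bi)).r h).lTensor H (sg S Bi x) := by
  rw [FB_r, map_smul]
  generalize sg S Bi x = u
  induction u with
  | zero => simp
  | add x y hx hy => simp only [map_add, smul_add, hx, hy]
  | tmul g f => rw [LinearMap.lTensor_tmul, FB_r, tmul_smul]

lemma FP_van (n : ℕ) (x : HH (FB S finv hf (PB Bi)) (n+1)) : x = 0 :=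
  HH_zero_of_section _ (sg S Bi) (sg_hm S finv hf Bi) (sg_hl S finv hf Bi) (sg_hr S finv hf Bi) n x

/-- restriction to `A`. -/
def res : Bimod k A N where
  l := Bi.l ∘ₗ S.aE
  r := Bi.r ∘ₗ S.aE
  l_one := by simp only [LinearMap.comp_apply, aE_one, Bi.l_one]
  r_one := by simp only [LinearMap.comp_apply, aE_one, Bi.r_one]
  l_mul x y := by simp only [LinearMap.comp_apply, aE_mul, Bi.l_mul]
  r_mul x y := by simp only [LinearMap.comp_apply, aE_mul, Bi.r_mul]
  lr_comm x y := Bi.lr_comm _ _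
lemma res_l (a : A) (n : N) : (res S Bi).l a n = Bi.l (S.aE a) n := rfl
lemma res_r (a : A) (n : N) : (res S Bi).r a n = Bi.r (S.aE a) n := rfl

variable {Bi} {Bi' : Bimod k E N'} in
lemma res_bh {φ : N →ₗ[k] N'} (h : IsBH Bi Bi' φ) : IsBH (res S Bi) (res S Bi') φ :=
  ⟨fun _ _ => h.l _ _, fun _ _ => h.r _ _⟩

lemma sesRes : SES (res S (Om Bi)) (res S (PB Bi)) (res S Bi) (iM Bi) (pM Bi) where
  hi := res_bh S (iM_bh Bi)
  hp := res_bh S (pM_bh Bi)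
  inj n := inj_of_ret _ retM (ret_iM Bi) n
  exact := pM_ex Bi
  comp := pM_iM Bi
  surj := pM_surj Bi

def rsg : E ⊗[k] N →ₗ[k] A ⊗[k] (E ⊗[k] N) :=
  ((S.hE).rTensor N).lTensor A ∘ₗ (TensorProduct.assoc k A H N).toLinearMap ∘ₗ (S.ι.symm.toLinearMap).rTensor N

lemma rsg_t (a : A) (h : H) (n : N) : rsg S (S.ι (a ⊗ₜ h) ⊗ₜ n) = a ⊗ₜ (S.hE h ⊗ₜ n) := by
  simp [rsg]

lemma EN_ind {P : E ⊗[k] N → Prop} (h0 : P 0) (hadd : ∀ x y, P x → P y → P (x + y))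
    (h : ∀ a h n, P (S.ι (a ⊗ₜ h) ⊗ₜ n)) (w) : P w := by
  induction w with
  | zero => exact h0
  | add x y hx hy => exact hadd x y hx hy
  | tmul e n =>
    obtain ⟨t, rfl⟩ := S.ι.surjective e
    induction t with
    | zero => simpa using h0
    | add x y hx hy => rw [map_add, add_tmul]; exact hadd _ _ hx hy
    | tmul a g => exact h a g n

lemma PA_van (n : ℕ) (x : HH (res S (PB Bi)) (n+1)) : x = 0 := by
  refine HH_zero_of_section _ (rsg S) ?_ ?_ ?_ n x
  · intro w
    refine EN_ind S (P := fun w => TensorProduct.lift (res S (PB Bi)).l (rsg S w) = w) (by simp)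
      (fun x y hx hy => by simp only [map_add, hx, hy]) (fun a h n => ?_) w
    rw [rsg_t, TensorProduct.lift.tmul, res_l, PB_l, iota_eq]
  · intro b w
    refine EN_ind S (P := fun w => rsg S ((res S (PB Bi)).l b w) = (LinearMap.mulLeft k b).rTensor _ (rsg S w)) (by simp)
      (fun x y hx hy => by simp only [map_add, hx, hy]) (fun a h n => ?_) w
    rw [rsg_t, res_l, PB_l, aE_mul_iota, rsg_t]; rfl
  · intro b w
    refine EN_ind S (P := fun w => rsg S ((res S (PB Bi)).r b w) = ((res S (PB Bi)).r b).lTensor _ (rsg S w)) (by simp)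
      (fun x y hx hy => by simp only [map_add, hx, hy]) (fun a h n => ?_) w
    rw [rsg_t, res_r, PB_r, rsg_t]; rfl

lemma iota_h0 (n : N) : h0 (res S Bi) n = 0 ↔ fmk S Bi n = 0 := by
  rw [h0_zero]
  constructor
  · rintro ⟨t, rfl⟩
    suffices h : fmk S Bi ∘ₗ d0 (res S Bi) = 0 from LinearMap.congr_fun h t
    refine qten_ext _ _ fun a n => ?_
    rw [LinearMap.comp_apply, d0_q, map_sub, res_l, res_r, fmk_comm, sub_self]; rfl
  · intro h
    have h1 : n ∈ commSub S Bi := (Submodule.Quotient.mk_eq_zero _).1 h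
    have : commSub S Bi ≤ LinearMap.range (d0 (res S Bi)) := by
      refine Submodule.span_le.2 ?_
      rintro _ ⟨a, n, rfl⟩
      refine ⟨- (qbar k A a ⊗ₜ n), ?_⟩
      rw [map_neg, d0_q, res_l, res_r]; abel
    exact this h1

lemma J0_ex : ∃ e : HH (res S Bi) 0 ≃ₗ[k] FN S Bi, ∀ n, e (h0 (res S Bi) n) = fmk S Bi n :=
  iso_of_ker _ _ (h0_surj _) (fmk_surj S Bi) (iota_h0 S Bi)

/-- `H_0(A,N) ≅ N/[A,N]` -/
def J0 : HH (res S Bi) 0 ≃ₗ[k] FN S Bi := (J0_ex S Bi).choose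
lemma J0_h0 (n : N) : J0 S Bi (h0 (res S Bi) n) = fmk S Bi n := (J0_ex S Bi).choose_spec n
variable {Bi} {Bi' : Bimod k E N'} in
lemma J0_nat {φ : N →ₗ[k] N'} (h : IsBH Bi Bi' φ) (x) :
    J0 S Bi' (HHmap (res_bh S h) 0 x) = fmap S h (J0 S Bi x) := by
  obtain ⟨n, rfl⟩ := h0_surj _ x
  rw [HHmap_h0, J0_h0, J0_h0, fmap_mk]

end FF
end HopfCrossed

namespace HopfCrossed

lemma iso_of_range {k : Type} [CommRing k] {X Y Z : Type} [AddCommGroup X] [Module k X] [AddCommGroup Y] [Module k Y]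
    [AddCommGroup Z] [Module k Z] (f : X →ₗ[k] Z) (g : Y →ₗ[k] Z) (hf : Function.Injective f)
    (hg : Function.Injective g) (h : ∀ z, (∃ x, f x = z) ↔ (∃ y, g y = z)) :
    Nonempty (X ≃ₗ[k] Y) := by
  have hk : LinearMap.range f = LinearMap.range g := by ext z; exact h z
  exact ⟨(LinearEquiv.ofInjective f hf).trans ((LinearEquiv.ofEq _ _ hk).trans (LinearEquiv.ofInjective g hg).symm)⟩

section FF
variable {k A H E : Type} [CommRing k] [Ring A] [Algebra k A] [Ring H] [HopfAlgebra k H]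
  [Ring E] [Algebra k E]
open HopfAlgebra Coalgebra
variable (S : CrossedProduct k A H E)
variable (finv : H →ₗ[k] H →ₗ[k] A) (hf : IsConvInverse S.f finv)

def FInj {N : Type} [AddCommGroup N] [Module k N] (Bi : Bimod k E N) : Prop :=
  ∀ s, Function.Injective (cmap (B := H) (fmap S (iM_bh Bi)) s)

def Gd : ℕ → ∀ {N : Type} [AddCommGroup N] [Module k N], Bimod k E N → Prop
  | 0, _, _, _, _ => True
  | n + 1, _, _, _, Bi => FInj S Bi ∧ Gd n (Om Bi)

lemma sesF {N : Type} [AddCommGroup N] [Module k N] (Bi : Bimod k E N) (h : FInj S Bi) :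
    SES (FB S finv hf (Om Bi)) (FB S finv hf (PB Bi)) (FB S finv hf Bi)
    (fmap S (iM_bh Bi)) (fmap S (pM_bh Bi)) where
  hi := fmap_bh S finv hf _
  hp := fmap_bh S finv hf _
  inj := h
  exact := fmap_ex S _ _ (pM_surj Bi) (pM_ex Bi)
  comp y := by
    obtain ⟨n, rfl⟩ := fmk_surj S _ y
    rw [fmap_mk, fmap_mk, pM_iM, map_zero]
  surj := fmap_surj S _ (pM_surj Bi)

lemma psi_ex {N : Type} [AddCommGroup N] [Module k N] (Bi : Bimod k E N) (n : ℕ)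
    (e : Nonempty (HH (Om Bi) n ≃ₗ[k] HH (FB S finv hf (Om Bi)) n)) :
    ∃ ψ : HH Bi (n+1) →ₗ[k] HH (FB S finv hf (Om Bi)) n, Function.Injective ψ ∧
      ∀ y, (∃ x, ψ x = y) ↔ HHmap (fmap_bh S finv hf (iM_bh Bi)) n y = 0 := by
  cases n with
  | zero =>
    refine ⟨(Phi0 S finv hf (Om Bi)).toLinearMap ∘ₗ (sesOm Bi).conn 0, ?_, ?_⟩
    · rw [LinearMap.coe_comp]
      exact (Phi0 S finv hf (Om Bi)).injective.comp ((sesOm Bi).conn_inj (PB_van Bi) 0)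
    · intro y
      obtain ⟨z, rfl⟩ := (Phi0 S finv hf (Om Bi)).surjective y
      rw [← Phi0_nat, LinearEquiv.map_eq_zero_iff, (sesOm Bi).range_conn]
      constructor
      · rintro ⟨x, hx⟩
        exact ⟨x, (Phi0 S finv hf (Om Bi)).injective hx⟩
      · rintro ⟨x, hx⟩
        exact ⟨x, congrArg _ hx⟩
  | succ n =>
    obtain ⟨e⟩ := e
    refine ⟨e.toLinearMap ∘ₗ (sesOm Bi).conn (n+1), ?_, ?_⟩
    · rw [LinearMap.coe_comp]
      exact e.injective.comp ((sesOm Bi).conn_inj (PB_van Bi) _)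
    · intro y
      refine iff_of_true ?_ (FP_van S finv hf Bi n _)
      obtain ⟨z, rfl⟩ := e.surjective y
      obtain ⟨x, hx⟩ := ((sesOm Bi).range_conn _ z).1 (PB_van Bi n _)
      exact ⟨x, congrArg _ hx⟩

theorem iso_n (n : ℕ) : ∀ {N : Type} [AddCommGroup N] [Module k N] (Bi : Bimod k E N), Gd S n Bi →
    Nonempty (HH Bi n ≃ₗ[k] HH (FB S finv hf Bi) n) := by
  induction n with
  | zero => intro N _ _ Bi _; exact ⟨Phi0 S finv hf Bi⟩
  | succ n ih =>
    intro N _ _ Bi hG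
    obtain ⟨ψ, hi, hr⟩ := psi_ex S finv hf Bi n (ih (Om Bi) hG.2)
    refine iso_of_range ψ ((sesF S finv hf Bi hG.1).conn n) hi ((sesF S finv hf Bi hG.1).conn_inj (FP_van S finv hf Bi) n) fun z => ?_
    rw [hr]
    exact (sesF S finv hf Bi hG.1).range_conn n z

section sep
variable {N N' : Type} [AddCommGroup N] [Module k N] [AddCommGroup N'] [Module k N']
variable (Bi : Bimod k E N) (Bi' : Bimod k E N')

def tau : A ⊗[k] A →ₗ[k] (N →ₗ[k] N) :=
  TensorProduct.lift (LinearMap.mk₂ k (fun x y => Bi.l (S.aE y) ∘ₗ Bi.r (S.aE x))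
    (by intros; ext; simp) (by intros; ext; simp) (by intros; ext; simp) (by intros; ext; simp))
lemma tau_t (x y : A) (n : N) : tau S Bi (x ⊗ₜ y) n = Bi.l (S.aE y) (Bi.r (S.aE x) n) := rfl

lemma tau_mul (t : A ⊗[k] A) (n : N) : fmk S Bi (tau S Bi t n) = fmk S Bi (Bi.r (S.aE (LinearMap.mul' k A t)) n) := by
  induction t with
  | zero => simp
  | add x y hx hy => simp only [map_add, LinearMap.add_apply, hx, hy]
  | tmul x y => rw [tau_t, fmk_comm, LinearMap.mul'_apply, aE_mul, br_mul]

lemma tau_l (t : A ⊗[k] A) (a b : A) (n : N) :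
    tau S Bi (TensorProduct.map (LinearMap.mulLeft k a) (LinearMap.mulRight k b) t) n =
    tau S Bi t (Bi.l (S.aE b) (Bi.r (S.aE a) n)) := by
  induction t with
  | zero => simp
  | add x y hx hy => simp only [map_add, LinearMap.add_apply, hx, hy]
  | tmul x y =>
    rw [TensorProduct.map_tmul, tau_t, tau_t, LinearMap.mulLeft_apply, LinearMap.mulRight_apply, aE_mul, aE_mul, bl_mul, br_mul, b_comm Bi (S.aE b), b_comm, b_comm, b_comm]

variable {Bi Bi'} in
lemma tau_nat (t : A ⊗[k] A) {φ : N →ₗ[k] N'} (h : IsBH Bi Bi' φ) (n : N) : φ (tau S Bi t n) = tau S Bi' t (φ n) := by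
  induction t with
  | zero => simp
  | add x y hx hy => simp only [map_add, LinearMap.add_apply, hx, hy]
  | tmul x y => rw [tau_t, tau_t, h.l, h.r]

lemma FInj_sep (hA : IsSeparableAlg k A) : FInj S Bi := by
  obtain ⟨s, h1, h2⟩ := hA
  have hm : LinearMap.mul' k A (s 1) = 1 := LinearMap.congr_fun h1 1
  have key : ∀ (a : A), tau S (PB Bi) (s 1) ∘ₗ (PB Bi).l (S.aE a) = tau S (PB Bi) (s 1) ∘ₗ (PB Bi).r (S.aE a) := by
    intro a
    refine LinearMap.ext fun w => ?_
    have e1 := tau_l S (PB Bi) (s 1) a 1 w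
    have e2 := tau_l S (PB Bi) (s 1) 1 a w
    rw [← h2] at e1 e2
    simp only [mul_one, one_mul, aE_one, (PB Bi).l_one, (PB Bi).r_one, LinearMap.id_apply] at e1 e2
    exact e2.symm.trans e1
  let s' : FN S (PB Bi) →ₗ[k] E ⊗[k] N := (commSub S (PB Bi)).liftQ (tau S (PB Bi) (s 1)) (by
    refine Submodule.span_le.2 ?_
    rintro _ ⟨a, w, rfl⟩
    have := LinearMap.congr_fun (key a) w
    simp only [LinearMap.comp_apply] at this
    simp only [SetLike.mem_coe, LinearMap.mem_ker, map_sub, this, sub_self])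
  have hs' : ∀ w, s' (fmk S (PB Bi) w) = tau S (PB Bi) (s 1) w := fun _ => rfl
  intro m
  refine inj_of_ret _ (fmk S (Om Bi) ∘ₗ retM ∘ₗ s') ?_ m
  intro x
  obtain ⟨y, rfl⟩ := fmk_surj S _ x
  rw [fmap_mk, LinearMap.comp_apply, LinearMap.comp_apply, hs', ← tau_nat S (s 1) (iM_bh Bi), ret_iM, tau_mul, hm, aE_one, br_one]

lemma Gd_sep (hA : IsSeparableAlg k A) (n : ℕ) : ∀ {N : Type} [AddCommGroup N] [Module k N] (Bi : Bimod k E N), Gd S n Bi := by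
  induction n with
  | zero => intros; trivial
  | succ n ih => intro N _ _ Bi; exact ⟨FInj_sep S Bi hA, ih _⟩
end sep

section qfree
lemma Qbar_flat [Module.Flat k H] : Module.Flat k (Qbar k H) := by
  refine Module.Flat.of_retract (qlift (LinearMap.id - (Algebra.linearMap k H) ∘ₗ counit (R := k) (A := H)) (by simp)) (qbar k H) ?_
  ext h
  simp only [LinearMap.comp_apply]
  show qbar k H (h - algebraMap k H (counit (R := k) h)) = qbar k H h
  rw [map_sub, sub_eq_self, Algebra.algebraMap_eq_smul_one, map_smul, qbar_one, smul_zero]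

lemma Tpow_flat (V : Type) [AddCommGroup V] [Module k V] [Module.Flat k V] (n : ℕ) : Module.Flat k (Tpow k V n) := by
  induction n with
  | zero => exact inferInstanceAs (Module.Flat k k)
  | succ n ih => exact inferInstanceAs (Module.Flat k (V ⊗[k] Tpow k V n))

lemma cmap_inj_flat (hH : Module.Flat k H) {X Y : Type} [AddCommGroup X] [Module k X] [AddCommGroup Y] [Module k Y] (φ : X →ₗ[k] Y)
    (h : Function.Injective φ) (n : ℕ) : Function.Injective (cmap (B := H) φ n) := by
  have := Qbar_flat (k := k) (H := H)
  have := Tpow_flat (k := k) (Qbar k H) n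
  exact Module.Flat.rTensor_preserves_injective_linearMap (M := Tpow k (Qbar k H) n) φ h

variable {N : Type} [AddCommGroup N] [Module k N] (Bi : Bimod k E N)

lemma FInj_van (hH : Module.Flat k H) (h : ∀ x : HH (res S Bi) 1, x = 0) : FInj S Bi := by
  intro s
  refine cmap_inj_flat hH _ ?_ s
  rw [← LinearMap.ker_eq_bot, Submodule.eq_bot_iff]
  intro x hx
  rw [LinearMap.mem_ker] at hx
  obtain ⟨z, rfl⟩ := (J0 S (Om Bi)).surjective x
  rw [← J0_nat, LinearEquiv.map_eq_zero_iff] at hx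
  obtain ⟨a, rfl⟩ := ((sesRes S Bi).range_conn 0 z).1 hx
  rw [h a, map_zero, map_zero]

lemma van_shift (m : ℕ) (h : ∀ x : HH (res S Bi) (m+2), x = 0) (z : HH (res S (Om Bi)) (m+1)) : z = 0 := by
  obtain ⟨a, rfl⟩ := ((sesRes S Bi).range_conn (m+1) z).1 (PA_van S Bi m _)
  rw [h a, map_zero]

lemma Gd_van (hH : Module.Flat k H) (n : ℕ) : ∀ {N : Type} [AddCommGroup N] [Module k N] (Bi : Bimod k E N),
    (∀ m (x : HH (res S Bi) (m+1)), x = 0) → Gd S n Bi := by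
  induction n with
  | zero => intros; trivial
  | succ n ih => 
    intro N _ _ Bi h
    exact ⟨FInj_van S Bi hH (h 0), ih _ fun m => van_shift S Bi m (h _)⟩
end qfree

end FF
end HopfCrossed

namespace HopfCrossed

lemma lift_inj {k : Type} [CommRing k] {W U V : Type} [AddCommGroup W] [Module k W] [AddCommGroup U] [Module k U]
    [AddCommGroup V] [Module k V] (ψ : U →ₗ[k] V) (f : W →ₗ[k] V) (hψ : Function.Injective ψ)
    (h : ∀ w, ∃ u, ψ u = f w) : ∃ g : W →ₗ[k] U, ∀ w, ψ (g w) = f w := by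
  refine ⟨(LinearEquiv.ofInjective ψ hψ).symm.toLinearMap ∘ₗ f.codRestrict (LinearMap.range ψ) h, fun w => ?_⟩
  have := (LinearEquiv.ofInjective ψ hψ).apply_symm_apply (f.codRestrict (LinearMap.range ψ) h w)
  exact congrArg Subtype.val this

section LES
variable {k B : Type} [CommRing k] [Ring B] [Algebra k B]
variable {X K I P M : Type} [AddCommGroup X] [Module k X] [AddCommGroup K] [Module k K] [AddCommGroup I] [Module k I]
  [AddCommGroup P] [Module k P] [AddCommGroup M] [Module k M]
variable {BX : Bimod k B X} {BK : Bimod k B K} {BI : Bimod k B I} {BP : Bimod k B P} {BM : Bimod k B M}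

lemma HHmap_comp {φ : K →ₗ[k] I} {χ : I →ₗ[k] P} {ω : K →ₗ[k] P} (h1 : IsBH BK BI φ) (h2 : IsBH BI BP χ) (h3 : IsBH BK BP ω)
    (e : ∀ x, χ (φ x) = ω x) (n : ℕ) (y : HH BK n) : HHmap h2 n (HHmap h1 n y) = HHmap h3 n y := by
  obtain ⟨x, hx, rfl⟩ := cl_surj _ _ y
  rw [HHmap_cl, HHmap_cl, HHmap_cl]
  have e' : ω = χ ∘ₗ φ := LinearMap.ext fun x => (e x).symm
  subst e'
  congr 1
  simp only [cmap]
  rw [LinearMap.rTensor_comp]; rfl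

theorem LES {κ : X →ₗ[k] K} {π : K →ₗ[k] I} {ι : I →ₗ[k] P} {p : P →ₗ[k] M} {ω : K →ₗ[k] P}
    (s1 : SES BX BK BI κ π) (s2 : SES BI BP BM ι p) (h3 : IsBH BK BP ω) (e : ∀ x, ι (π x) = ω x)
    (hv : ∀ n (x : HH BP (n+1)), x = 0)
    {U V0 V1 : ℕ → Type} [∀ n, AddCommGroup (U n)] [∀ n, Module k (U n)]
    [∀ n, AddCommGroup (V0 n)] [∀ n, Module k (V0 n)] [∀ n, AddCommGroup (V1 n)] [∀ n, Module k (V1 n)]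
    (e0 : ∀ n, V0 n ≃ₗ[k] HH BM n) (e1 : ∀ n, V1 n ≃ₗ[k] HH BX n)
    (Φ : U 0 ≃ₗ[k] HH BM 0)
    (hψ : ∀ n, ∃ ψ : U (n+1) →ₗ[k] HH BK n, Function.Injective ψ ∧ ∀ y, (∃ x, ψ x = y) ↔ HHmap h3 n y = 0) :
    ∃ (a : ∀ n : ℕ, V0 (n + 2) →ₗ[k] V1 n)
        (b : ∀ n : ℕ, V1 n →ₗ[k] U (n + 1))
        (c : ∀ n : ℕ, U n →ₗ[k] V0 n),
        (∀ n : ℕ, LinearMap.range (a n) = LinearMap.ker (b n)) ∧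
        (∀ n : ℕ, LinearMap.range (b n) = LinearMap.ker (c (n + 1))) ∧
        (∀ n : ℕ, LinearMap.range (c (n + 2)) = LinearMap.ker (a n)) ∧
        Function.Surjective (c 0) ∧ Function.Injective (c 0) ∧
        Function.Surjective (c 1) := by
  choose ψ hi hr using hψ
  have hcomp := fun n y => HHmap_comp s1.hp s2.hi h3 e n y
  have d2i := s2.conn_inj hv
  have hb : ∀ n, ∃ b : V1 n →ₗ[k] U (n+1), ∀ x, ψ n (b x) = HHmap s1.hi n (e1 n x) := fun n => by
    refine lift_inj (ψ n) (HHmap s1.hi n ∘ₗ (e1 n).toLinearMap) (hi n) fun w => ?_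
    rw [hr, ← hcomp, LinearMap.comp_apply, (s1.exact_mid n _).2 ⟨_, rfl⟩, map_zero]
  choose b hb using hb
  have hc : ∀ n, ∃ c : U (n+1) →ₗ[k] V0 (n+1), ∀ u, s2.conn n (e0 _ (c u)) = HHmap s1.hp n (ψ n u) := fun n => by
    refine lift_inj (s2.conn n ∘ₗ (e0 (n+1)).toLinearMap) (HHmap s1.hp n ∘ₗ ψ n) ?_ fun w => ?_
    · rw [LinearMap.coe_comp]
      exact (d2i n).comp (e0 (n+1)).injective
    · obtain ⟨y, hy⟩ := (s2.range_conn n (HHmap s1.hp n (ψ n w))).1 (by rw [hcomp]; exact (hr n _).1 ⟨w, rfl⟩)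
      exact ⟨(e0 (n+1)).symm y, by simpa using hy⟩
  choose c hc using hc
  have cE : ∀ n u y, c n u = y ↔ HHmap s1.hp n (ψ n u) = s2.conn n (e0 _ y) := fun n u y => by
    rw [← hc]
    exact ⟨fun h => by rw [h], fun h => (e0 _).injective (d2i n h)⟩
  have bE : ∀ n x u, b n x = u ↔ HHmap s1.hi n (e1 n x) = ψ n u := fun n x u => by
    rw [← hb]
    exact ⟨fun h => by rw [h], fun h => hi n h⟩
  have hz : ∀ n y z, HHmap s1.hp n z = s2.conn n (e0 _ y) → ∃ u, c n u = y := fun n y z h => by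
    obtain ⟨u, hu⟩ := (hr n z).2 (by rw [← hcomp, h]; exact (s2.range_conn n _).2 ⟨_, rfl⟩)
    exact ⟨u, (cE _ _ _).2 (by rw [hu, h])⟩
  refine ⟨fun n => (e1 n).symm.toLinearMap ∘ₗ s1.conn n ∘ₗ s2.conn (n+1) ∘ₗ (e0 (n+2)).toLinearMap, b,
    fun n => match n with
      | 0 => (e0 0).symm.toLinearMap ∘ₗ Φ.toLinearMap
      | n + 1 => c n, ?_, ?_, ?_, ?_, ?_, ?_⟩
  · intro n
    ext x
    rw [LinearMap.mem_ker, bE, map_zero, s1.range_conn]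
    constructor
    · rintro ⟨y, rfl⟩
      exact ⟨s2.conn (n+1) (e0 (n+2) y), by simp⟩
    · rintro ⟨i, hi⟩
      obtain ⟨y, rfl⟩ := (s2.range_conn (n+1) i).1 (hv n _)
      exact ⟨(e0 (n+2)).symm y, by simp [hi]⟩
  · intro n
    ext u
    rw [LinearMap.mem_ker]
    refine Iff.trans ?_ (cE n u 0).symm
    rw [map_zero, map_zero, s1.exact_mid]
    constructor
    · rintro ⟨x, rfl⟩
      exact ⟨_, (hb n x).symm⟩
    · rintro ⟨x, hx⟩
      exact ⟨(e1 n).symm x, (bE _ _ _).2 (by simpa using hx)⟩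
  · intro n
    ext y
    simp only [LinearMap.mem_ker, LinearMap.comp_apply, LinearEquiv.coe_coe, LinearEquiv.map_eq_zero_iff]
    rw [s1.ker_conn]
    constructor
    · rintro ⟨u, rfl⟩
      exact ⟨ψ (n+1) u, (hc _ _).symm⟩
    · rintro ⟨z, hzz⟩
      exact hz (n+1) y z hzz
  · rw [LinearMap.coe_comp]
    exact (e0 0).symm.surjective.comp Φ.surjective
  · rw [LinearMap.coe_comp]
    exact (e0 0).symm.injective.comp Φ.injective
  · intro y
    obtain ⟨z, hzz⟩ := s1.surj0 (s2.conn 0 (e0 _ y))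
    exact hz 0 y z hzz

end LES
end HopfCrossed

namespace HopfCrossed

section Z
variable {k : Type} [CommRing k] {B : Type} [Ring B] [Algebra k B]
  {N : Type} [AddCommGroup N] [Module k N] {N' : Type} [AddCommGroup N'] [Module k N']

def zeta0 : (Qbar k B ⊗[k] N) ≃ₗ[k] HCh k B (Qbar k B ⊗[k] N) 0 := (TensorProduct.rid k (Qbar k B ⊗[k] N)).symm
lemma zeta0_t (t : Qbar k B ⊗[k] N) : zeta0 t = t ⊗ₜ[k] (1 : k) := rfl
def zeta : (Qbar k B ⊗[k] N) ≃ₗ[k] HCh k B N 1 := zeta0.trans (peel 0).symm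

lemma zeta_t (v : Qbar k B) (m : N) : zeta (k := k) (v ⊗ₜ m) = m ⊗ₜ[k] tp k (fun _ : Fin 1 => v) := by
  rw [zeta, LinearEquiv.trans_apply, zeta0_t]
  exact peel_symm_tp m (fun _ : Fin 1 => v)

lemma hbd_zeta (Bi : Bimod k B N) (t) : hbd 0 Bi (zeta t) = (d0 Bi t) ⊗ₜ[k] (1 : k) := by
  have : ∀ y, hbd 0 Bi y = (d0 Bi).rTensor _ (peel 0 y) := fun _ => rfl
  rw [this, zeta, LinearEquiv.trans_apply, LinearEquiv.apply_symm_apply]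
  rfl

lemma hbd_zeta_zero (Bi : Bimod k B N) (t) : hbd 0 Bi (zeta t) = 0 ↔ d0 Bi t = 0 := by
  rw [hbd_zeta]
  constructor
  · intro h
    have h2 := congrArg (TensorProduct.rid k N) h
    have r1 : ∀ m : N, TensorProduct.rid k N (m ⊗ₜ[k] (1 : k)) = m := fun m => by simp
    exact (r1 _).symm.trans (h2.trans (map_zero _))
  · intro h
    rw [h]; exact zero_tmul ..

lemma cmap_zeta (φ : N →ₗ[k] N') (t) : cmap (B := B) φ 1 (zeta t) = zeta (φ.lTensor _ t) := by
  induction t with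
  | zero => simp
  | add x y hx hy => simp only [map_add, hx, hy]
  | tmul v m => rw [zeta_t, cmap_tmul, LinearMap.lTensor_tmul, zeta_t]
end Z

section FF
variable {k A H E : Type} [CommRing k] [Ring A] [Algebra k A] [Ring H] [HopfAlgebra k H]
  [Ring E] [Algebra k E]
variable {N N' : Type} [AddCommGroup N] [Module k N] [AddCommGroup N'] [Module k N']
open HopfAlgebra Coalgebra
variable (S : CrossedProduct k A H E)
variable (finv : H →ₗ[k] H →ₗ[k] A) (hf : IsConvInverse S.f finv)
variable (Bi : Bimod k E N)

lemma kp_aux : (qbar k E ∘ₗ S.aE) 1 = 0 := by rw [LinearMap.comp_apply, aE_one, qbar_one]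
def kp : Qbar k A ⊗[k] N →ₗ[k] Qbar k E ⊗[k] N := (qlift (qbar k E ∘ₗ S.aE) (kp_aux S)).rTensor N
lemma kp_t (a : A) (m : N) : kp S (qbar k A a ⊗ₜ m) = qbar k E (S.aE a) ⊗ₜ m := rfl

def kappa : HH (res S Bi) 1 →ₗ[k] FN S (Om Bi) := (J0 S (Om Bi)).toLinearMap ∘ₗ (sesRes S Bi).conn 0

lemma kappa_inj : Function.Injective (kappa S Bi) := by
  rw [kappa, LinearMap.coe_comp]
  exact (J0 S (Om Bi)).injective.comp ((sesRes S Bi).conn_inj (PA_van S Bi) 0)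

lemma kappa_range (y) : fmap S (iM_bh Bi) y = 0 ↔ ∃ x, kappa S Bi x = y := by
  obtain ⟨z, rfl⟩ := (J0 S (Om Bi)).surjective y
  rw [← J0_nat, LinearEquiv.map_eq_zero_iff]
  refine ((sesRes S Bi).range_conn 0 z).trans ?_
  constructor
  · rintro ⟨x, rfl⟩; exact ⟨x, rfl⟩
  · rintro ⟨x, hx⟩; exact ⟨x, (J0 S (Om Bi)).injective hx⟩

lemma kp_d0 (t : Qbar k A ⊗[k] N) : iM Bi (kp S t) = 1 ⊗ₜ d0 (res S Bi) t - d0 (res S (PB Bi)) ((TensorProduct.mk k E N 1).lTensor _ t) := by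
  suffices h : iM Bi ∘ₗ kp S = (TensorProduct.mk k E N 1) ∘ₗ d0 (res S Bi) - d0 (res S (PB Bi)) ∘ₗ ((TensorProduct.mk k E N 1).lTensor _) from
    LinearMap.congr_fun h t
  refine qten_ext _ _ fun a n => ?_
  simp only [LinearMap.comp_apply, LinearMap.sub_apply]
  rw [kp_t, iM_q, d0_q, LinearMap.lTensor_tmul, mk_apply, mk_apply, d0_q, res_l, res_r, res_l, res_r, PB_l, PB_r, tmul_sub, mul_one]
  abel

lemma kappa_cl (t : Qbar k A ⊗[k] N) (ht : d0 (res S Bi) t = 0) (hz) :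
    kappa S Bi (cl (res S Bi) 1 (zeta t) hz) = fmk S (Om Bi) (- kp S t) := by
  have e1 : cmap (iM Bi) 0 ((- kp S t) ⊗ₜ[k] (1 : k)) = hbd 0 (res S (PB Bi)) (zeta ((TensorProduct.mk k E N 1).lTensor _ t)) := by
    rw [hbd_zeta]
    have e := kp_d0 S Bi t
    rw [ht, tmul_zero, zero_sub] at e
    refine (cmap_tmul ..).trans ?_
    rw [map_neg, e, neg_neg]
    rfl
  have e2 : cmap (pM Bi) 1 (zeta ((TensorProduct.mk k E N 1).lTensor (Qbar k A) t)) = zeta t := by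
    rw [cmap_zeta, ← LinearMap.comp_apply, ← LinearMap.lTensor_comp]
    have : pM Bi ∘ₗ TensorProduct.mk k E N 1 = LinearMap.id := LinearMap.ext fun n => by
      rw [LinearMap.comp_apply, mk_apply, pM_t, bl_one]; rfl
    rw [this, LinearMap.lTensor_id]; rfl
  have e3 := (sesRes S Bi).conn_cl 0 _ _ e1 (by rw [e2]; exact hz)
  have e4 : cl (res S Bi) (0+1) _ (by rw [e2]; exact hz : cmap (pM Bi) 1 (zeta ((TensorProduct.mk k E N 1).lTensor (Qbar k A) t)) ∈ _) =
      cl (res S Bi) 1 (zeta t) hz := by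
    congr 1
  rw [kappa, LinearMap.comp_apply, ← e4, e3]
  exact J0_h0 S (Om Bi) (- kp S t)

/-! the theta identities -/
variable (h : H) (θ' : Qbar k A ⊗[k] N →ₗ[k] Qbar k A ⊗[k] N)
  (hθ : ∀ (a : A) (m : N), θ' (qbar k A a ⊗ₜ m) = SW k (fun x y => SW k (fun p q => 
    qbar k A (S.act p a) ⊗ₜ[k] Bi.l (S.hE q) (Bi.r (gp S finv x) m)) y) h)

include hf in
lemma gp_aE_lin {X : Type} [AddCommGroup X] [Module k X] (L : H →ₗ[k] E →ₗ[k] X) (a : A) (g : H) :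
    SW k (fun x y => SW k (fun p q => L q (gp S finv x * S.aE (S.act p a))) y) g =
    SW k (fun x y => L y (S.aE a * gp S finv x)) g := by
  have t : Tri k (fun x p q => L q (gp S finv x * S.aE (S.act p a))) := by
    constructor <;> intro z <;> constructor <;> intros <;> simp [mul_add, add_mul]
  rw [← SW_coassoc t]
  congr 1; funext x y
  rw [← map_SW, gp_aE S finv hf]

include hf hθ in
lemma th_d0 (t) : d0 (res S Bi) (θ' t) = ga S finv Bi h (d0 (res S Bi) t) := by
  suffices e : d0 (res S Bi) ∘ₗ θ' = ga S finv Bi h ∘ₗ d0 (res S Bi) from LinearMap.congr_fun e t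
  refine qten_ext _ _ fun a n => ?_
  simp only [LinearMap.comp_apply]
  rw [hθ, d0_q, map_sub, ga_apply, ga_apply]
  simp only [map_SW, d0_q, SW_sub, res_l, res_r]
  congr 1
  · have := gp_aE_lin S finv hf (LinearMap.mk₂ k (fun q e => Bi.l (S.hE q) (Bi.r e n))
      (by intros; simp) (by intros; simp) (by intros; simp) (by intros; simp)) a h
    simp only [LinearMap.mk₂_apply, br_mul] at this
    simpa only [b_comm] using this
  · congr 1; funext x y
    rw [← b_comm, ← bl_mul, hE_aE, map_SW Bi.l, SW_app]
    simp only [bl_mul]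

include hf hθ in
lemma th_kp (t) : fmk S (Om Bi) (ga S finv (Om Bi) h (kp S t)) = fmk S (Om Bi) (kp S (θ' t)) +
    fmk S (Om Bi) (SW k (fun x y => qbar k E (S.hE y) ⊗ₜ[k] Bi.r (gp S finv x) (d0 (res S Bi) t)) h) := by
  have b : ∀ n : N, Bil k (fun x y => qbar k E (S.hE y) ⊗ₜ[k] Bi.r (gp S finv x) n) := fun n => by
    constructor <;> intros <;> simp only [map_add, map_smul, LinearMap.add_apply, LinearMap.smul_apply, tmul_add, add_tmul, tmul_smul, ← smul_tmul']
  let Q : N →ₗ[k] Qbar k E ⊗[k] N :=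
    { toFun := fun n => SW k (fun x y => qbar k E (S.hE y) ⊗ₜ[k] Bi.r (gp S finv x) n) h
      map_add' := fun m n => by simp only [map_add, tmul_add, SW_add]
      map_smul' := fun c n => by simp only [map_smul, tmul_smul, SW_smul, RingHom.id_apply] }
  have hQ : ∀ n, SW k (fun x y => qbar k E (S.hE y) ⊗ₜ[k] Bi.r (gp S finv x) n) h = Q n := fun _ => rfl
  rw [hQ]
  suffices e : fmk S (Om Bi) ∘ₗ ga S finv (Om Bi) h ∘ₗ kp S = fmk S (Om Bi) ∘ₗ kp S ∘ₗ θ' + fmk S (Om Bi) ∘ₗ Q ∘ₗ d0 (res S Bi) from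
    LinearMap.congr_fun e t
  refine qten_ext _ _ fun a n => ?_
  simp only [LinearMap.comp_apply, LinearMap.add_apply]
  rw [kp_t, ga_apply, hθ, d0_q, map_sub, ← hQ, ← hQ, res_l, res_r]
  simp only [map_SW, kp_t, Om_r, Om_l, map_sub, SW_sub]
  rw [← add_sub_assoc]
  have c : ∀ x y : H, fmk S (Om Bi) (qbar k E (S.hE y) ⊗ₜ[k] Bi.l (S.aE a) (Bi.r (gp S finv x) n)) =
    fmk S (Om Bi) (qbar k E (S.hE y) ⊗ₜ[k] Bi.r (gp S finv x) (Bi.l (S.aE a) n)) := fun x y => by rw [b_comm]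
  simp only [c]
  congr 1
  have := gp_aE_lin S finv hf (LinearMap.mk₂ k (fun q e => fmk S (Om Bi) (qbar k E (S.hE q) ⊗ₜ[k] Bi.r e n))
      (by intros; simp only [map_add, add_tmul]) (by intros; simp only [map_smul, ← smul_tmul']) 
      (by intros; simp only [map_add, LinearMap.add_apply, tmul_add]) (by intros; simp only [map_smul, LinearMap.smul_apply, tmul_smul])) a h
  simp only [LinearMap.mk₂_apply, br_mul] at this
  rw [← this, ← SW_add]
  congr 1; funext x y
  rw [hE_aE, ← SW_add]
  have e1 := map_SW (k := k) ((fmk S (Om Bi)) ∘ₗ ((TensorProduct.mk k (Qbar k E) N).flip (Bi.r (gp S finv x) n)) ∘ₗ qbar k E)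
    (fun p q => S.aE (S.act p a) * S.hE q) y
  simp only [LinearMap.comp_apply, LinearMap.flip_apply, mk_apply] at e1
  rw [e1]
  congr 1; funext p q
  have e2 := fmk_comm S (Om Bi) (S.act p a) (qbar k E (S.hE q) ⊗ₜ[k] Bi.r (gp S finv x) n)
  rw [Om_l, Om_r, map_sub, sub_eq_iff_eq_add] at e2
  rw [e2, add_comm]

end FF
end HopfCrossed

namespace HopfCrossed

section FF
variable {k A H E : Type} [CommRing k] [Ring A] [Algebra k A] [Ring H] [HopfAlgebra k H]
  [Ring E] [Algebra k E]
variable {N N' : Type} [AddCommGroup N] [Module k N] [AddCommGroup N'] [Module k N']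
open HopfAlgebra Coalgebra
variable (S : CrossedProduct k A H E)
variable (finv : H →ₗ[k] H →ₗ[k] A) (hf : IsConvInverse S.f finv)
variable (Bi : Bimod k E N)

lemma gp4 {X : Type} [AddCommGroup X] [Module k X] (L : H →ₗ[k] E →ₗ[k] X) (h : H) :
    SW k (fun x0 y0 => SW k (fun x1 y1 => SW k (fun x2 y2 => L y2 (ginv S finv x0 x1 x2)) y1) y0) h =
    SW k (fun x y => L y (gp S finv x)) h := by
  have t1 : ∀ x0, Tri k (fun x1 x2 y => L y (ginv S finv x0 x1 x2)) := fun x0 => by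
    constructor <;> intro z <;> constructor <;> intros <;>
        simp [ginv, add_mul, mul_add, tmul_add, add_tmul, tmul_smul, ← smul_tmul']
  have c1 : ∀ x0 y0, SW k (fun x1 y1 => SW k (fun x2 y2 => L y2 (ginv S finv x0 x1 x2)) y1) y0 =
     SW k (fun w y => SW k (fun x1 x2 => L y (ginv S finv x0 x1 x2)) w) y0 := fun x0 y0 => (SW_coassoc (t1 x0) y0).symm
  simp only [c1]
  have b : ∀ x0 y, Bil k (fun x1 x2 => L y (ginv S finv x0 x1 x2)) := fun x0 y => (t1 x0).l y
  have t2 : Tri k (fun x0 w y => SW k (fun x1 x2 => L y (ginv S finv x0 x1 x2)) w) := by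
    constructor
    · intro y
      constructor
      · intros; simp [ginv, add_tmul, tmul_add, SW_add]
      · intros; simp [ginv, ← smul_tmul', tmul_smul, SW_smul]
      · intro x0; exact (b x0 y).sw_add
      · intro c x0 w; exact (b x0 y).sw_smul c w
    · intro x0
      constructor
      · intro w w' y; exact (b x0 y).sw_add w w'
      · intro c w y; exact (b x0 y).sw_smul c w
      · intros; simp [SW_add]
      · intros; simp [SW_smul]
  rw [← SW_coassoc t2]
  congr 1; funext x y
  rw [gp_eq]
  simp only [map_SW]

lemma rho0_eq (ρ₀ : H →ₗ[k] (N ⧸ commSub S Bi) →ₗ[k] (N ⧸ commSub S Bi))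
    (hρ₀ : ∀ (h : H) (n : ℕ) (u : Fin n → Fin 4 → H), SRep k 3 h n u → ∀ m : N,
      ρ₀ h (Submodule.Quotient.mk m) =
        ∑ i, Submodule.Quotient.mk
          (Bi.l (S.hE (u i 3)) (Bi.r (ginv S finv (u i 0) (u i 1) (u i 2)) m))) :
    ρ₀ = fa S finv hf Bi := by
  refine LinearMap.ext fun h => LinearMap.ext fun x => ?_
  obtain ⟨m, rfl⟩ := fmk_surj S Bi x
  obtain ⟨n, u, hu, hT⟩ := ex_repn (k := k) 3 h
  refine (hρ₀ h n u hu m).trans ?_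
  rw [fa_mk, ga_apply, map_SW]
  refine (hT (FN S Bi) (fun v => fmk S Bi (Bi.l (S.hE (v 3)) (Bi.r (ginv S finv (v 0) (v 1) (v 2)) m)))).trans ?_
  exact gp4 S finv (LinearMap.mk₂ k (fun q e => fmk S Bi (Bi.l (S.hE q) (Bi.r e m)))
      (by intros; simp) (by intros; simp) (by intros; simp) (by intros; simp)) h

lemma theta_eq (θ : H → ∀ r : ℕ, HCh k A N r →ₗ[k] HCh k A N r) (hθ : IsTheta S Bi finv θ) (h : H) (a : A) (m : N) :
    (zeta.symm.toLinearMap ∘ₗ θ h 1 ∘ₗ zeta.toLinearMap) (qbar k A a ⊗ₜ m) = SW k (fun x y => SW k (fun p q => 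
    qbar k A (S.act p a) ⊗ₜ[k] Bi.l (S.hE q) (Bi.r (gp S finv x) m)) y) h := by
  simp only [LinearMap.comp_apply, LinearEquiv.coe_coe]
  rw [LinearEquiv.symm_apply_eq, zeta_t]
  obtain ⟨n, u, hu, hT⟩ := ex_repn (k := k) 4 h
  refine (hθ h 1 m (fun _ => a) n u hu).trans ?_
  have e : ∀ v : Fin 5 → H, (Bi.l (S.hE (v 4))
          (Bi.r (ginv S finv (v 0) (v 1) (v 2)) m)) ⊗ₜ[k]
        tp k (fun j : Fin 1 => qbar k A (S.act (v ⟨(j : ℕ) + 3, by omega⟩) a)) = zeta (qbar k A (S.act (v 3) a) ⊗ₜ[k] Bi.l (S.hE (v 4)) (Bi.r (ginv S finv (v 0) (v 1) (v 2)) m)) := by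
    intro v
    rw [zeta_t]
    congr 2
    funext j
    fin_cases j
    rfl
  refine (Finset.sum_congr rfl fun i _ => e (u i)).trans ?_
  rw [← map_sum]
  congr 1
  refine (hT _ (fun v => qbar k A (S.act (v 3) a) ⊗ₜ[k] Bi.l (S.hE (v 4)) (Bi.r (ginv S finv (v 0) (v 1) (v 2)) m))).trans ?_
  have b : ∀ e : E, Bil k (fun p q => qbar k A (S.act p a) ⊗ₜ[k] Bi.l (S.hE q) (Bi.r e m)) := fun e => by
    constructor <;> intros <;> simp only [map_add, map_smul, LinearMap.add_apply, LinearMap.smul_apply, tmul_add, add_tmul, tmul_smul, ← smul_tmul']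
  exact gp4 S finv (LinearMap.mk₂ k (fun y e => SW k (fun p q => qbar k A (S.act p a) ⊗ₜ[k] Bi.l (S.hE q) (Bi.r e m)) y)
      (by intro y y' e; exact (b e).sw_add y y') (by intro c y e; exact (b e).sw_smul c y) 
      (by intros; simp only [map_add, LinearMap.add_apply, tmul_add, SW_add]) 
      (by intros; simp only [map_smul, LinearMap.smul_apply, tmul_smul, SW_smul])) h

lemma rho1_eq (θ : H → ∀ r : ℕ, HCh k A N r →ₗ[k] HCh k A N r) (hθ : IsTheta S Bi finv θ)
    (ρ₁ : H →ₗ[k] HH (res S Bi) 1 →ₗ[k] HH (res S Bi) 1)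
    (hρ : ∀ (h : H) (x : HCh k A N 1) (hx : x ∈ Zc (res S Bi) 1) (hθx : θ h 1 x ∈ Zc (res S Bi) 1),
          ρ₁ h (cl _ 1 x hx) = cl _ 1 (θ h 1 x) hθx) (h : H) (x) :
    kappa S Bi (ρ₁ h x) = fa S finv hf (Om Bi) h (kappa S Bi x) := by
  obtain ⟨x, hx, rfl⟩ := cl_surj _ _ x
  obtain ⟨t, rfl⟩ := zeta.surjective x
  have ht : d0 (res S Bi) t = 0 := (hbd_zeta_zero _ _).1 ((Zc_succ _ _).1 hx)
  obtain ⟨θ', h1, h2⟩ : ∃ θ' : Qbar k A ⊗[k] N →ₗ[k] Qbar k A ⊗[k] N, (∀ t, θ h 1 (zeta t) = zeta (θ' t)) ∧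
      (∀ (a : A) (m : N), θ' (qbar k A a ⊗ₜ m) = SW k (fun x y => SW k (fun p q => 
    qbar k A (S.act p a) ⊗ₜ[k] Bi.l (S.hE q) (Bi.r (gp S finv x) m)) y) h) :=
    ⟨_, fun t => by simp, theta_eq S finv Bi θ hθ h⟩
  have h3 : d0 (res S Bi) (θ' t) = 0 := by rw [th_d0 S finv hf Bi h θ' h2, ht, map_zero]
  have h4 : zeta (θ' t) ∈ Zc (res S Bi) 1 := (Zc_succ _ _).2 ((hbd_zeta_zero _ _).2 h3)
  rw [hρ h _ hx (by rw [h1]; exact h4)]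
  have h5 : cl (res S Bi) 1 (θ h 1 (zeta t)) (by rw [h1]; exact h4) = cl (res S Bi) 1 (zeta (θ' t)) h4 := by
    congr 1; exact h1 t
  rw [h5, kappa_cl S Bi _ h3, kappa_cl S Bi _ ht, fa_mk, map_neg, map_neg, map_neg, th_kp S finv hf Bi h θ' h2, ht]
  simp only [map_zero, tmul_zero, SW_zero, add_zero]

section sub
variable {P : Type} [AddCommGroup P] [Module k P]
def subAct (act : H →ₗ[k] P →ₗ[k] P) (I : Submodule k P) (hI : ∀ h x, x ∈ I → act h x ∈ I) : H →ₗ[k] I →ₗ[k] I :=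
  LinearMap.mk₂ k (fun h x => ⟨act h x, hI h x x.2⟩)
    (by intros; ext; simp) (by intros; ext; simp) (by intros; ext; simp) (by intros; ext; simp)
lemma subAct_v (act : H →ₗ[k] P →ₗ[k] P) (I : Submodule k P) (hI : ∀ h x, x ∈ I → act h x ∈ I) (h x) :
  (subAct act I hI h x : P) = act h x := rfl
lemma subAct_act (act : H →ₗ[k] P →ₗ[k] P) (I : Submodule k P) (hI : ∀ h x, x ∈ I → act h x ∈ I) (ha : IsAct act) :
    IsAct (subAct act I hI) := by
  constructor
  · intro x; ext; rw [subAct_v, ha.one]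
  · intro g h x; ext; rw [subAct_v, ha.mul]; rfl
end sub

theorem partb (hH : Module.Flat k H) 
    (hv : ∀ m (x : HH (res S Bi) (m+2)), x = 0)
    {ρ₁ : H →ₗ[k] HH (res S Bi) 1 →ₗ[k] HH (res S Bi) 1} (ha : IsAct ρ₁)
    (hκ : ∀ h x, kappa S Bi (ρ₁ h x) = fa S finv hf (Om Bi) h (kappa S Bi x))
    {V0 V1 : ℕ → Type}
    [∀ n, AddCommGroup (V0 n)] [∀ n, Module k (V0 n)] [∀ n, AddCommGroup (V1 n)] [∀ n, Module k (V1 n)]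
    (e0 : ∀ n, V0 n ≃ₗ[k] HH (FB S finv hf Bi) n) (e1 : ∀ n, V1 n ≃ₗ[k] HH (epsB ha) n) :
    ∃ (a : ∀ n : ℕ, V0 (n + 2) →ₗ[k] V1 n)
        (b : ∀ n : ℕ, V1 n →ₗ[k] HH Bi (n + 1))
        (c : ∀ n : ℕ, HH Bi n →ₗ[k] V0 n),
        (∀ n : ℕ, LinearMap.range (a n) = LinearMap.ker (b n)) ∧
        (∀ n : ℕ, LinearMap.range (b n) = LinearMap.ker (c (n + 1))) ∧
        (∀ n : ℕ, LinearMap.range (c (n + 2)) = LinearMap.ker (a n)) ∧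
        Function.Surjective (c 0) ∧ Function.Injective (c 0) ∧
        Function.Surjective (c 1) := by
  have h3 := fmap_bh S finv hf (iM_bh Bi)
  have hI : ∀ h x, x ∈ LinearMap.range (fmap S (iM_bh Bi)) → fa S finv hf (PB Bi) h x ∈ LinearMap.range (fmap S (iM_bh Bi)) := by
    rintro h _ ⟨y, rfl⟩
    exact ⟨fa S finv hf (Om Bi) h y, h3.l h y⟩
  have s1 : SES (epsB ha) (FB S finv hf (Om Bi)) (epsB (subAct_act _ _ hI (fa_act S finv hf (PB Bi))))
      (kappa S Bi) (fmap S (iM_bh Bi)).rangeRestrict :=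
    { hi := ⟨fun h x => hκ h x, fun h x => by rw [epsB_r, FB_r, map_smul]⟩
      hp := ⟨fun h x => Subtype.ext (h3.l h x), fun h x => by rw [epsB_r, FB_r, map_smul]⟩
      inj := cmap_inj_flat hH _ (kappa_inj S Bi)
      exact := fun x hx => (kappa_range S Bi x).1 (congrArg Subtype.val hx)
      comp := fun y => Subtype.ext ((kappa_range S Bi _).2 ⟨y, rfl⟩)
      surj := LinearMap.surjective_rangeRestrict _ }
  have s2 : SES (epsB (subAct_act _ _ hI (fa_act S finv hf (PB Bi)))) (FB S finv hf (PB Bi)) (FB S finv hf Bi)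
      (LinearMap.range (fmap S (iM_bh Bi))).subtype (fmap S (pM_bh Bi)) :=
    { hi := ⟨fun h x => rfl, fun h x => by rw [epsB_r, FB_r, map_smul]⟩
      hp := fmap_bh S finv hf _
      inj := cmap_inj_flat hH _ (Submodule.injective_subtype _)
      exact := fun x hx => by
        obtain ⟨y, hy⟩ := fmap_ex S (iM_bh Bi) (pM_bh Bi) (pM_surj Bi) (pM_ex Bi) x hx
        exact ⟨⟨x, y, hy⟩, rfl⟩
      comp := by
        rintro ⟨_, y, rfl⟩
        obtain ⟨n, rfl⟩ := fmk_surj S _ y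
        show fmap S (pM_bh Bi) (fmap S (iM_bh Bi) (fmk S (Om Bi) n)) = 0
        rw [fmap_mk, fmap_mk, pM_iM, map_zero]
      surj := fmap_surj S _ (pM_surj Bi) }
  exact LES s1 s2 h3 (fun x => rfl) (FP_van S finv hf Bi) e0 e1 (Phi0 S finv hf Bi) fun n =>
    psi_ex S finv hf Bi n (iso_n S finv hf n (Om Bi) (Gd_van S hH n (Om Bi) fun m => van_shift S Bi m (hv m)))

end FF

section Statement11

variable {k A H E M : Type} [CommRing k] [Ring A] [Algebra k A] [Ring H] [HopfAlgebra k H]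
  [Ring E] [Algebra k E] [AddCommGroup M] [Module k M]

/-- **Hochschild homology of a crossed product: separable or quasi-free base.**
Let `E = A #_f H` be a crossed product with convolution invertible cocycle `f` and `M` an
`E`-bimodule.

(a) If `A` is separable over `k`, then `H_n(E, M) ≅ H_n(H, M/[A,M])` for all `n`, where
`M/[A,M]` is a left `H`-module via `h · m̄ = (1 # h⁽²⁾) m (1 # h⁽¹⁾)⁻¹`.

(b) If `H` is flat over `k` and `A` is quasi-free (`H_n(A, N) = 0` for all `n ≥ 2` and
every `A`-bimodule `N`), then there is a long exact sequence
`⋯ → H_{n+1}(H, H_0(A,M)) → H_{n-1}(H, H_1(A,M)) → H_n(E, M) → H_n(H, H_0(A,M)) →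
H_{n-2}(H, H_1(A,M)) → H_{n-1}(E, M) → ⋯`,
where `H_r(A, M)` carries the left `H`-module structure induced by
`θ^h(m ⊗ 𝐚) = (1 # h⁽³⁾) m (1 # h⁽¹⁾)⁻¹ ⊗ 𝐚^{h⁽²⁾}`. -/
theorem separable_and_quasifree_homology
    (S : CrossedProduct k A H E) (Bi : Bimod k E M)
    (finv : H →ₗ[k] H →ₗ[k] A) (hfinv : IsConvInverse S.f finv)
    -- the normalized Hochschild complex of `E` with coefficients in `M`
    (bdE : ∀ n : ℕ, HCh k E M (n + 1) →ₗ[k] HCh k E M n)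
    (hbdE : IsHochschildD k Bi.l Bi.r bdE)
    -- the left `H`-module `H_0(A,M) = M/[A,M]`, `h · m̄ = (1 # h⁽²⁾) m (1 # h⁽¹⁾)⁻¹`
    (ρ₀ : H →ₗ[k] (M ⧸ commSub S Bi) →ₗ[k] (M ⧸ commSub S Bi))
    (hρ₀ : ∀ (h : H) (N : ℕ) (u : Fin N → Fin 4 → H), SRep k 3 h N u → ∀ m : M,
      ρ₀ h (Submodule.Quotient.mk m) =
        ∑ i, Submodule.Quotient.mk
          (Bi.l (S.hE (u i 3)) (Bi.r (ginv S finv (u i 0) (u i 1) (u i 2)) m)))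
    -- the bar complex computing `H_*(H, M/[A,M])`
    (dbar₀ : ∀ s : ℕ, BarCh k (H := H) (M ⧸ commSub S Bi) (s + 1) →ₗ[k]
      BarCh k (H := H) (M ⧸ commSub S Bi) s)
    (hdbar₀ : IsBarD k ρ₀ dbar₀) :
    -- (a) if `A` is separable then `H_n(E,M) ≅ H_n(H, M/[A,M])`
    (IsSeparableAlg k A →
      ∀ n : ℕ, Nonempty (Hml k bdE n ≃ₗ[k] Hml k dbar₀ n)) ∧
    -- (b) if `H` is flat and `A` is quasi-free, there is a long exact sequence
    (Module.Flat k H →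
      (∀ (N : Type) (_ : AddCommGroup N) (_ : Module k N) (BiN : Bimod k A N)
        (bdN : ∀ n : ℕ, HCh k A N (n + 1) →ₗ[k] HCh k A N n),
        IsHochschildD k BiN.l BiN.r bdN →
        ∀ (n : ℕ) (x : HCh k A N (n + 2)), bdN (n + 1) x = 0 →
          x ∈ LinearMap.range (bdN (n + 2))) →
      ∀ (bdA : ∀ n : ℕ, HCh k A M (n + 1) →ₗ[k] HCh k A M n),
        IsHochschildD k (Bi.l ∘ₗ S.aE) (Bi.r ∘ₗ S.aE) bdA →
      ∀ (θ : H → ∀ r : ℕ, HCh k A M r →ₗ[k] HCh k A M r), IsTheta S Bi finv θ →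
      ∀ (ρ₁ : H →ₗ[k] Hml k bdA 1 →ₗ[k] Hml k bdA 1),
        (∀ (h : H) (x : HCh k A M 1) (hx : x ∈ LinearMap.ker (bdA 0))
          (hθx : θ h 1 x ∈ LinearMap.ker (bdA 0)),
          ρ₁ h (Submodule.Quotient.mk ⟨x, hx⟩) =
            Submodule.Quotient.mk ⟨θ h 1 x, hθx⟩) →
      ∀ (dbar₁ : ∀ s : ℕ, BarCh k (H := H) (Hml k bdA 1) (s + 1) →ₗ[k]
          BarCh k (H := H) (Hml k bdA 1) s), IsBarD k ρ₁ dbar₁ →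
      ∃ (a : ∀ n : ℕ, Hml k dbar₀ (n + 2) →ₗ[k] Hml k dbar₁ n)
        (b : ∀ n : ℕ, Hml k dbar₁ n →ₗ[k] Hml k bdE (n + 1))
        (c : ∀ n : ℕ, Hml k bdE n →ₗ[k] Hml k dbar₀ n),
        (∀ n : ℕ, LinearMap.range (a n) = LinearMap.ker (b n)) ∧
        (∀ n : ℕ, LinearMap.range (b n) = LinearMap.ker (c (n + 1))) ∧
        (∀ n : ℕ, LinearMap.range (c (n + 2)) = LinearMap.ker (a n)) ∧
        Function.Surjective (c 0) ∧ Function.Injective (c 0) ∧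
        Function.Surjective (c 1)) := by
  obtain rfl := hbd_unique Bi hbdE
  obtain rfl := rho0_eq S finv hfinv Bi ρ₀ hρ₀
  have e0 : ∀ n, Hml k dbar₀ n ≃ₗ[k] HH (FB S finv hfinv Bi) n := barIso (fa_act S finv hfinv Bi) hdbar₀
  refine ⟨fun hA n => ?_, fun hH hq bdA hA θ hθ ρ₁ hρ₁ dbar₁ hd₁ => ?_⟩
  · obtain ⟨e⟩ := iso_n S finv hfinv n Bi (Gd_sep S hA n Bi)
    exact ⟨e.trans (e0 n).symm⟩
  · obtain rfl := hbd_unique (res S Bi) hA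
    have hv : ∀ m (x : HH (res S Bi) (m+2)), x = 0 := by
      intro m x
      obtain ⟨x, hx, rfl⟩ := cl_surj _ _ x
      rw [cl_eq_zero]
      exact hq M _ _ (res S Bi) (fun n => hbd n (res S Bi)) (hbd_isHD _) m x hx
    have hκ : ∀ h x, kappa S Bi (ρ₁ h x) = fa S finv hfinv (Om Bi) h (kappa S Bi x) :=
      rho1_eq S finv hfinv Bi θ hθ ρ₁ hρ₁
    have ha : IsAct (X := HH (res S Bi) 1) ρ₁ := by
      constructor
      · intro x
        exact kappa_inj S Bi (by rw [hκ, (fa_act S finv hfinv (Om Bi)).one])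
      · intro g h x
        exact kappa_inj S Bi (by rw [hκ, hκ, hκ, (fa_act S finv hfinv (Om Bi)).mul])
    exact partb S finv hfinv Bi hH hv ha hκ e0 (barIso ha hd₁)

end Statement11
end HopfCrossed
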